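/- In dimension 19, every finite set S of points on the unit sphere of EuclideanSpace ℝ (Fin 19) (i.e., ‖x‖ = 1 for all x ∈ S) such that any two distinct points of S are at Euclidean distance at least 1 has cardinality at most 24812; that is, the kissing number in dimension 19 is at most 24812. -/

import Mathlib

namespace Kiss
open MvPolynomial

section Fischer
variable {n : ℕ}
abbrev MP (n : ℕ) := MvPolynomial (Fin n) ℝ

def mfac (α : Fin n →₀ ℕ) : ℝ := ∏ i, ((α i).factorial : ℝ)

noncomputable def fis (q : MP n) : MP n →ₗ[ℝ] ℝ :=
  (basisMonomials (Fin n) ℝ).constr ℝ (fun α => mfac α * coeff α q)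

lemma fis_monomial (q : MP n) (α : Fin n →₀ ℕ) (c : ℝ) :
    fis q (monomial α c) = c * (mfac α * coeff α q) := by
  have h : (monomial α c : MP n) = c • (basisMonomials (Fin n) ℝ) α := by
    simp [smul_monomial]
  rw [h, map_smul, fis, Module.Basis.constr_basis]; simp

lemma fis_self_nonneg (p : MP n) : 0 ≤ fis p p := by
  conv_rhs => arg 2; rw [p.as_sum]
  rw [map_sum]
  refine Finset.sum_nonneg fun α _ => ?_
  rw [fis_monomial]
  have : 0 ≤ mfac α := Finset.prod_nonneg fun i _ => by positivity
  nlinarith [mul_nonneg this (mul_self_nonneg (coeff α p))]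

lemma my_coeff_pderiv (i : Fin n) (q : MP n) (β : Fin n →₀ ℕ) :
    coeff β (pderiv i q) = (β i + 1) * coeff (β + Finsupp.single i 1) q := by
  induction q using MvPolynomial.induction_on' with
  | monomial α a =>
    rw [pderiv_monomial, coeff_monomial, coeff_monomial]
    by_cases h : α = β + Finsupp.single i 1
    · subst h
      simp; ring
    · rw [if_neg h]
      split_ifs with h2
      · have : α i = 0 := by
          by_contra h0
          apply h
          rw [← h2]
          ext j
          by_cases hj : j = i
          · subst hj; simp; omega
          · simp [Finsupp.single_apply, Ne.symm hj]
        simp [this]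
      · simp
  | add p q hp hq => simp [hp, hq]; ring

lemma mfac_succ (i : Fin n) (β : Fin n →₀ ℕ) :
    mfac (β + Finsupp.single i 1) = (β i + 1) * mfac β := by
  unfold mfac
  rw [← Finset.mul_prod_erase Finset.univ _ (Finset.mem_univ i),
    ← Finset.mul_prod_erase Finset.univ (fun j => ((β j).factorial : ℝ)) (Finset.mem_univ i), ← mul_assoc]
  congr 1
  · simp [Nat.factorial_succ]
  · refine Finset.prod_congr rfl fun j hj => ?_
    have : j ≠ i := (Finset.mem_erase.mp hj).1
    simp [Finsupp.single_apply, Ne.symm this]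

lemma fis_X_mul (i : Fin n) (p q : MP n) : fis q (X i * p) = fis (pderiv i q) p := by
  induction p using MvPolynomial.induction_on' with
  | monomial α a =>
    have : (X i * monomial α a : MP n) = monomial (α + Finsupp.single i 1) a := by
      rw [X, monomial_mul, one_mul, add_comm]
    rw [this, fis_monomial, fis_monomial, my_coeff_pderiv, mfac_succ]; ring
  | add p q hp hq => rw [mul_add, map_add, map_add, hp, hq]

noncomputable def lin (x : Fin n → ℝ) : MP n := ∑ i, C (x i) * X i
noncomputable def qd (n : ℕ) : MP n := ∑ i, X i * X i
noncomputable def D (x : Fin n → ℝ) (q : MP n) : MP n := ∑ i, C (x i) * pderiv i q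
noncomputable def lap (q : MP n) : MP n := ∑ i, pderiv i (pderiv i q)

lemma fis_add (p q r : MP n) : fis (p + q) r = fis p r + fis q r := by
  induction r using MvPolynomial.induction_on' with
  | monomial α a => simp only [fis_monomial, coeff_add]; ring
  | add p q hp hq => rw [map_add, map_add, map_add, hp, hq]; ring

lemma fis_C_mul (c : ℝ) (p r : MP n) : fis (C c * p) r = c * fis p r := by
  induction r using MvPolynomial.induction_on' with
  | monomial α a => simp only [fis_monomial, coeff_C_mul]; ring
  | add p q hp hq => rw [map_add, map_add, hp, hq]; ring

lemma fis_zero (r : MP n) : fis (0 : MP n) r = 0 := by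
  have := fis_C_mul 0 0 r
  simpa using this

lemma fis_sum {ι : Type*} (s : Finset ι) (f : ι → MP n) (r : MP n) :
    fis (∑ i ∈ s, f i) r = ∑ i ∈ s, fis (f i) r := by
  classical
  induction s using Finset.induction_on with
  | empty => simp [fis_zero]
  | insert a s ha ih => rw [Finset.sum_insert ha, Finset.sum_insert ha, fis_add, ih]

lemma fis_lin_mul (x : Fin n → ℝ) (p q : MP n) : fis q (lin x * p) = fis (D x q) p := by
  rw [lin, D, Finset.sum_mul, map_sum, fis_sum]
  refine Finset.sum_congr rfl fun i _ => ?_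
  rw [fis_C_mul, mul_assoc, C_mul', map_smul, fis_X_mul, smul_eq_mul]

lemma fis_qd_mul (p q : MP n) : fis q (qd n * p) = fis (lap q) p := by
  rw [qd, lap, Finset.sum_mul, map_sum, fis_sum]
  refine Finset.sum_congr rfl fun i _ => ?_
  rw [mul_assoc, fis_X_mul, fis_X_mul]

lemma pderiv_comm' (i j : Fin n) (q : MP n) : pderiv i (pderiv j q) = pderiv j (pderiv i q) := by
  ext β
  simp only [my_coeff_pderiv]
  by_cases h : i = j
  · subst h; rfl
  · rw [add_right_comm]
    simp [Finsupp.single_apply, h, Ne.symm h]; ring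

lemma lap_D (x : Fin n → ℝ) (q : MP n) (h : lap q = 0) : lap (D x q) = 0 := by
  have : lap (D x q) = D x (lap q) := by
    simp only [lap, D, map_sum, Finset.mul_sum, pderiv_C_mul]
    rw [Finset.sum_comm]
    refine Finset.sum_congr rfl fun i _ => Finset.sum_congr rfl fun j _ => ?_
    rw [pderiv_comm' j i q, pderiv_comm' j i]
  rw [this, h]; simp [D]

/-- zonal polynomials -/
noncomputable def zon (n : ℕ) (x : Fin n → ℝ) : ℕ → MP n
  | 0 => 1
  | 1 => lin x
  | (k+2) => C ((2 * (k:ℝ) + n) / (k + n - 1)) * (lin x * zon n x (k+1))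
      - C ((k + 1) / (k + n - 1) * ∑ i, x i ^ 2) * (qd n * zon n x k)

lemma D_add (x : Fin n → ℝ) (p q : MP n) : D x (p + q) = D x p + D x q := by
  simp [D, mul_add, Finset.sum_add_distrib]
lemma D_sub (x : Fin n → ℝ) (p q : MP n) : D x (p - q) = D x p - D x q := by
  simp [D, mul_sub, Finset.sum_sub_distrib]
lemma D_C_mul (x : Fin n → ℝ) (c : ℝ) (p : MP n) : D x (C c * p) = C c * D x p := by
  simp only [D, pderiv_C_mul, Finset.mul_sum]
  refine Finset.sum_congr rfl fun i _ => by ring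
lemma D_mul (x : Fin n → ℝ) (p q : MP n) : D x (p * q) = D x p * q + p * D x q := by
  simp only [D, pderiv_mul, Finset.mul_sum, Finset.sum_mul, ← Finset.sum_add_distrib]
  refine Finset.sum_congr rfl fun i _ => by ring
lemma pd_lin (x : Fin n → ℝ) (i : Fin n) : pderiv i (lin x) = C (x i) := by
  simp only [lin, map_sum, pderiv_C_mul, pderiv_X]
  rw [Finset.sum_eq_single i] <;> simp +contextual [Pi.single_apply, eq_comm]
lemma pd_qd (i : Fin n) : pderiv i (qd n) = 2 * X i := by
  simp only [qd, map_sum, pderiv_mul, pderiv_X]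
  rw [Finset.sum_eq_single i]
  · simp; ring
  · intro b _ hb; simp [Pi.single_apply, hb]
  · simp
lemma D_lin (x : Fin n → ℝ) : D x (lin x) = C (∑ i, x i ^ 2) := by
  simp only [D, pd_lin, map_sum, ← C_mul]
  exact Finset.sum_congr rfl fun i _ => by rw [pow_two]
lemma D_qd (x : Fin n → ℝ) : D x (qd n) = 2 * lin x := by
  simp only [D, pd_qd, lin, Finset.mul_sum]
  exact Finset.sum_congr rfl fun i _ => by ring
lemma lap_sub (p q : MP n) : lap (p - q) = lap p - lap q := by
  simp [lap, Finset.sum_sub_distrib]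
lemma lap_C_mul (c : ℝ) (p : MP n) : lap (C c * p) = C c * lap p := by
  simp only [lap, pderiv_C_mul, Finset.mul_sum]
lemma lap_lin_mul (x : Fin n → ℝ) (p : MP n) : lap (lin x * p) = 2 * D x p + lin x * lap p := by
  simp only [lap, D, pderiv_mul, pd_lin, map_add, pderiv_C, Finset.mul_sum, ← Finset.sum_add_distrib]
  refine Finset.sum_congr rfl fun i _ => by ring
lemma lap_qd_mul (p : MP n) :
    lap (qd n * p) = C (2 * n : ℝ) * p + 4 * (∑ i, X i * pderiv i p) + qd n * lap p := by
  have h2 : ∀ i : Fin n, pderiv i (2 * X i : MP n) = 2 := by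
    intro i
    have : (2 * X i : MP n) = C 2 * X i := by rw [map_ofNat C 2]
    rw [this, pderiv_C_mul, map_ofNat C 2]; simp
  simp only [lap, pderiv_mul, pd_qd, map_add, h2, Finset.mul_sum]
  have : (C (2 * n : ℝ) * p : MP n) = ∑ i : Fin n, 2 * p := by
    rw [Finset.sum_const, Finset.card_univ, Fintype.card_fin, C_mul, map_ofNat C 2, map_natCast, nsmul_eq_mul]; ring
  rw [this, ← Finset.sum_add_distrib, ← Finset.sum_add_distrib]
  refine Finset.sum_congr rfl fun i _ => by ring

lemma lin_hom (x : Fin n → ℝ) : (lin x).IsHomogeneous 1 := by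
  refine IsHomogeneous.sum _ _ _ fun i _ => ?_
  have := (isHomogeneous_C (Fin n) (x i)).mul (isHomogeneous_X ℝ i)
  simpa using this
lemma qd_hom : (qd n).IsHomogeneous 2 := by
  refine IsHomogeneous.sum _ _ _ fun i _ => ?_
  exact (isHomogeneous_X ℝ i).mul (isHomogeneous_X ℝ i)

lemma zon_hom (x : Fin n → ℝ) : ∀ k, (zon n x k).IsHomogeneous k
  | 0 => isHomogeneous_one _ _
  | 1 => lin_hom x
  | (k+2) => by
    rw [zon]
    refine IsHomogeneous.sub ?_ ?_
    · have := (isHomogeneous_C (Fin n) ((2 * (k:ℝ) + n) / (k + n - 1))).mul ((lin_hom x).mul (zon_hom x (k+1)))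
      have e : 0 + (1 + (k + 1)) = k + 2 := by omega
      rwa [e] at this
    · have := (isHomogeneous_C (Fin n) (((k:ℝ) + 1) / (k + n - 1) * ∑ i, x i ^ 2)).mul ((qd_hom).mul (zon_hom x k))
      have e : 0 + (2 + k) = k + 2 := by omega
      rwa [e] at this

lemma D_zon (hn : 2 ≤ n) (x : Fin n → ℝ) : ∀ k, D x (zon n x (k+1)) = C ((k+1) * ∑ i, x i ^ 2) * zon n x k
  | 0 => by simp [zon, D_lin]
  | 1 => by
    have h1 : ((n:ℝ) - 1) ≠ 0 := by
      have : (2:ℝ) ≤ n := by exact_mod_cast hn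
      linarith
    simp only [zon]
    rw [D_sub, D_C_mul, D_C_mul, D_mul, D_mul, D_lin, D_qd]
    have : D x (1 : MP n) = 0 := by simp [D]
    rw [this]
    set s := ∑ i, x i ^ 2
    have e : (2 * lin x * 1 + qd n * 0 : MP n) = C 2 * lin x := by rw [map_ofNat C 2]; ring
    have e2 : (C s * lin x + lin x * C s : MP n) = C (2 * s) * lin x := by rw [C_mul, map_ofNat C 2]; ring
    rw [e, e2, ← mul_assoc, ← mul_assoc, ← C_mul, ← C_mul, ← sub_mul, ← C_sub]
    congr 2
    have h2 : ((0:ℕ):ℝ) + n - 1 ≠ 0 := by simpa using h1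
    field_simp
    push_cast
    ring
  | (k+2) => by
    have h1 : ((k:ℝ) + n - 1) ≠ 0 := by
      have : (2:ℝ) ≤ n := by exact_mod_cast hn
      have : (0:ℝ) ≤ k := by positivity
      linarith
    have h2 : ((k:ℝ) + 1 + n - 1) ≠ 0 := by
      have : (2:ℝ) ≤ n := by exact_mod_cast hn
      have : (0:ℝ) ≤ k := by positivity
      linarith
    have ih1 := D_zon hn x (k+1)
    have ih0 := D_zon hn x k
    rw [show k + 2 + 1 = (k+1) + 2 from rfl, zon]
    rw [D_sub, D_C_mul, D_C_mul, D_mul, D_mul, D_lin, D_qd, ih1, ih0]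
    rw [show k+1+1 = k+2 from rfl]
    set s := ∑ i, x i ^ 2
    rw [show zon n x (k+2) = C ((2 * (k:ℝ) + n) / (k + n - 1)) * (lin x * zon n x (k+1))
      - C ((k + 1) / (k + n - 1) * s) * (qd n * zon n x k) from by rw [zon]]
    set z1 := zon n x (k+1)
    set z0 := zon n x k
    set L := lin x
    set Q := qd n
    have t2 : (2 : MP n) = C 2 := (map_ofNat C 2).symm
    rw [t2]
    have key : ∀ a b c d e f g h : ℝ, a * b * c + a * e - f * 2 = g * c → a * b * d + f * h = g * d →
      (C a * (C b * (C c * (L * z1) - C d * (Q * z0)) + L * (C e * z1)) - C f * (C 2 * L * z1 + Q * (C h * z0)) : MP n)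
       = C g * (C c * (L * z1) - C d * (Q * z0)) := by
      intro a b c d e f g h e1 e2
      have E1 := congrArg (C (σ := Fin n)) e1
      have E2 := congrArg (C (σ := Fin n)) e2
      simp only [map_mul, map_add, map_sub] at E1 E2
      linear_combination (L * z1) * E1 - (Q * z0) * E2
    apply key
    · push_cast; field_simp; ring
    · push_cast; field_simp; ring

lemma lap_zon (hn : 2 ≤ n) (x : Fin n → ℝ) : ∀ k, lap (zon n x k) = 0
  | 0 => by simp [zon, lap]
  | 1 => by simp [zon, lap, pd_lin]
  | (k+2) => by
    have h1 : ((k:ℝ) + n - 1) ≠ 0 := by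
      have : (2:ℝ) ≤ n := by exact_mod_cast hn
      have : (0:ℝ) ≤ k := by positivity
      linarith
    rw [zon, lap_sub, lap_C_mul, lap_C_mul, lap_lin_mul, lap_qd_mul, lap_zon hn x (k+1), lap_zon hn x k,
      D_zon hn x k, (zon_hom x k).sum_X_mul_pderiv]
    set s := ∑ i, x i ^ 2
    set z0 := zon n x k
    have : (k • z0 : MP n) = C (k:ℝ) * z0 := by simp
    rw [this]
    have key : ∀ a b c d e : ℝ, a * (2 * b) - c * (d + 4 * e) = 0 →
      (C a * (2 * (C b * z0) + lin x * 0) - C c * (C d * z0 + 4 * (C e * z0) + qd n * 0) : MP n) = 0 := by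
      intro a b c d e h
      have E := congrArg (C (σ := Fin n)) h
      simp only [map_mul, map_add, map_sub, map_zero] at E
      have t2 : (C 2 : MP n) = 2 := map_ofNat C 2
      have t4 : (C 4 : MP n) = 4 := map_ofNat C 4
      rw [t2, t4] at E
      linear_combination z0 * E
    apply key
    field_simp
    ring

lemma eval_D (x : Fin n → ℝ) (q : MP n) (k : ℕ) (h : q.IsHomogeneous k) :
    eval x (D x q) = k * eval x q := by
  have := congrArg (eval x) h.sum_X_mul_pderiv
  simpa [D] using this

lemma D_hom (x : Fin n → ℝ) (q : MP n) (k : ℕ) (h : q.IsHomogeneous (k+1)) : (D x q).IsHomogeneous k := by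
  refine IsHomogeneous.sum _ _ _ fun i _ => ?_
  have := (isHomogeneous_C (Fin n) (x i)).mul (h.pderiv (i := i))
  simpa using this

noncomputable def cz (n : ℕ) : ℕ → ℝ
  | 0 => 1
  | 1 => 1
  | (k+2) => (2 * (k:ℝ) + n) / (k + n - 1) * (cz n (k+1) * (k + 2))

lemma cz_pos (hn : 2 ≤ n) : ∀ k, 0 < cz n k
  | 0 => one_pos
  | 1 => one_pos
  | (k+2) => by
    have hn' : (2:ℝ) ≤ n := by exact_mod_cast hn
    have hk' : (0:ℝ) ≤ k := by positivity
    have h1 : 0 < (k:ℝ) + n - 1 := by linarith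
    have h2 : 0 < 2 * (k:ℝ) + n := by linarith
    have := cz_pos hn (k+1)
    rw [cz]
    positivity

lemma fis_zon (x : Fin n → ℝ) :
    ∀ k (q : MP n), q.IsHomogeneous k → lap q = 0 → fis q (zon n x k) = cz n k * eval x q
  | 0, q, hq, _ => by
      obtain ⟨c, hc⟩ : ∃ c, q = C c := ⟨_, totalDegree_eq_zero_iff_eq_C.mp (Nat.le_zero.mp hq.totalDegree_le)⟩
      rw [zon, hc, show (1 : MP n) = monomial 0 1 from rfl, fis_monomial]
      simp [mfac, cz]
  | 1, q, hq, hl => by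
      have := fis_lin_mul x 1 q
      rw [mul_one] at this
      rw [zon, this]
      have hD := D_hom x q 0 hq
      obtain ⟨c, hc⟩ : ∃ c, D x q = C c := ⟨_, totalDegree_eq_zero_iff_eq_C.mp (Nat.le_zero.mp hD.totalDegree_le)⟩
      have e := eval_D x q 1 hq
      rw [hc] at e ⊢
      rw [show (1 : MP n) = monomial 0 1 from rfl, fis_monomial]
      simp at e
      simp [mfac, e, cz]
  | (k+2), q, hq, hl => by
      rw [zon, map_sub, C_mul', C_mul', map_smul, map_smul, fis_qd_mul, hl, fis_zero, fis_lin_mul,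
        fis_zon x (k+1) _ (D_hom x q _ hq) (lap_D x q hl), eval_D x q _ hq, cz]
      push_cast
      simp only [smul_eq_mul]
      ring

/-- scalar recursion -/
noncomputable def geg (n : ℕ) (s w : ℝ) : ℕ → ℝ
  | 0 => 1
  | 1 => s
  | (k+2) => (2 * (k:ℝ) + n) / (k + n - 1) * (s * geg n s w (k+1)) - (k + 1) / (k + n - 1) * (w * geg n s w k)

lemma eval_zon (x z : Fin n → ℝ) : ∀ k,
    eval x (zon n z k) = geg n (∑ i, x i * z i) ((∑ i, x i ^ 2) * ∑ i, z i ^ 2) k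
  | 0 => by simp [zon, geg]
  | 1 => by simp [zon, geg, lin, mul_comm]
  | (k+2) => by
    rw [zon, geg, ← eval_zon x z (k+1), ← eval_zon x z k]
    simp only [map_sub, map_mul, eval_C, lin, qd, map_sum, eval_X]
    have : ∑ i, z i * x i = ∑ i, x i * z i := Finset.sum_congr rfl fun i _ => mul_comm _ _
    rw [this]
    have : ∑ i, x i * x i = ∑ i, x i ^ 2 := Finset.sum_congr rfl fun i _ => (pow_two _).symm
    rw [this]
    ring

theorem geg_psd_coord (hn : 2 ≤ n) {ι : Type*} (s : Finset ι) (y : ι → Fin n → ℝ) (c : ι → ℝ) (k : ℕ) :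
    0 ≤ ∑ i ∈ s, ∑ j ∈ s, c i * c j *
      geg n (∑ l, y i l * y j l) ((∑ l, y i l ^ 2) * ∑ l, y j l ^ 2) k := by
  set P : MP n := ∑ j ∈ s, C (c j) * zon n (y j) k with hP
  have hom : P.IsHomogeneous k := by
    refine IsHomogeneous.sum _ _ _ fun i _ => ?_
    have := (isHomogeneous_C (Fin n) (c i)).mul (zon_hom (y i) k)
    simpa using this
  have hl : lap P = 0 := by
    have : lap P = ∑ j ∈ s, lap (C (c j) * zon n (y j) k) := by
      rw [hP]; simp only [lap, map_sum]; rw [Finset.sum_comm]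
    rw [this]
    refine Finset.sum_eq_zero fun j _ => ?_
    rw [lap_C_mul, lap_zon hn, mul_zero]
  have h0 := fis_self_nonneg P
  have e : fis P P = cz n k * ∑ i ∈ s, ∑ j ∈ s, c i * c j *
      geg n (∑ l, y i l * y j l) ((∑ l, y i l ^ 2) * ∑ l, y j l ^ 2) k := by
    conv_lhs => arg 2; rw [hP]
    rw [map_sum, Finset.mul_sum]
    refine Finset.sum_congr rfl fun i _ => ?_
    rw [C_mul', map_smul, fis_zon (y i) k P hom hl, hP, map_sum, smul_eq_mul, Finset.mul_sum,
      Finset.mul_sum, Finset.mul_sum]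
    refine Finset.sum_congr rfl fun j _ => ?_
    rw [map_mul, eval_C, eval_zon]
    ring
  rw [e] at h0
  exact nonneg_of_mul_nonneg_right h0 (cz_pos hn k)
end Fischer

section Geometry
open Finset
abbrev EE := EuclideanSpace ℝ (Fin 19)

lemma two_point (T : Finset EE) (hT : ∀ y ∈ T, ‖y‖ = 1) (k : ℕ) :
    0 ≤ ∑ y ∈ T, ∑ z ∈ T, geg 19 (inner ℝ y z) 1 k := by
  have := geg_psd_coord (n := 19) (by norm_num) T (fun y l => y l) (fun _ => 1) k
  refine this.trans_eq ?_
  refine sum_congr rfl fun y hy => sum_congr rfl fun z hz => ?_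
  have e : ∀ y ∈ T, ∑ l, (y l) ^ 2 = 1 := by
    intro y hy
    have h := EuclideanSpace.real_norm_sq_eq y
    rw [hT y hy] at h
    rw [← h]; norm_num
  rw [e y hy, e z hz]
  have : ∑ l, y l * z l = inner ℝ y z := by
    rw [PiLp.inner_apply]
    exact sum_congr rfl fun l _ => by simp [mul_comm]
  rw [this]; norm_num

lemma three_point (x : EE) (hx : ‖x‖ = 1) (T : Finset EE) (hT : ∀ y ∈ T, ‖y‖ = 1) (c : EE → ℝ) (k : ℕ) :
    0 ≤ ∑ y ∈ T, ∑ z ∈ T, c y * c z * geg 18 (inner ℝ y z - inner ℝ x y * inner ℝ x z)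
      ((1 - (inner ℝ x y) ^ 2) * (1 - (inner ℝ x z) ^ 2)) k := by
  haveI : Fact (Module.finrank ℝ EE = 18 + 1) := ⟨by simp [EE]⟩
  have hx0 : x ≠ 0 := by intro h; simp [h] at hx
  let b := OrthonormalBasis.fromOrthogonalSpanSingleton (𝕜 := ℝ) 18 hx0
  have hxx : inner ℝ x x = (1:ℝ) := by rw [real_inner_self_eq_norm_sq, hx]; norm_num
  have hm : ∀ y : EE, y - (inner ℝ x y : ℝ) • x ∈ (Submodule.span ℝ {x})ᗮ := by
    intro y
    rw [Submodule.mem_orthogonal_singleton_iff_inner_right, inner_sub_right, inner_smul_right, hxx]; ring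
  let p : EE → (Submodule.span ℝ {x})ᗮ := fun y => ⟨y - (inner ℝ x y : ℝ) • x, hm y⟩
  have hp : ∀ y z : EE, ∑ l, inner ℝ (p y) (b l) * inner ℝ (p z) (b l)
      = (inner ℝ y z - inner ℝ x y * inner ℝ x z : ℝ) := by
    intro y z
    have := b.sum_inner_mul_inner (p y) (p z)
    have e : ∑ l, inner ℝ (p y) (b l) * inner ℝ (p z) (b l) = (inner ℝ (p y) (p z) : ℝ) := by
      rw [← this]
      exact sum_congr rfl fun l _ => by rw [real_inner_comm (b l) (p z)]
    rw [e]
    show inner ℝ (y - (inner ℝ x y : ℝ) • x) (z - (inner ℝ x z : ℝ) • x) = _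
    simp only [inner_sub_left, inner_sub_right, inner_smul_left, inner_smul_right, hxx, real_inner_comm x y]
    simp
  have := geg_psd_coord (n := 18) (by norm_num) T (fun y l => inner ℝ (p y) (b l)) c k
  refine this.trans_eq ?_
  have e : ∀ y ∈ T, ∑ l, (inner ℝ (p y) (b l) : ℝ) ^ 2 = 1 - (inner ℝ x y : ℝ) ^ 2 := by
    intro y hy
    have h := hp y y
    rw [real_inner_self_eq_norm_sq, hT y hy] at h
    rw [show (1 - (inner ℝ x y : ℝ) ^ 2) = 1 ^ 2 - inner ℝ x y * inner ℝ x y by ring, ← h]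
    exact sum_congr rfl fun l _ => by rw [pow_two]
  refine sum_congr rfl fun y hy => sum_congr rfl fun z hz => ?_
  rw [e y hy, e z hz, hp]

lemma inner_bounds (x y : EE) (hx : ‖x‖ = 1) (hy : ‖y‖ = 1) (hd : 1 ≤ dist x y) :
    -1 ≤ (inner ℝ x y : ℝ) ∧ (inner ℝ x y : ℝ) ≤ 1/2 := by
  constructor
  · have := abs_le.mp (abs_real_inner_le_norm x y)
    rw [hx, hy] at this; linarith [this.1]
  · rw [dist_eq_norm] at hd
    have := norm_sub_sq_real x y
    rw [hx, hy] at this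
    nlinarith

lemma det_nonneg (x y z : EE) (hx : ‖x‖ = 1) (hy : ‖y‖ = 1) (hz : ‖z‖ = 1) :
    0 ≤ 1 + 2 * inner ℝ x y * inner ℝ x z * inner ℝ y z - (inner ℝ x y) ^ 2 - (inner ℝ x z) ^ 2 - (inner ℝ y z : ℝ) ^ 2 := by
  have hxx : inner ℝ x x = (1:ℝ) := by rw [real_inner_self_eq_norm_sq, hx]; norm_num
  have hyy : inner ℝ y y = (1:ℝ) := by rw [real_inner_self_eq_norm_sq, hy]; norm_num
  have hzz : inner ℝ z z = (1:ℝ) := by rw [real_inner_self_eq_norm_sq, hz]; norm_num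
  have := real_inner_mul_inner_self_le (y - (inner ℝ x y : ℝ) • x) (z - (inner ℝ x z : ℝ) • x)
  simp only [inner_sub_left, inner_sub_right, inner_smul_left, inner_smul_right, hxx, hyy, hzz,
    real_inner_comm x y, real_inner_comm x z, real_inner_comm y z] at this
  simp at this
  nlinarith

theorem count_bound (N : ℕ) (hN : 2 ≤ N) (S : Finset EE) (hS : S.card = N) (hnorm : ∀ x ∈ S, ‖x‖ = 1)
    (hdist : ∀ x ∈ S, ∀ y ∈ S, x ≠ y → 1 ≤ dist x y)
    (A h : ℝ → ℝ) (G : ℝ → ℝ → ℝ → ℝ)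
    (hA : ∀ T : Finset EE, (∀ y ∈ T, ‖y‖ = 1) → 0 ≤ ∑ y ∈ T, ∑ z ∈ T, A (inner ℝ y z))
    (hG : ∀ x : EE, ‖x‖ = 1 → ∀ T : Finset EE, (∀ y ∈ T, ‖y‖ = 1) →
      0 ≤ ∑ y ∈ T, ∑ z ∈ T, G (inner ℝ x y) (inner ℝ x z) (inner ℝ y z))
    (htri : ∀ u v t : ℝ, -1 ≤ u → u ≤ 1/2 → -1 ≤ v → v ≤ 1/2 → -1 ≤ t → t ≤ 1/2 →
      0 ≤ 1 + 2 * u * v * t - u ^ 2 - v ^ 2 - t ^ 2 →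
      G u v t + G u t v + G v t u ≤ h u + h v + h t)
    (hpair : ∀ u : ℝ, -1 ≤ u → u ≤ 1/2 → A u + G u u 1 + ((N : ℝ) - 2) * h u ≤ - 1)
    (hA1 : A 1 < N - 1) : False := by
  classical
  have hii : ∀ x ∈ S, inner ℝ x x = (1:ℝ) := fun x hx => by
    rw [real_inner_self_eq_norm_sq, hnorm x hx]; norm_num
  -- notation
  let ip : EE → EE → ℝ := fun x y => inner ℝ x y
  have hc : ∀ x y, ip x y = ip y x := fun x y => real_inner_comm _ _
  -- distinct triples sum
  let D3 : (EE → EE → EE → ℝ) → ℝ := fun f =>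
    ∑ x ∈ S, ∑ y ∈ S, ∑ z ∈ S, if x ≠ y ∧ x ≠ z ∧ y ≠ z then f x y z else 0
  have D3_congr : ∀ f g, (∀ x ∈ S, ∀ y ∈ S, ∀ z ∈ S, x ≠ y → x ≠ z → y ≠ z → f x y z ≤ g x y z) → D3 f ≤ D3 g := by
    intro f g H
    refine sum_le_sum fun x hx => sum_le_sum fun y hy => sum_le_sum fun z hz => ?_
    split_ifs with h
    · exact H x hx y hy z hz h.1 h.2.1 h.2.2
    · exact le_rfl
  have D3_add : ∀ f g, D3 (fun x y z => f x y z + g x y z) = D3 f + D3 g := by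
    intro f g
    simp only [D3, ← sum_add_distrib]
    refine sum_congr rfl fun x hx => sum_congr rfl fun y hy => sum_congr rfl fun z hz => ?_
    split_ifs <;> simp
  have D3_swap12 : ∀ f, D3 (fun x y z => f y x z) = D3 f := by
    intro f
    simp only [D3]
    rw [sum_comm]
    refine sum_congr rfl fun x hx => sum_congr rfl fun y hy => sum_congr rfl fun z hz => ?_
    congr 1
    simp only [eq_iff_iff]
    constructor <;> rintro ⟨a, b, c⟩ <;> exact ⟨a.symm, c, b⟩
  have D3_swap23 : ∀ f, D3 (fun x y z => f x z y) = D3 f := by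
    intro f
    simp only [D3]
    refine sum_congr rfl fun x hx => ?_
    rw [sum_comm]
    refine sum_congr rfl fun y hy => sum_congr rfl fun z hz => ?_
    congr 1
    simp only [eq_iff_iff]
    constructor <;> rintro ⟨a, b, c⟩ <;> exact ⟨b, a, c.symm⟩
  let g : EE → EE → EE → ℝ := fun x y z => G (ip x y) (ip x z) (ip y z)
  let hh : EE → EE → EE → ℝ := fun x y z => h (ip x y)
  have s1 : D3 (fun x y z => G (ip x y) (ip y z) (ip x z)) = D3 g := by
    rw [← D3_swap12 g]
    congr 1; funext x y z
    simp only [g]; rw [hc y x]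
  have s2 : D3 (fun x y z => G (ip x z) (ip y z) (ip x y)) = D3 g := by
    rw [← D3_swap12 g, ← D3_swap23 (fun x y z => g y x z)]
    congr 1; funext x y z
    simp only [g]; rw [hc z x, hc z y]
  have t1 : D3 (fun x y z => h (ip x z)) = D3 hh := D3_swap23 hh
  have t2 : D3 (fun x y z => h (ip y z)) = D3 hh := by
    rw [← t1]; exact D3_swap12 (fun x y z => h (ip x z))
  have ineq : 3 * D3 g ≤ 3 * D3 hh := by
    have h1 := D3_add (fun x y z => g x y z + G (ip x y) (ip y z) (ip x z)) (fun x y z => G (ip x z) (ip y z) (ip x y))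
    have h2 := D3_add g (fun x y z => G (ip x y) (ip y z) (ip x z))
    have h3 := D3_add (fun x y z => hh x y z + h (ip x z)) (fun x y z => h (ip y z))
    have h4 := D3_add hh (fun x y z => h (ip x z))
    have := D3_congr (fun x y z => g x y z + G (ip x y) (ip y z) (ip x z) + G (ip x z) (ip y z) (ip x y))
      (fun x y z => hh x y z + h (ip x z) + h (ip y z)) (by
        intro x hx y hy z hz hxy hxz hyz
        have b1 := inner_bounds x y (hnorm x hx) (hnorm y hy) (hdist x hx y hy hxy)
        have b2 := inner_bounds x z (hnorm x hx) (hnorm z hz) (hdist x hx z hz hxz)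
        have b3 := inner_bounds y z (hnorm y hy) (hnorm z hz) (hdist y hy z hz hyz)
        exact htri _ _ _ b1.1 b1.2 b2.1 b2.2 b3.1 b3.2
          (det_nonneg x y z (hnorm x hx) (hnorm y hy) (hnorm z hz)))
    linarith
  let D2 : (EE → EE → ℝ) → ℝ := fun f => ∑ x ∈ S, ∑ y ∈ S, if x ≠ y then f x y else 0
  have D3hh : D3 hh = D2 (fun x y => ((N:ℝ) - 2) * h (ip x y)) := by
    refine sum_congr rfl fun x hx => sum_congr rfl fun y hy => ?_
    by_cases hxy : x = y
    · simp [hxy]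
    · have e : ∀ z ∈ S, (if x ≠ y ∧ x ≠ z ∧ y ≠ z then hh x y z else 0)
          = (if z ∈ (S.erase x).erase y then h (ip x y) else 0) := by
        intro z hz
        congr 1
        simp [hxy, hz, eq_comm, and_comm]
      rw [sum_congr rfl e, ← sum_filter, sum_const, nsmul_eq_mul, if_pos hxy]
      have : (S.filter (fun z => z ∈ (S.erase x).erase y)) = (S.erase x).erase y := by
        ext z; simp
      rw [this, card_erase_of_mem (by simp [hy, Ne.symm hxy]), card_erase_of_mem hx, hS]
      congr 1
      rw [Nat.sub_sub, Nat.cast_sub (by omega)]; norm_num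
  have gsum : 0 ≤ D2 (fun x y => G (ip x y) (ip x y) 1) + D3 g := by
    have : ∀ x ∈ S, 0 ≤ ∑ y ∈ S, ((if x ≠ y then G (ip x y) (ip x y) 1 else 0) +
        ∑ z ∈ S, if x ≠ y ∧ x ≠ z ∧ y ≠ z then g x y z else 0) := by
      intro x hx
      have h0 := hG x (hnorm x hx) (S.erase x) (fun y hy => hnorm y (mem_of_mem_erase hy))
      refine h0.trans_eq ?_
      have e1 : ∀ f : EE → ℝ, ∑ y ∈ S.erase x, f y = ∑ y ∈ S, if x ≠ y then f y else 0 := by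
        intro f
        rw [← sum_filter]
        refine sum_congr ?_ fun _ _ => rfl
        ext y; simp [eq_comm, and_comm]
      rw [e1]
      refine sum_congr rfl fun y hy => ?_
      by_cases hxy : x = y
      · simp [hxy]
      · rw [if_pos hxy, if_pos hxy, e1]
        have : ∀ z ∈ S, (if x ≠ z then G (inner ℝ x y) (inner ℝ x z) (inner ℝ y z) else 0)
          = (if y = z then G (ip x y) (ip x y) 1 else 0) + (if x ≠ y ∧ x ≠ z ∧ y ≠ z then g x y z else 0) := by
          intro z hz
          by_cases hyz : y = z
          · subst hyz
            rw [hii y hy]; simp [hxy, ip]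
          · simp [hyz, hxy, g, ip]
        rw [sum_congr rfl this, sum_add_distrib]
        simp [hy]
    have := sum_nonneg this
    simp only [sum_add_distrib] at this
    exact this
  have asum : 0 ≤ (N:ℝ) * A 1 + D2 (fun x y => A (ip x y)) := by
    have h0 := hA S hnorm
    refine h0.trans_eq ?_
    have : ∀ x ∈ S, ∑ y ∈ S, A (inner ℝ x y) = A 1 + ∑ y ∈ S, if x ≠ y then A (ip x y) else 0 := by
      intro x hx
      have : ∀ y ∈ S, A (inner ℝ x y) = (if x = y then A 1 else 0) + (if x ≠ y then A (ip x y) else 0) := by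
        intro y hy
        by_cases hxy : x = y
        · subst hxy; rw [hii x hx]; simp
        · simp [hxy, ip]
      rw [sum_congr rfl this, sum_add_distrib]
      simp [hx]
    rw [sum_congr rfl this, sum_add_distrib, sum_const, hS, nsmul_eq_mul]
  have fin : D2 (fun x y => A (ip x y)) + D2 (fun x y => G (ip x y) (ip x y) 1)
      + D2 (fun x y => ((N:ℝ) - 2) * h (ip x y)) ≤ - (N * (N - 1)) := by
    have : D2 (fun x y => A (ip x y)) + D2 (fun x y => G (ip x y) (ip x y) 1)
      + D2 (fun x y => ((N:ℝ) - 2) * h (ip x y)) ≤ D2 (fun x y => -1) := by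
      simp only [D2, ← sum_add_distrib]
      refine sum_le_sum fun x hx => sum_le_sum fun y hy => ?_
      split_ifs with hxy
      · have b1 := inner_bounds x y (hnorm x hx) (hnorm y hy) (hdist x hx y hy hxy)
        exact hpair _ b1.1 b1.2
      · simp
    refine this.trans_eq ?_
    have : ∀ x ∈ S, ∑ y ∈ S, (if x ≠ y then (-1:ℝ) else 0) = -(N - 1) := by
      intro x hx
      have : ∀ y ∈ S, (if x ≠ y then (-1:ℝ) else 0) = -1 + (if x = y then 1 else 0) := by
        intro y hy
        by_cases hxy : x = y <;> simp [hxy]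
      rw [sum_congr rfl this, sum_add_distrib]
      simp [hx, hS]
      ring
    simp only [D2]
    rw [sum_congr rfl this, sum_const, hS, nsmul_eq_mul]; ring
  have hNpos : (0:ℝ) < N := by
    have : 0 < N := by omega
    exact_mod_cast this
  have := mul_lt_mul_of_pos_left hA1 hNpos
  linarith
end Geometry
end Kiss

namespace Kiss
section Packed

def fld (w X i : ℕ) : ℕ := X / 2 ^ (w * i) % 2 ^ w

lemma fld_lt (w X i : ℕ) : fld w X i < 2 ^ w := Nat.mod_lt _ (by positivity)

lemma testBit_fld (w X i b : ℕ) : (fld w X i).testBit b = (decide (b < w) && X.testBit (w * i + b)) := by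
  rw [fld, Nat.testBit_mod_two_pow, Nat.testBit_div_two_pow, Nat.add_comm]

lemma fld_add (w X Y : ℕ) (h : ∀ i, fld w X i + fld w Y i < 2 ^ w) (i : ℕ) :
    fld w (X + Y) i = fld w X i + fld w Y i := by
  have key : ∀ i, X % 2 ^ (w * i) + Y % 2 ^ (w * i) < 2 ^ (w * i) := by
    intro i
    induction i with
    | zero => simp [Nat.mod_one]
    | succ i ih =>
      have e : 2 ^ (w * (i+1)) = 2 ^ (w * i) * 2 ^ w := by rw [← pow_add, Nat.mul_succ]
      rw [e, Nat.mod_mul, Nat.mod_mul]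
      have h1 := h i
      unfold fld at h1
      have h2 : X / 2 ^ (w * i) % 2 ^ w + Y / 2 ^ (w * i) % 2 ^ w + 1 ≤ 2 ^ w := h1
      have h3 := Nat.mul_le_mul_left (2 ^ (w * i)) h2
      rw [Nat.mul_add, Nat.mul_add] at h3
      omega
  unfold fld
  rw [Nat.add_div_eq_of_add_mod_lt (key i), Nat.add_mod_of_add_mod_lt (h i)]

lemma fld_shiftRight (w X s i : ℕ) : fld w (X >>> (w * s)) i = fld w X (i + s) := by
  unfold fld
  rw [Nat.shiftRight_eq_div_pow, Nat.div_div_eq_div_mul, ← pow_add, ← Nat.mul_add, Nat.add_comm]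

lemma fld_land (w X Y i : ℕ) : fld w (X &&& Y) i = fld w X i &&& fld w Y i := by
  apply Nat.eq_of_testBit_eq
  intro b
  simp only [testBit_fld, Nat.testBit_land]
  cases decide (b < w) <;> simp

lemma fld_lor (w X Y i : ℕ) : fld w (X ||| Y) i = fld w X i ||| fld w Y i := by
  apply Nat.eq_of_testBit_eq
  intro b
  simp only [testBit_fld, Nat.testBit_lor]
  cases decide (b < w) <;> simp

lemma fld_shiftLeft (w X s i : ℕ) : fld w (X <<< (w * s)) i = if i < s then 0 else fld w X (i - s) := by
  apply Nat.eq_of_testBit_eq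
  intro b
  rw [testBit_fld, Nat.testBit_shiftLeft]
  by_cases hb : b < w
  · split_ifs with h
    · have : ¬ (w * i + b ≥ w * s) := by
        have := Nat.mul_le_mul_left w (Nat.succ_le_of_lt h)
        rw [Nat.mul_succ] at this; omega
      simp [this]
    · have h' : s ≤ i := by omega
      have e : w * i = w * s + w * (i - s) := by rw [← Nat.mul_add]; congr 1; omega
      rw [testBit_fld]
      have : w * i + b ≥ w * s := by omega
      have e2 : w * i + b - w * s = w * (i - s) + b := by omega
      simp [this, e2]
  · have : (fld w X (i - s)).testBit b = false := by rw [testBit_fld]; simp [hb]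
    split_ifs <;> simp [hb, this]

lemma fld_half (w Z mask i : ℕ) (h : fld (w+1) mask i = 2 ^ w - 1) :
    fld (w+1) ((Z >>> 1) &&& mask) i = fld (w+1) Z i / 2 := by
  rw [fld_land, h]
  apply Nat.eq_of_testBit_eq
  intro b
  rw [Nat.testBit_land, Nat.testBit_two_pow_sub_one, testBit_fld, Nat.testBit_shiftRight,
    Nat.testBit_div_two, testBit_fld]
  by_cases hb : b < w
  · have h1 : b < w + 1 := by omega
    have h2 : b + 1 < w + 1 := by omega
    simp only [hb, h1, h2, decide_true, Bool.true_and, Bool.and_true]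
    congr 1; omega
  · have h2 : ¬ b + 1 < w + 1 := by omega
    simp [hb]

/-- `∑ i<n, 2^(w*s*i)` -/
def rep (ws : ℕ) : ℕ → ℕ
  | 0 => 0
  | (n+1) => Nat.add (Nat.shiftLeft (rep ws n) ws) 1

lemma fld_zero (w i : ℕ) : fld w 0 i = 0 := by simp [fld]

lemma fld_of_lt (w A s i : ℕ) (hA : A < 2 ^ (w * s)) (h : s ≤ i) : fld w A i = 0 := by
  unfold fld
  rw [Nat.div_eq_of_lt, Nat.zero_mod]
  exact lt_of_lt_of_le hA (Nat.pow_le_pow_right (by norm_num) (Nat.mul_le_mul_left w h))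

lemma fld_cons (w A Y s i : ℕ) (hA : A < 2 ^ (w * s)) :
    fld w (A + Y <<< (w * s)) i = if i < s then fld w A i else fld w Y (i - s) := by
  rw [fld_add]
  · rw [fld_shiftLeft]
    split_ifs with h
    · rfl
    · rw [fld_of_lt w A s i hA (by omega), Nat.zero_add]
  · intro i
    rw [fld_shiftLeft]
    split_ifs with h
    · exact fld_lt _ _ _
    · rw [fld_of_lt w A s i hA (by omega), Nat.zero_add]; exact fld_lt _ _ _

lemma fld_rep (w A s : ℕ) (hs : 0 < s) (hA : A < 2 ^ (w * s)) : ∀ n i,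
    fld w (A * rep (w * s) n) i = if i / s < n then fld w A (i % s) else 0
  | 0, i => by simp [rep, fld_zero]
  | (n+1), i => by
    have e : A * rep (w * s) (n+1) = A + (A * rep (w * s) n) <<< (w * s) := by
      rw [rep]
      show A * ((rep (w*s) n) <<< (w*s) + 1) = _
      rw [Nat.shiftLeft_eq, Nat.shiftLeft_eq]; ring
    rw [e, fld_cons w A _ s i hA]
    split_ifs with h1 h2 h2
    · rw [Nat.mod_eq_of_lt h1]
    · rw [Nat.div_eq_of_lt h1] at h2; omega
    · rw [fld_rep w A s hs hA n]
      have e1 : (i - s) / s = i / s - 1 := by simpa using Nat.sub_mul_div i s 1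
      have e2 : (i - s) % s = i % s := (Nat.mod_eq_sub_mod (by omega)).symm
      rw [e1, e2, if_pos]
      have : 0 < i / s := Nat.div_pos (by omega) hs
      omega
    · rw [fld_rep w A s hs hA n]
      have e1 : (i - s) / s = i / s - 1 := by simpa using Nat.sub_mul_div i s 1
      rw [e1, if_neg]; omega
end Packed
end Kiss

set_option linter.unusedVariables false
namespace Kiss
section Bez

def bez : ℕ → ℝ → (ℕ → ℝ) → ℝ
  | 0, _, c => c 0
  | (n+1), x, c => (1 - x) * bez n x c + x * bez n x (fun i => c (i+1))

lemma bez_add : ∀ n x (c d : ℕ → ℝ), bez n x (fun i => c i + d i) = bez n x c + bez n x d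
  | 0, x, c, d => rfl
  | (n+1), x, c, d => by
    simp only [bez, bez_add n]; ring

lemma bez_smul : ∀ n x (a : ℝ) (c : ℕ → ℝ), bez n x (fun i => a * c i) = a * bez n x c
  | 0, x, a, c => rfl
  | (n+1), x, a, c => by
    simp only [bez, bez_smul n]; ring

lemma bez_const : ∀ n x (a : ℝ), bez n x (fun _ => a) = a
  | 0, x, a => rfl
  | (n+1), x, a => by
    simp only [bez, bez_const n]; ring

lemma bez_mono : ∀ n x (c d : ℕ → ℝ), 0 ≤ x → x ≤ 1 → (∀ i ≤ n, c i ≤ d i) → bez n x c ≤ bez n x d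
  | 0, x, c, d, _, _, h => h 0 le_rfl
  | (n+1), x, c, d, h0, h1, h => by
    simp only [bez]
    have e1 := bez_mono n x c d h0 h1 (fun i hi => h i (by omega))
    have e2 := bez_mono n x (fun i => c (i+1)) (fun i => d (i+1)) h0 h1 (fun i hi => h (i+1) (by omega))
    have := mul_le_mul_of_nonneg_left e1 (by linarith : 0 ≤ 1 - x)
    have := mul_le_mul_of_nonneg_left e2 h0
    linarith

lemma bez_comm : ∀ n x m y (c : ℕ → ℕ → ℝ),
    bez n x (fun i => bez m y (fun j => c i j)) = bez m y (fun j => bez n x (fun i => c i j))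
  | 0, x, m, y, c => rfl
  | (n+1), x, m, y, c => by
    simp only [bez]
    rw [bez_comm n x m y c, bez_comm n x m y (fun i j => c (i+1) j), bez_add, bez_smul, bez_smul]

lemma bez_left : ∀ D (x : ℝ) (a : ℕ → ℕ → ℝ), 0 ≤ x → x ≤ 1/2 →
    (∀ r i, r + i + 1 ≤ D → a (r+1) i ≤ (a r i + a r (i+1)) / 2) →
    bez D (2*x) (fun c => a c 0) ≤ bez D x (a 0)
  | 0, x, a, _, _, _ => le_rfl
  | (D+1), x, a, h0, h1, h => by
    have e1 := bez_left D x a h0 h1 (fun r i hi => h r i (by omega))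
    have e2 := bez_left D x (fun r i => a (r+1) i) h0 h1 (fun r i hi => h (r+1) i (by omega))
    have e3 : bez D x (a 1) ≤ bez D x (fun i => (1/2) * a 0 i + (1/2) * a 0 (i+1)) :=
      bez_mono D x _ _ h0 (by linarith) (fun i hi => by
        have := h 0 i (by omega)
        rw [zero_add] at this; linarith)
    rw [bez_add, bez_smul, bez_smul D x (1/2) (fun i => a 0 (i+1))] at e3
    simp only [bez]
    simp only [zero_add] at e2
    have := mul_le_mul_of_nonneg_left e1 (by linarith : 0 ≤ 1 - 2*x)
    have := mul_le_mul_of_nonneg_left (e2.trans e3) (by linarith : 0 ≤ 2*x)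
    linarith

lemma bez_right : ∀ D (x : ℝ) (a : ℕ → ℕ → ℝ), 1/2 ≤ x → x ≤ 1 →
    (∀ r i, r + i + 1 ≤ D → a (r+1) i ≤ (a r i + a r (i+1)) / 2) →
    bez D (2*x-1) (fun c => a (D-c) c) ≤ bez D x (a 0)
  | 0, x, a, _, _, _ => le_rfl
  | (D+1), x, a, h0, h1, h => by
    have e1 := bez_right D x (fun r i => a (r+1) i) h0 h1 (fun r i hi => h (r+1) i (by omega))
    have e1' : bez D (2*x-1) (fun c => a (D+1-c) c) ≤ bez D (2*x-1) (fun c => a (D-c+1) c) :=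
      bez_mono D _ _ _ (by linarith) (by linarith) (fun i hi => by
        rw [show D + 1 - i = D - i + 1 by omega])
    have e2 := bez_right D x (fun r i => a r (i+1)) h0 h1 (fun r i hi => h r (i+1) (by omega))
    have e3 : bez D x (a 1) ≤ bez D x (fun i => (1/2) * a 0 i + (1/2) * a 0 (i+1)) :=
      bez_mono D x _ _ (by linarith) (by linarith) (fun i hi => by
        have := h 0 i (by omega)
        rw [zero_add] at this; linarith)
    rw [bez_add, bez_smul, bez_smul D x (1/2) (fun i => a 0 (i+1))] at e3
    simp only [bez, Nat.add_sub_add_right]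
    simp only [zero_add] at e1
    have := mul_le_mul_of_nonneg_left (e1'.trans (e1.trans e3)) (by linarith : 0 ≤ 1 - (2*x-1))
    have := mul_le_mul_of_nonneg_left e2 (by linarith : 0 ≤ 2*x-1)
    linarith
end Bez

section Split

/-- averaging step -/
def stp (ws mask X : ℕ) : ℕ := Nat.land (Nat.shiftRight (Nat.add X (Nat.shiftRight X ws)) 1) mask

def stpN (ws mask : ℕ) : ℕ → ℕ → ℕ
  | 0, X => X
  | (r+1), X => stpN ws mask r (stp ws mask X)

def go (ws mask m0 : ℕ) : ℕ → ℕ → ℕ → ℕ → ℕ → (ℕ → ℕ → Bool) → Bool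
  | 0, _, _, L, R, k => k L R
  | (f+1), sh, X, L, R, k =>
    go ws mask m0 f (Nat.add sh ws)
      (Nat.land (Nat.shiftRight (Nat.add X (Nat.shiftRight X ws)) 1) mask)
      (Nat.lor L (Nat.shiftLeft (Nat.land X m0) sh))
      (Nat.lor R (Nat.land X (Nat.shiftLeft m0 (Nat.mul ws f)))) k

def Lacc (ws mask m0 : ℕ) : ℕ → ℕ → ℕ → ℕ → ℕ
  | 0, _, _, L => L
  | (f+1), sh, X, L => Lacc ws mask m0 f (sh + ws) (stp ws mask X) (L ||| ((X &&& m0) <<< sh))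
def Racc (ws mask m0 : ℕ) : ℕ → ℕ → ℕ → ℕ
  | 0, _, R => R
  | (f+1), X, R => Racc ws mask m0 f (stp ws mask X) (R ||| (X &&& (m0 <<< (ws * f))))

lemma go_eq (ws mask m0 : ℕ) (k) : ∀ f sh X L R, go ws mask m0 f sh X L R k =
    k (Lacc ws mask m0 f sh X L) (Racc ws mask m0 f X R)
  | 0, _, _, _, _ => rfl
  | (f+1), sh, X, L, R => go_eq ws mask m0 k f _ _ _ _

def Inv (X : ℕ) : Prop := ∀ i, fld 64 X i < 2 ^ 63
def GMask (N mask : ℕ) : Prop := ∀ i, fld 64 mask i = if i < N then 2 ^ 63 - 1 else 0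
def GM0 (N s n m0 : ℕ) : Prop := ∀ i < N, fld 64 m0 i = if (i / s) % n = 0 then 2 ^ 64 - 1 else 0

lemma land_full (a : ℕ) (h : a < 2 ^ 64) : a &&& (2 ^ 64 - 1) = a := by
  rw [Nat.and_two_pow_sub_one_eq_mod, Nat.mod_eq_of_lt h]

lemma fld_stp {N mask s X : ℕ} (hm : GMask N mask) (hX : Inv X) (i : ℕ) (hi : i < N) :
    fld 64 (stp (64 * s) mask X) i = (fld 64 X i + fld 64 X (i + s)) / 2 := by
  have h1 := hm i
  rw [if_pos hi] at h1
  have := fld_half 63 (X + X >>> (64 * s)) mask i h1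
  rw [fld_add, fld_shiftRight] at this
  · exact this
  · intro i
    rw [fld_shiftRight]
    have h1 : fld (63+1) X i < 2 ^ 63 := hX i
    have h2 : fld (63+1) X (i + s) < 2 ^ 63 := hX (i + s)
    omega

lemma inv_stp {N mask ws X : ℕ} (hm : GMask N mask) : Inv (stp ws mask X) := by
  intro i
  have : fld 64 (stp ws mask X) i = _ := fld_land 64 _ mask i
  rw [this]
  refine lt_of_le_of_lt Nat.and_le_right ?_
  rw [hm i]; split_ifs <;> norm_num

lemma inv_stpN {N mask ws : ℕ} (hm : GMask N mask) : ∀ r X, Inv X → Inv (stpN ws mask r X)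
  | 0, _, h => h
  | (r+1), X, _ => inv_stpN hm r _ (inv_stp hm)

lemma stpN_succ (ws mask : ℕ) : ∀ r X, stpN ws mask (r+1) X = stp ws mask (stpN ws mask r X)
  | 0, _ => rfl
  | (r+1), X => stpN_succ ws mask r (stp ws mask X)

lemma mod_aux {q r n : ℕ} (hr : r < n) (hrq : r ≤ q) : (q - r) % n = 0 ↔ q % n = r := by
  rw [← Nat.dvd_iff_mod_eq_zero]
  rw [← Nat.modEq_iff_dvd' hrq]
  constructor
  · intro h; have := h.symm; rwa [Nat.ModEq, Nat.mod_eq_of_lt hr] at this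
  · intro h; rw [Nat.ModEq, h, Nat.mod_eq_of_lt hr]

lemma m0_shift {N s n m0 : ℕ} (hs : 0 < s) (h0 : GM0 N s n m0) (i r : ℕ) (hi : i < N) (hr : r < n) :
    fld 64 (m0 <<< (64 * (s * r))) i = if (i / s) % n = r then 2 ^ 64 - 1 else 0 := by
  rw [fld_shiftLeft]
  have e : i < s * r ↔ i / s < r := by rw [Nat.div_lt_iff_lt_mul hs, Nat.mul_comm]
  split_ifs with h1 h2 h2
  · rw [e] at h1
    have := Nat.mod_le (i / s) n
    omega
  · rfl
  · rw [h0 _ (by omega), Nat.sub_mul_div, if_pos ((mod_aux hr (by rw [e] at h1; omega)).2 h2)]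
  · rw [h0 _ (by omega), Nat.sub_mul_div, if_neg (fun h => h2 ((mod_aux hr (by rw [e] at h1; omega)).1 h))]

lemma fld_Racc {N mask s n m0 : ℕ} (hs : 0 < s) (h0 : GM0 N s n m0) (i : ℕ) (hi : i < N) :
    ∀ f X R, f ≤ n → fld 64 (Racc (64 * s) mask m0 f X R) i =
      if (i / s) % n < f then fld 64 R i ||| fld 64 (stpN (64 * s) mask (f - 1 - (i / s) % n) X) i
      else fld 64 R i
  | 0, X, R, _ => by simp [Racc]
  | (f+1), X, R, hf => by
    rw [Racc, fld_Racc hs h0 i hi f _ _ (by omega), fld_lor, fld_land, Nat.mul_assoc,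
      m0_shift hs h0 i f hi (by omega)]
    by_cases h1 : (i / s) % n = f
    · have h2 : ¬ (i / s) % n < f := by omega
      rw [if_neg h2, if_pos h1, if_pos (by omega), land_full _ (fld_lt _ _ _)]
      rw [show f + 1 - 1 - (i / s) % n = 0 by omega]
      rfl
    · rw [if_neg h1, Nat.and_zero, Nat.or_zero]
      by_cases h2 : (i / s) % n < f
      · rw [if_pos h2, if_pos (by omega)]
        rw [show f + 1 - 1 - (i / s) % n = (f - 1 - (i / s) % n) + 1 by omega]
        rfl
      · rw [if_neg h2, if_neg (by omega)]

lemma fld_Lacc {N mask s n m0 : ℕ} (hs : 0 < s) (h0 : GM0 N s n m0) (i : ℕ) (hi : i < N) :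
    ∀ f r X L, r + f = n → fld 64 (Lacc (64 * s) mask m0 f (64 * (s * r)) X L) i =
      if r ≤ (i / s) % n ∧ 0 < f then fld 64 L i ||| fld 64 (stpN (64 * s) mask ((i / s) % n - r) X) (i - s * ((i / s) % n))
      else fld 64 L i
  | 0, r, X, L, _ => by simp [Lacc]
  | (f+1), r, X, L, hf => by
    rw [Lacc]
    rw [show 64 * (s * r) + 64 * s = 64 * (s * (r + 1)) by ring]
    rw [fld_Lacc hs h0 i hi f (r+1) _ _ (by omega), fld_lor]
    have e : fld 64 ((X &&& m0) <<< (64 * (s * r))) i = if (i / s) % n = r then fld 64 X (i - s * r) else 0 := by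
      have e1 := m0_shift hs h0 i r hi (by omega)
      rw [fld_shiftLeft] at e1 ⊢
      rw [fld_land]
      split_ifs at e1 ⊢ with h1 h2 h2
      · rfl
      · rw [e1, land_full _ (fld_lt _ _ _)]
      · rw [e1, Nat.and_zero]
    rw [e]
    have hlt : (i / s) % n < n := Nat.mod_lt _ (by omega)
    by_cases h1 : (i / s) % n = r
    · rw [if_neg (by omega), if_pos h1, if_pos (by omega)]
      rw [show (i / s) % n - r = 0 by omega, h1]
      rfl
    · rw [if_neg h1, Nat.or_zero]
      by_cases h2 : r ≤ (i / s) % n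
      · rw [if_pos (by omega), if_pos (by omega)]
        rw [show (i / s) % n - r = ((i / s) % n - (r + 1)) + 1 by omega]
        rfl
      · rw [if_neg (by omega), if_neg (by omega)]

def spL (ws mask m0 n X : ℕ) : ℕ := Lacc ws mask m0 n 0 X 0
def spR (ws mask m0 n X : ℕ) : ℕ := Racc ws mask m0 n X 0

lemma fld_spL {N mask s n m0 : ℕ} (hs : 0 < s) (hn : 0 < n) (h0 : GM0 N s n m0) (X i : ℕ) (hi : i < N) :
    fld 64 (spL (64 * s) mask m0 n X) i = fld 64 (stpN (64 * s) mask ((i / s) % n) X) (i - s * ((i / s) % n)) := by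
  have := fld_Lacc (mask := mask) hs h0 i hi n 0 X 0 (by omega)
  rw [if_pos (by omega)] at this
  simpa [spL, fld_zero] using this

lemma fld_spR {N mask s n m0 : ℕ} (hs : 0 < s) (hn : 0 < n) (h0 : GM0 N s n m0) (X i : ℕ) (hi : i < N) :
    fld 64 (spR (64 * s) mask m0 n X) i = fld 64 (stpN (64 * s) mask (n - 1 - (i / s) % n) X) i := by
  have := fld_Racc (mask := mask) hs h0 i hi n X 0 le_rfl
  rw [if_pos (Nat.mod_lt _ hn)] at this
  simpa [spR, fld_zero] using this
end Split
end Kiss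

set_option linter.unusedVariables false
namespace Kiss
section Chk

structure Cfg where
  n0 : ℕ
  n1 : ℕ
  n2 : ℕ

namespace Cfg
def N (c : Cfg) : ℕ := Nat.mul (Nat.mul c.n0 c.n1) c.n2
def ones (c : Cfg) : ℕ := rep 64 c.N
def mask (c : Cfg) : ℕ := Nat.mul (2 ^ 63 - 1) c.ones
def s (c : Cfg) (ax : ℕ) : ℕ := bif Nat.beq ax 0 then 1 else bif Nat.beq ax 1 then c.n0 else Nat.mul c.n0 c.n1
def n (c : Cfg) (ax : ℕ) : ℕ := bif Nat.beq ax 0 then c.n0 else bif Nat.beq ax 1 then c.n1 else c.n2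
def ws (c : Cfg) (ax : ℕ) : ℕ := Nat.mul 64 (c.s ax)
def o (c : Cfg) (ax : ℕ) : ℕ := bif Nat.beq ax 0 then Nat.mul c.n1 c.n2 else bif Nat.beq ax 1 then c.n2 else 1
def m0 (c : Cfg) (ax : ℕ) : ℕ :=
  Nat.mul (Nat.mul (2 ^ 64 - 1) (rep 64 (c.s ax))) (rep (Nat.mul 64 (Nat.mul (c.s ax) (c.n ax))) (c.o ax))
def pos (c : Cfg) : Prop := 0 < c.n0 ∧ 0 < c.n1 ∧ 0 < c.n2
end Cfg

lemma fld_ones (A n i : ℕ) (hA : A < 2 ^ 64) : fld 64 (A * rep 64 n) i = if i < n then A else 0 := by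
  have := fld_rep 64 A 1 one_pos (by simpa using hA) n i
  simp only [Nat.div_one, Nat.mod_one, Nat.mul_one] at this
  rw [this]
  congr 1
  rw [fld, Nat.mul_zero, pow_zero, Nat.div_one, Nat.mod_eq_of_lt hA]

lemma gmask (c : Cfg) : GMask c.N c.mask := fun i => fld_ones _ _ i (by norm_num)

lemma rep_lt (ws : ℕ) (h : 0 < ws): ∀ n, rep ws n < 2 ^ (ws * n) ∧ (2 ^ ws - 1) * rep ws n + 1 = 2 ^ (ws * n)
  | 0 => by simp [rep]
  | (n+1) => by
    obtain ⟨h1, h2⟩ := rep_lt ws h n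
    have e : rep ws (n+1) = rep ws n * 2 ^ ws + 1 := by
      show (rep ws n) <<< ws + 1 = _
      rw [Nat.shiftLeft_eq]
    have e2 : 2 ^ (ws * (n+1)) = 2 ^ (ws * n) * 2 ^ ws := by rw [← pow_add, Nat.mul_succ]
    have e3 : 2 ≤ 2 ^ ws := by
      calc 2 = 2 ^ 1 := rfl
        _ ≤ _ := Nat.pow_le_pow_right (by norm_num) h
    rw [e, e2]
    generalize 2 ^ ws = W at *
    generalize 2 ^ (ws * n) = V at *
    generalize rep ws n = r at *
    obtain ⟨W, rfl⟩ : ∃ W', W = W' + 2 := ⟨W - 2, by omega⟩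
    constructor
    · nlinarith
    · have e4 : W + 2 - 1 = W + 1 := by omega
      rw [e4] at h2 ⊢; rw [← h2]; ring

lemma gm0_aux (s n o : ℕ) (hs : 0 < s) (hn : 0 < n) :
    GM0 (s * n * o) s n ((2 ^ 64 - 1) * rep 64 s * rep (64 * (s * n)) o) := by
  intro i hi
  have hA : (2 ^ 64 - 1) * rep 64 s < 2 ^ (64 * s) := by
    have := (rep_lt 64 (by norm_num) s).2; omega
  rw [fld_rep 64 _ (s * n) (by positivity) (lt_of_lt_of_le hA (Nat.pow_le_pow_right (by norm_num)
    (Nat.mul_le_mul_left 64 (Nat.le_mul_of_pos_right s hn))))]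
  rw [if_pos (by rw [Nat.div_lt_iff_lt_mul (by positivity)]; rwa [Nat.mul_comm]),
    fld_ones _ _ _ (by norm_num)]
  congr 1
  rw [Nat.mod_mul, eq_iff_iff]
  have := Nat.mod_lt i hs
  constructor
  · intro h
    by_contra h2
    have : s * 1 ≤ s * (i / s % n) := Nat.mul_le_mul_left s (by omega)
    omega
  · intro h; rw [h]; omega

lemma gm0 (c : Cfg) (hc : c.pos) (ax : ℕ) : 0 < c.s ax ∧ 0 < c.n ax ∧ GM0 c.N (c.s ax) (c.n ax) (c.m0 ax) := by
  obtain ⟨h0, h1, h2⟩ := hc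
  have hs : 0 < c.s ax := by
    unfold Cfg.s; rcases Nat.beq ax 0 <;> rcases Nat.beq ax 1 <;> simp [*]
  have hn : 0 < c.n ax := by
    unfold Cfg.n; rcases Nat.beq ax 0 <;> rcases Nat.beq ax 1 <;> simp [*]
  refine ⟨hs, hn, ?_⟩
  have e : c.N = c.s ax * c.n ax * c.o ax := by
    unfold Cfg.s Cfg.n Cfg.o Cfg.N
    rcases Nat.beq ax 0 <;> rcases Nat.beq ax 1 <;> simp [Nat.mul_assoc]
  rw [e]
  exact gm0_aux _ _ _ hs hn

/-- children -/
def Cfg.L (c : Cfg) (ax X : ℕ) : ℕ := spL (c.ws ax) c.mask (c.m0 ax) (c.n ax) X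
def Cfg.R (c : Cfg) (ax X : ℕ) : ℕ := spR (c.ws ax) c.mask (c.m0 ax) (c.n ax) X

lemma inv_lor {X Y : ℕ} (hX : Inv X) (hY : Inv Y) : Inv (X ||| Y) := fun i => by
  rw [fld_lor]; exact Nat.or_lt_two_pow (hX i) (hY i)
lemma inv_land {X Y : ℕ} (hX : Inv X) : Inv (X &&& Y) := fun i => by
  rw [fld_land]; exact Nat.and_le_left.trans_lt (hX i)
lemma inv_shl {X s : ℕ} (hX : Inv X) : Inv (X <<< (64 * s)) := fun i => by
  rw [fld_shiftLeft]; split_ifs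
  · norm_num
  · exact hX _
lemma inv_zero : Inv 0 := fun i => by rw [fld_zero]; norm_num

lemma inv_Lacc {N s mask m0 : ℕ} (hm : GMask N mask) : ∀ f r X L, Inv X → Inv L →
    Inv (Lacc (64 * s) mask m0 f (64 * (s * r)) X L)
  | 0, _, _, _, _, h => h
  | (f+1), r, X, L, hX, hL => by
    rw [Lacc, show 64 * (s * r) + 64 * s = 64 * (s * (r + 1)) by ring]
    exact inv_Lacc hm f _ _ _ (inv_stp hm) (inv_lor hL (inv_shl (inv_land hX)))
lemma inv_Racc {N s mask m0 : ℕ} (hm : GMask N mask) : ∀ f X R, Inv X → Inv R →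
    Inv (Racc (64 * s) mask m0 f X R)
  | 0, _, _, _, h => h
  | (f+1), X, R, hX, hR => inv_Racc hm f _ _ (inv_stp hm) (inv_lor hR (inv_land hX))

lemma inv_L (c : Cfg) (ax X : ℕ) (hX : Inv X) : Inv (c.L ax X) := by
  have := inv_Lacc (s := c.s ax) (m0 := c.m0 ax) (gmask c) (c.n ax) 0 X 0 hX inv_zero
  rwa [Nat.mul_zero] at this
lemma inv_R (c : Cfg) (ax X : ℕ) (hX : Inv X) : Inv (c.R ax X) :=
  inv_Racc (s := c.s ax) (gmask c) (c.n ax) X 0 hX inv_zero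

lemma axis_avg (c : Cfg) (s X off n : ℕ) (hX : Inv X) (hoff : off + s * (n - 1) < c.N) (r i : ℕ)
    (h : r + i + 1 ≤ n - 1) :
    ((fld 64 (stpN (64 * s) c.mask (r+1) X) (off + s * i) : ℕ) : ℝ) ≤
    ((fld 64 (stpN (64 * s) c.mask r X) (off + s * i) : ℕ) + (fld 64 (stpN (64 * s) c.mask r X) (off + s * (i+1)) : ℕ)) / 2 := by
  have h1 : s * i ≤ s * (n - 1) := Nat.mul_le_mul_left s (by omega)
  rw [stpN_succ, fld_stp (gmask c) (inv_stpN (gmask c) _ _ hX) _ (by omega)]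
  refine Nat.cast_div_le.trans ?_
  rw [Nat.mul_succ, ← Nat.add_assoc]
  push_cast; exact le_rfl

lemma axis_left (c : Cfg) (hc : c.pos) (ax X off : ℕ) (hX : Inv X) (h0 : (off / c.s ax) % c.n ax = 0)
    (hoff : off + c.s ax * (c.n ax - 1) < c.N) (x : ℝ) (hx0 : 0 ≤ x) (hx1 : x ≤ 1/2) :
    bez (c.n ax - 1) (2*x) (fun i => (fld 64 (c.L ax X) (off + c.s ax * i) : ℕ)) ≤
    bez (c.n ax - 1) x (fun i => (fld 64 X (off + c.s ax * i) : ℕ)) := by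
  obtain ⟨hs, hn, hm⟩ := gm0 c hc ax
  refine le_trans ?_ (bez_left (c.n ax - 1) x
    (fun r i => ((fld 64 (stpN (64 * c.s ax) c.mask r X) (off + c.s ax * i) : ℕ) : ℝ)) hx0 hx1
    (fun r i h => axis_avg c _ X off _ hX hoff r i h))
  refine bez_mono _ _ _ _ (by linarith) (by linarith) (fun i hi => le_of_eq ?_)
  have h1 : c.s ax * i ≤ c.s ax * (c.n ax - 1) := Nat.mul_le_mul_left _ (by omega)
  have e := fld_spL (mask := c.mask) hs hn hm X (off + c.s ax * i) (by omega)
  have e2 : (off + c.s ax * i) / c.s ax % c.n ax = i := by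
    rw [Nat.add_mul_div_left _ _ hs, Nat.add_mod, h0, Nat.zero_add, Nat.mod_mod, Nat.mod_eq_of_lt (by omega)]
  rw [e2] at e
  have e3 : fld 64 (c.L ax X) (off + c.s ax * i) = _ := e
  rw [e3, Nat.mul_zero]
  congr 2; omega

lemma axis_right (c : Cfg) (hc : c.pos) (ax X off : ℕ) (hX : Inv X) (h0 : (off / c.s ax) % c.n ax = 0)
    (hoff : off + c.s ax * (c.n ax - 1) < c.N) (x : ℝ) (hx0 : 1/2 ≤ x) (hx1 : x ≤ 1) :
    bez (c.n ax - 1) (2*x-1) (fun i => (fld 64 (c.R ax X) (off + c.s ax * i) : ℕ)) ≤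
    bez (c.n ax - 1) x (fun i => (fld 64 X (off + c.s ax * i) : ℕ)) := by
  obtain ⟨hs, hn, hm⟩ := gm0 c hc ax
  refine le_trans ?_ (bez_right (c.n ax - 1) x
    (fun r i => ((fld 64 (stpN (64 * c.s ax) c.mask r X) (off + c.s ax * i) : ℕ) : ℝ)) hx0 hx1
    (fun r i h => axis_avg c _ X off _ hX hoff r i h))
  refine bez_mono _ _ _ _ (by linarith) (by linarith) (fun i hi => le_of_eq ?_)
  have h1 : c.s ax * i ≤ c.s ax * (c.n ax - 1) := Nat.mul_le_mul_left _ (by omega)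
  have e := fld_spR (mask := c.mask) hs hn hm X (off + c.s ax * i) (by omega)
  have e2 : (off + c.s ax * i) / c.s ax % c.n ax = i := by
    rw [Nat.add_mul_div_left _ _ hs, Nat.add_mod, h0, Nat.zero_add, Nat.mod_mod, Nat.mod_eq_of_lt (by omega)]
  rw [e2] at e
  have e3 : fld 64 (c.R ax X) (off + c.s ax * i) = _ := e
  rw [e3]

/-- value of the tensor -/
def tr (c : Cfg) (X : ℕ) (x y z : ℝ) : ℝ :=
  bez (c.n0 - 1) x (fun i => bez (c.n1 - 1) y (fun j => bez (c.n2 - 1) z (fun k =>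
    (fld 64 X (i + c.n0 * j + c.n0 * c.n1 * k) : ℕ))))

lemma idx_lt (c : Cfg) (i j k : ℕ) (hi : i < c.n0) (hj : j < c.n1) (hk : k < c.n2) :
    i + c.n0 * j + c.n0 * c.n1 * k < c.N := by
  have h1 : c.n0 * (j + 1) ≤ c.n0 * c.n1 := Nat.mul_le_mul_left _ hj
  have h2 : c.n0 * c.n1 * (k + 1) ≤ c.n0 * c.n1 * c.n2 := Nat.mul_le_mul_left _ hk
  have : c.N = c.n0 * c.n1 * c.n2 := rfl
  rw [Nat.mul_succ] at h1 h2
  omega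

lemma tr_ax0 (c : Cfg) (hc : c.pos) (X X' : ℕ) (x x' y z : ℝ) (hy : 0 ≤ y) (hy1 : y ≤ 1) (hz : 0 ≤ z) (hz1 : z ≤ 1)
    (h : ∀ off, (off / c.s 0) % c.n 0 = 0 → off + c.s 0 * (c.n 0 - 1) < c.N →
      bez (c.n 0 - 1) x' (fun i => (fld 64 X' (off + c.s 0 * i) : ℕ)) ≤
      bez (c.n 0 - 1) x (fun i => (fld 64 X (off + c.s 0 * i) : ℕ))) :
    tr c X' x' y z ≤ tr c X x y z := by
  obtain ⟨h0, h1, h2⟩ := hc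
  unfold tr
  rw [bez_comm, bez_comm (c.n0 - 1) x]
  refine bez_mono _ _ _ _ hy hy1 (fun j hj => ?_)
  rw [bez_comm, bez_comm (c.n0 - 1) x]
  refine bez_mono _ _ _ _ hz hz1 (fun k hk => ?_)
  have := h (c.n0 * j + c.n0 * c.n1 * k) (by
    show (_ / 1) % c.n0 = 0
    rw [Nat.div_one, Nat.mul_assoc, ← Nat.mul_add, Nat.mul_mod_right]) (by
    have := idx_lt c (c.n0 - 1) j k (by omega) (by omega) (by omega)
    show _ + 1 * (c.n0 - 1) < _
    omega)
  have e : ∀ i, i + c.n0 * j + c.n0 * c.n1 * k = c.n0 * j + c.n0 * c.n1 * k + 1 * i := fun i => by omega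
  simp only [e]
  exact this

lemma tr_ax1 (c : Cfg) (hc : c.pos) (X X' : ℕ) (x y y' z : ℝ) (hy : 0 ≤ x) (hy1 : x ≤ 1) (hz : 0 ≤ z) (hz1 : z ≤ 1)
    (h : ∀ off, (off / c.s 1) % c.n 1 = 0 → off + c.s 1 * (c.n 1 - 1) < c.N →
      bez (c.n 1 - 1) y' (fun i => (fld 64 X' (off + c.s 1 * i) : ℕ)) ≤
      bez (c.n 1 - 1) y (fun i => (fld 64 X (off + c.s 1 * i) : ℕ))) :
    tr c X' x y' z ≤ tr c X x y z := by
  obtain ⟨h0, h1, h2⟩ := hc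
  unfold tr
  refine bez_mono _ _ _ _ hy hy1 (fun i hi => ?_)
  rw [bez_comm, bez_comm (c.n1 - 1) y]
  refine bez_mono _ _ _ _ hz hz1 (fun k hk => ?_)
  have := h (i + c.n0 * c.n1 * k) (by
    show (_ / c.n0) % c.n1 = 0
    rw [Nat.mul_assoc, Nat.add_mul_div_left _ _ h0, Nat.div_eq_of_lt (by omega), Nat.zero_add, Nat.mul_mod_right]) (by
    have := idx_lt c i (c.n1 - 1) k (by omega) (by omega) (by omega)
    show _ + c.n0 * (c.n1 - 1) < _
    omega)
  have e : ∀ j, i + c.n0 * j + c.n0 * c.n1 * k = i + c.n0 * c.n1 * k + c.n0 * j := fun i => by omega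
  simp only [e]
  exact this

lemma tr_ax2 (c : Cfg) (hc : c.pos) (X X' : ℕ) (x y z z' : ℝ) (hy : 0 ≤ x) (hy1 : x ≤ 1) (hz : 0 ≤ y) (hz1 : y ≤ 1)
    (h : ∀ off, (off / c.s 2) % c.n 2 = 0 → off + c.s 2 * (c.n 2 - 1) < c.N →
      bez (c.n 2 - 1) z' (fun i => (fld 64 X' (off + c.s 2 * i) : ℕ)) ≤
      bez (c.n 2 - 1) z (fun i => (fld 64 X (off + c.s 2 * i) : ℕ))) :
    tr c X' x y z' ≤ tr c X x y z := by
  obtain ⟨h0, h1, h2⟩ := hc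
  unfold tr
  refine bez_mono _ _ _ _ hy hy1 (fun i hi => ?_)
  refine bez_mono _ _ _ _ hz hz1 (fun j hj => ?_)
  exact h (i + c.n0 * j) (by
    show (_ / (c.n0 * c.n1)) % c.n2 = 0
    have h3 : c.n0 * (j + 1) ≤ c.n0 * c.n1 := Nat.mul_le_mul_left _ (by omega)
    rw [Nat.mul_succ] at h3
    rw [Nat.div_eq_of_lt (by omega), Nat.zero_mod]) (by
    exact idx_lt c i j (c.n2 - 1) (by omega) (by omega) (by omega))

lemma tr_ge (c : Cfg) (hc : c.pos) (X M : ℕ) (h : ∀ i < c.N, M ≤ fld 64 X i) (x y z : ℝ)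
    (hx : 0 ≤ x) (hx1 : x ≤ 1) (hy : 0 ≤ y) (hy1 : y ≤ 1) (hz : 0 ≤ z) (hz1 : z ≤ 1) : (M : ℝ) ≤ tr c X x y z := by
  obtain ⟨h0, h1, h2⟩ := hc
  rw [tr, ← bez_const (c.n0 - 1) x M]
  refine bez_mono _ _ _ _ hx hx1 (fun i hi => ?_)
  rw [← bez_const (c.n1 - 1) y M]
  refine bez_mono _ _ _ _ hy hy1 (fun j hj => ?_)
  rw [← bez_const (c.n2 - 1) z M]
  refine bez_mono _ _ _ _ hz hz1 (fun k hk => ?_)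
  exact_mod_cast h _ (idx_lt c i j k (by omega) (by omega) (by omega))

def Cfg.hi (c : Cfg) : ℕ := Nat.mul (2 ^ 63) c.ones
def Cfg.bias (c : Cfg) (M : ℕ) : ℕ := Nat.mul (Nat.sub (2 ^ 63) M) c.ones
def tst (c : Cfg) (M X : ℕ) : Bool := Nat.beq (Nat.land (Nat.add X (c.bias M)) c.hi) c.hi

lemma tst_sound (c : Cfg) (M X : ℕ) (hX : Inv X) (h : tst c M X = true) : ∀ i < c.N, M ≤ fld 64 X i := by
  intro i hi
  have h1 : (X + (2 ^ 63 - M) * rep 64 c.N) &&& (2 ^ 63 * rep 64 c.N) = 2 ^ 63 * rep 64 c.N := Nat.eq_of_beq_eq_true h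
  have hb : ∀ i, fld 64 ((2 ^ 63 - M) * rep 64 c.N) i = if i < c.N then 2 ^ 63 - M else 0 :=
    fun i => fld_ones _ _ i (by have : 2 ^ 63 - M ≤ 2 ^ 63 := Nat.sub_le _ _; omega)
  have h2 := congrArg (fun Z => fld 64 Z i) h1
  rw [fld_land, fld_ones _ _ i (by norm_num), if_pos hi, fld_add, hb, if_pos hi] at h2
  · have h3 : 2 ^ 63 ≤ fld 64 X i + (2 ^ 63 - M) := h2.symm.le.trans Nat.and_le_left
    have := hX i
    omega
  · intro j
    rw [hb]
    have := hX j
    split_ifs <;> omega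

structure St where
  X : ℕ
  Y : ℕ
  p0 : ℕ
  e0 : ℕ
  p1 : ℕ
  e1 : ℕ
  p2 : ℕ
  e2 : ℕ

variable (cX cY : Cfg) (M Md : ℕ)

def St.ok (s : St) : Prop := Inv s.X ∧ Inv s.Y

def Cl (s : St) : Prop := ∀ x y z : ℝ, 0 ≤ x → x ≤ 1 → 0 ≤ y → y ≤ 1 → 0 ≤ z → z ≤ 1 →
  (x < 1 ∨ s.p0 + 1 = 2 ^ s.e0) → (y < 1 ∨ s.p1 + 1 = 2 ^ s.e1) → (z < 1 ∨ s.p2 + 1 = 2 ^ s.e2) →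
  (s.p0 + x) / 2 ^ s.e0 ≤ (s.p1 + y) / 2 ^ s.e1 → (s.p1 + y) / 2 ^ s.e1 ≤ (s.p2 + z) / 2 ^ s.e2 →
  tr cY s.Y x y z ≤ Md → (M : ℝ) ≤ tr cX s.X x y z

def St.lft (s : St) : ℕ → St
  | 0 => ⟨cX.L 0 s.X, cY.L 0 s.Y, 2 * s.p0, s.e0 + 1, s.p1, s.e1, s.p2, s.e2⟩
  | 1 => ⟨cX.L 1 s.X, cY.L 1 s.Y, s.p0, s.e0, 2 * s.p1, s.e1 + 1, s.p2, s.e2⟩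
  | _ => ⟨cX.L 2 s.X, cY.L 2 s.Y, s.p0, s.e0, s.p1, s.e1, 2 * s.p2, s.e2 + 1⟩
def St.rgt (s : St) : ℕ → St
  | 0 => ⟨cX.R 0 s.X, cY.R 0 s.Y, 2 * s.p0 + 1, s.e0 + 1, s.p1, s.e1, s.p2, s.e2⟩
  | 1 => ⟨cX.R 1 s.X, cY.R 1 s.Y, s.p0, s.e0, 2 * s.p1 + 1, s.e1 + 1, s.p2, s.e2⟩
  | _ => ⟨cX.R 2 s.X, cY.R 2 s.Y, s.p0, s.e0, s.p1, s.e1, 2 * s.p2 + 1, s.e2 + 1⟩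

lemma ok_lft (s : St) (h : s.ok) : ∀ ax, (s.lft cX cY ax).ok
  | 0 => ⟨inv_L _ _ _ h.1, inv_L _ _ _ h.2⟩
  | 1 => ⟨inv_L _ _ _ h.1, inv_L _ _ _ h.2⟩
  | (_+2) => ⟨inv_L _ _ _ h.1, inv_L _ _ _ h.2⟩
lemma ok_rgt (s : St) (h : s.ok) : ∀ ax, (s.rgt cX cY ax).ok
  | 0 => ⟨inv_R _ _ _ h.1, inv_R _ _ _ h.2⟩
  | 1 => ⟨inv_R _ _ _ h.1, inv_R _ _ _ h.2⟩
  | (_+2) => ⟨inv_R _ _ _ h.1, inv_R _ _ _ h.2⟩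

lemma eL (p e : ℕ) (x : ℝ) : (((2 * p : ℕ) : ℝ) + 2 * x) / 2 ^ (e + 1) = (p + x) / 2 ^ e := by
  push_cast; rw [pow_succ]; field_simp
lemma eR (p e : ℕ) (x : ℝ) : (((2 * p + 1 : ℕ) : ℝ) + (2 * x - 1)) / 2 ^ (e + 1) = (p + x) / 2 ^ e := by
  push_cast; rw [pow_succ]; field_simp; ring
lemma eR' {p e : ℕ} {x : ℝ} (h : x < 1 ∨ p + 1 = 2 ^ e) : 2 * x - 1 < 1 ∨ 2 * p + 1 + 1 = 2 ^ (e + 1) := by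
  rcases h with h | h
  · left; linarith
  · right; rw [pow_succ, ← h]; ring

lemma cl_split (hX : cX.pos) (hY : cY.pos) (s : St) (h : s.ok) : ∀ ax, Cl cX cY M Md (s.lft cX cY ax) →
    Cl cX cY M Md (s.rgt cX cY ax) → Cl cX cY M Md s
  | 0, hL, hR => by
    intro x y z hx hx1 hy hy1 hz hz1 ho0 ho1 ho2 h01 h12 hd
    rcases lt_or_ge x (1/2) with hh | hh
    · have e1 := tr_ax0 cX hX s.X _ x (2*x) y z hy hy1 hz hz1 (fun off a b => axis_left cX hX 0 s.X off h.1 a b x hx hh.le)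
      have e2 := tr_ax0 cY hY s.Y _ x (2*x) y z hy hy1 hz hz1 (fun off a b => axis_left cY hY 0 s.Y off h.2 a b x hx hh.le)
      refine (hL (2*x) y z (by linarith) (by linarith) hy hy1 hz hz1 (Or.inl (by linarith)) ho1 ho2 ?_ h12 (e2.trans hd)).trans e1
      exact (eL s.p0 s.e0 x).trans_le h01
    · have e1 := tr_ax0 cX hX s.X _ x (2*x-1) y z hy hy1 hz hz1 (fun off a b => axis_right cX hX 0 s.X off h.1 a b x hh hx1)
      have e2 := tr_ax0 cY hY s.Y _ x (2*x-1) y z hy hy1 hz hz1 (fun off a b => axis_right cY hY 0 s.Y off h.2 a b x hh hx1)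
      refine (hR (2*x-1) y z (by linarith) (by linarith) hy hy1 hz hz1 (eR' ho0) ho1 ho2 ?_ h12 (e2.trans hd)).trans e1
      exact (eR s.p0 s.e0 x).trans_le h01
  | 1, hL, hR => by
    intro x y z hx hx1 hy hy1 hz hz1 ho0 ho1 ho2 h01 h12 hd
    rcases lt_or_ge y (1/2) with hh | hh
    · have e1 := tr_ax1 cX hX s.X _ x y (2*y) z hx hx1 hz hz1 (fun off a b => axis_left cX hX 1 s.X off h.1 a b y hy hh.le)
      have e2 := tr_ax1 cY hY s.Y _ x y (2*y) z hx hx1 hz hz1 (fun off a b => axis_left cY hY 1 s.Y off h.2 a b y hy hh.le)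
      refine (hL x (2*y) z hx hx1 (by linarith) (by linarith) hz hz1 ho0 (Or.inl (by linarith)) ho2 ?_ ?_ (e2.trans hd)).trans e1
      · exact h01.trans_eq (eL s.p1 s.e1 y).symm
      · exact (eL s.p1 s.e1 y).trans_le h12
    · have e1 := tr_ax1 cX hX s.X _ x y (2*y-1) z hx hx1 hz hz1 (fun off a b => axis_right cX hX 1 s.X off h.1 a b y hh hy1)
      have e2 := tr_ax1 cY hY s.Y _ x y (2*y-1) z hx hx1 hz hz1 (fun off a b => axis_right cY hY 1 s.Y off h.2 a b y hh hy1)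
      refine (hR x (2*y-1) z hx hx1 (by linarith) (by linarith) hz hz1 ho0 (eR' ho1) ho2 ?_ ?_ (e2.trans hd)).trans e1
      · exact h01.trans_eq (eR s.p1 s.e1 y).symm
      · exact (eR s.p1 s.e1 y).trans_le h12
  | (_+2), hL, hR => by
    intro x y z hx hx1 hy hy1 hz hz1 ho0 ho1 ho2 h01 h12 hd
    rcases lt_or_ge z (1/2) with hh | hh
    · have e1 := tr_ax2 cX hX s.X _ x y z (2*z) hx hx1 hy hy1 (fun off a b => axis_left cX hX 2 s.X off h.1 a b z hz hh.le)
      have e2 := tr_ax2 cY hY s.Y _ x y z (2*z) hx hx1 hy hy1 (fun off a b => axis_left cY hY 2 s.Y off h.2 a b z hz hh.le)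
      refine (hL x y (2*z) hx hx1 hy hy1 (by linarith) (by linarith) ho0 ho1 (Or.inl (by linarith)) h01 ?_ (e2.trans hd)).trans e1
      exact h12.trans_eq (eL s.p2 s.e2 z).symm
    · have e1 := tr_ax2 cX hX s.X _ x y z (2*z-1) hx hx1 hy hy1 (fun off a b => axis_right cX hX 2 s.X off h.1 a b z hh hz1)
      have e2 := tr_ax2 cY hY s.Y _ x y z (2*z-1) hx hx1 hy hy1 (fun off a b => axis_right cY hY 2 s.Y off h.2 a b z hh hz1)
      refine (hR x y (2*z-1) hx hx1 hy hy1 (by linarith) (by linarith) ho0 ho1 (eR' ho2) h01 ?_ (e2.trans hd)).trans e1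
      exact h12.trans_eq (eR s.p2 s.e2 z).symm

/-- order discard: `lo p e ≥ hi q f` and `q` not at the end -/
def odis (p e q f : ℕ) : Bool :=
  and (Nat.ble (Nat.mul (Nat.add q 1) (Nat.pow 2 e)) (Nat.mul p (Nat.pow 2 f))) (Nat.blt (Nat.add q 1) (Nat.pow 2 f))

lemma odis_sound (p e q f : ℕ) (h : odis p e q f = true) (x y : ℝ) (hx : 0 ≤ x) (hy1 : y ≤ 1)
    (ho : y < 1 ∨ q + 1 = 2 ^ f) (hle : ((p : ℝ) + x) / 2 ^ e ≤ (q + y) / 2 ^ f) : False := by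
  rw [odis, Bool.and_eq_true] at h
  have h1 : (q + 1) * 2 ^ e ≤ p * 2 ^ f := Nat.le_of_ble_eq_true h.1
  have h2 : q + 1 < 2 ^ f := by
    have := h.2; rw [Nat.blt_eq] at this; exact this
  have h3 : y < 1 := ho.resolve_right (by omega)
  rw [div_le_div_iff₀ (by positivity) (by positivity)] at hle
  have h4 : ((q : ℝ) + 1) * 2 ^ e ≤ p * 2 ^ f := by exact_mod_cast h1
  have h5 : (0:ℝ) < 2 ^ e := by positivity
  have h6 : (0:ℝ) < 2 ^ f := by positivity
  nlinarith

def leaf (X Y p0 e0 p1 e1 p2 e2 : ℕ) : Bool :=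
  bif odis p0 e0 p1 e1 then true else bif odis p1 e1 p2 e2 then true else
  bif tst cY (Nat.add Md 1) Y then true else tst cX M X

lemma leaf_sound (hX : cX.pos) (hY : cY.pos) (s : St) (h : s.ok)
    (hl : leaf cX cY M Md s.X s.Y s.p0 s.e0 s.p1 s.e1 s.p2 s.e2 = true) : Cl cX cY M Md s := by
  intro x y z hx hx1 hy hy1 hz hz1 ho0 ho1 ho2 h01 h12 hd
  unfold leaf at hl
  cases h1 : odis s.p0 s.e0 s.p1 s.e1
  · cases h2 : odis s.p1 s.e1 s.p2 s.e2
    · cases h3 : tst cY (Nat.add Md 1) s.Y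
      · simp only [h1, h2, h3, cond_false] at hl
        exact tr_ge cX hX s.X M (tst_sound cX M s.X h.1 hl) x y z hx hx1 hy hy1 hz hz1
      · have := tr_ge cY hY s.Y (Md + 1) (tst_sound cY (Md + 1) s.Y h.2 h3) x y z hx hx1 hy hy1 hz hz1
        push_cast at this
        exact absurd (this.trans hd) (by linarith)
    · exact (odis_sound _ _ _ _ h2 y z hy hz1 ho2 h12).elim
  · exact (odis_sound _ _ _ _ h1 x y hx hy1 ho1 h01).elim

def nd (ax X Y : ℕ) (k : ℕ → ℕ → ℕ → ℕ → Bool) : Bool :=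
  go (cX.ws ax) cX.mask (cX.m0 ax) (cX.n ax) 0 X 0 0 fun L R =>
  go (cY.ws ax) cY.mask (cY.m0 ax) (cY.n ax) 0 Y 0 0 fun LY RY => k L LY R RY

lemma nd_eq (ax X Y : ℕ) (k) : nd cX cY ax X Y k = k (cX.L ax X) (cY.L ax Y) (cX.R ax X) (cY.R ax Y) := by
  rw [nd, go_eq, go_eq]; rfl

def chk : ℕ → ℕ → ℕ → ℕ → ℕ → ℕ → ℕ → ℕ → ℕ → ℕ → (ℕ → Bool) → Bool
  | 0, _, _, _, _, _, _, _, _, _, _ => false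
  | (f+1), code, X, Y, p0, e0, p1, e1, p2, e2, k =>
    bif Nat.beq (Nat.land code 3) 0 then
      (bif leaf cX cY M Md X Y p0 e0 p1 e1 p2 e2 then k (Nat.shiftRight code 2) else false)
    else bif Nat.beq (Nat.land code 3) 1 then
      nd cX cY 0 X Y fun L LY R RY =>
        chk f (Nat.shiftRight code 2) L LY (Nat.mul 2 p0) (Nat.add e0 1) p1 e1 p2 e2 fun c =>
        chk f c R RY (Nat.add (Nat.mul 2 p0) 1) (Nat.add e0 1) p1 e1 p2 e2 k
    else bif Nat.beq (Nat.land code 3) 2 then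
      nd cX cY 1 X Y fun L LY R RY =>
        chk f (Nat.shiftRight code 2) L LY p0 e0 (Nat.mul 2 p1) (Nat.add e1 1) p2 e2 fun c =>
        chk f c R RY p0 e0 (Nat.add (Nat.mul 2 p1) 1) (Nat.add e1 1) p2 e2 k
    else
      nd cX cY 2 X Y fun L LY R RY =>
        chk f (Nat.shiftRight code 2) L LY p0 e0 p1 e1 (Nat.mul 2 p2) (Nat.add e2 1) fun c =>
        chk f c R RY p0 e0 p1 e1 (Nat.add (Nat.mul 2 p2) 1) (Nat.add e2 1) k

def chkS (f code : ℕ) (s : St) (k : ℕ → Bool) : Bool :=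
  chk cX cY M Md f code s.X s.Y s.p0 s.e0 s.p1 s.e1 s.p2 s.e2 k

lemma chk_sound (hX : cX.pos) (hY : cY.pos) : ∀ f code s k, s.ok → chkS cX cY M Md f code s k = true →
    Cl cX cY M Md s ∧ ∃ c, k c = true
  | 0, code, s, k, h, hc => by simp [chkS, chk] at hc
  | (f+1), code, s, k, h, hc => by
    have key : ∀ ax c', chkS cX cY M Md f c' (s.lft cX cY ax) (fun c => chkS cX cY M Md f c (s.rgt cX cY ax) k) = true →
        Cl cX cY M Md s ∧ ∃ c, k c = true := by
      intro ax c' hh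
      obtain ⟨a, c, hc⟩ := chk_sound hX hY f _ _ _ (ok_lft cX cY s h ax) hh
      obtain ⟨b, c, hc⟩ := chk_sound hX hY f _ _ _ (ok_rgt cX cY s h ax) hc
      exact ⟨cl_split cX cY M Md hX hY s h ax a b, c, hc⟩
    rw [chkS, chk] at hc
    cases h0 : Nat.beq (Nat.land code 3) 0
    · cases h1 : Nat.beq (Nat.land code 3) 1
      · cases h2 : Nat.beq (Nat.land code 3) 2
        · simp only [h0, h1, h2, cond_false, nd_eq] at hc
          exact key 2 _ hc
        · simp only [h0, h1, h2, cond_false, cond_true, nd_eq] at hc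
          exact key 1 _ hc
      · simp only [h0, h1, cond_false, cond_true, nd_eq] at hc
        exact key 0 _ hc
    · simp only [h0, cond_true] at hc
      cases hl : leaf cX cY M Md s.X s.Y s.p0 s.e0 s.p1 s.e1 s.p2 s.e2
      · simp [hl] at hc
      · simp only [hl, cond_true] at hc
        exact ⟨leaf_sound cX cY M Md hX hY s h hl, _, hc⟩

/-- descend along a path; digits `2*ax` (left), `2*ax+1` (right) -/
def St.at (s : St) : List (ℕ × Bool) → St
  | [] => s
  | (ax, false) :: p => St.at (s.lft cX cY ax) p
  | (ax, true) :: p => St.at (s.rgt cX cY ax) p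

lemma ok_at : ∀ p (s : St), s.ok → (s.at cX cY p).ok
  | [], s, h => h
  | (ax, false) :: p, s, h => ok_at p _ (ok_lft cX cY s h ax)
  | (ax, true) :: p, s, h => ok_at p _ (ok_rgt cX cY s h ax)

lemma at_append : ∀ p q (s : St), s.at cX cY (p ++ q) = (s.at cX cY p).at cX cY q
  | [], q, s => rfl
  | (ax, false) :: p, q, s => at_append p q _
  | (ax, true) :: p, q, s => at_append p q _

lemma cl_join (hX : cX.pos) (hY : cY.pos) (s : St) (h : s.ok) (p : List (ℕ × Bool)) (ax : ℕ)
    (h1 : Cl cX cY M Md (s.at cX cY (p ++ [(ax, false)]))) (h2 : Cl cX cY M Md (s.at cX cY (p ++ [(ax, true)]))) :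
    Cl cX cY M Md (s.at cX cY p) := by
  rw [at_append] at h1 h2
  exact cl_split cX cY M Md hX hY _ (ok_at cX cY p s h) ax h1 h2

/-- kernel version -/
def desc (f code : ℕ) : List (ℕ × Bool) → ℕ → ℕ → ℕ → ℕ → ℕ → ℕ → ℕ → ℕ → Bool
  | [], X, Y, p0, e0, p1, e1, p2, e2 => chk cX cY M Md f code X Y p0 e0 p1 e1 p2 e2 fun _ => true
  | (ax, b) :: p, X, Y, p0, e0, p1, e1, p2, e2 =>
    nd cX cY ax X Y fun L LY R RY =>
      desc f code p (cond b R L) (cond b RY LY)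
        (bif Nat.beq ax 0 then (cond b (Nat.add (Nat.mul 2 p0) 1) (Nat.mul 2 p0)) else p0)
        (bif Nat.beq ax 0 then (Nat.add e0 1) else e0)
        (bif Nat.beq ax 1 then (cond b (Nat.add (Nat.mul 2 p1) 1) (Nat.mul 2 p1)) else p1)
        (bif Nat.beq ax 1 then (Nat.add e1 1) else e1)
        (bif Nat.beq ax 2 then (cond b (Nat.add (Nat.mul 2 p2) 1) (Nat.mul 2 p2)) else p2)
        (bif Nat.beq ax 2 then (Nat.add e2 1) else e2)

lemma desc_eq (f code : ℕ) : ∀ p (s : St), (∀ q ∈ p, q.1 < 3) →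
    desc cX cY M Md f code p s.X s.Y s.p0 s.e0 s.p1 s.e1 s.p2 s.e2 =
    chkS cX cY M Md f code (s.at cX cY p) (fun _ => true)
  | [], s, _ => rfl
  | (ax, b) :: p, s, h => by
    have h0 : ax < 3 := h (ax, b) (by simp)
    have h1 : ∀ q ∈ p, q.1 < 3 := fun q hq => h q (by simp [hq])
    rw [desc, nd_eq]
    interval_cases ax
    · cases b
      · exact desc_eq f code p (s.lft cX cY 0) h1
      · exact desc_eq f code p (s.rgt cX cY 0) h1
    · cases b
      · exact desc_eq f code p (s.lft cX cY 1) h1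
      · exact desc_eq f code p (s.rgt cX cY 1) h1
    · cases b
      · exact desc_eq f code p (s.lft cX cY 2) h1
      · exact desc_eq f code p (s.rgt cX cY 2) h1

lemma desc_sound (hX : cX.pos) (hY : cY.pos) (f code : ℕ) (p) (s : St) (h : s.ok) (hp : p.all (fun q => Nat.blt q.1 3) = true)
    (hd : desc cX cY M Md f code p s.X s.Y s.p0 s.e0 s.p1 s.e1 s.p2 s.e2 = true) :
    Cl cX cY M Md (s.at cX cY p) := by
  rw [desc_eq _ _ _ _ _ _ _ _ (by simpa [List.all_eq_true] using hp)] at hd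
  exact (chk_sound cX cY M Md hX hY f code _ _ (ok_at cX cY p s h) hd).1
end Chk
end Kiss

set_option linter.unusedVariables false
namespace Kiss
section ExSec

inductive Ex where
  | k (z : ℤ)
  | a (i : Fin 3)
  | b (i : Fin 3)
  | add (x y : Ex)
  | mul (x y : Ex)

namespace Ex
def ev {R : Type} [CommRing R] (A B : Fin 3 → R) : Ex → R
  | k z => (z : R)
  | a i => A i
  | b i => B i
  | add x y => ev A B x + ev A B y
  | mul x y => ev A B x * ev A B y

def nb : Ex → ℕ
  | k z => Int.natAbs z
  | a _ => 1
  | b _ => 1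
  | add x y => Nat.add (nb x) (nb y)
  | mul x y => Nat.mul (nb x) (nb y)

def ab : Ex → Ex
  | k z => k |z|
  | a i => a i
  | b i => b i
  | add x y => add (ab x) (ab y)
  | mul x y => mul (ab x) (ab y)

def vd (i : Fin 3) : ℕ × ℕ × ℕ :=
  bif Nat.beq i.1 0 then (1, 0, 0) else bif Nat.beq i.1 1 then (0, 1, 0) else (0, 0, 1)

def dg : Ex → Option (ℕ × ℕ × ℕ)
  | k _ => some (0, 0, 0)
  | a i => some (vd i)
  | b i => some (vd i)
  | add x y => match dg x, dg y with
    | some (p, q, r), some (p', q', r') =>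
      bif and (Nat.beq p p') (and (Nat.beq q q') (Nat.beq r r')) then some (p, q, r) else none
    | _, _ => none
  | mul x y => match dg x, dg y with
    | some (p, q, r), some (p', q', r') => some (Nat.add p p', Nat.add q q', Nat.add r r')
    | _, _ => none

lemma dg_add {x y : Ex} {d} (h : dg (add x y) = some d) : dg x = some d ∧ dg y = some d := by
  rw [dg] at h
  rcases hx : dg x with _ | ⟨p, q, r⟩ <;> rcases hy : dg y with _ | ⟨p', q', r'⟩ <;> rw [hx, hy] at h <;>
    simp only [reduceCtorEq] at h
  cases hc : and (Nat.beq p p') (and (Nat.beq q q') (Nat.beq r r'))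
  · rw [hc] at h; simp at h
  · rw [hc] at h
    simp only [Bool.and_eq_true] at hc
    have h1 := Nat.eq_of_beq_eq_true hc.1
    have h2 := Nat.eq_of_beq_eq_true hc.2.1
    have h3 := Nat.eq_of_beq_eq_true hc.2.2
    subst h1 h2 h3
    exact ⟨h, h⟩

lemma dg_mul {x y : Ex} {d} (h : dg (mul x y) = some d) : ∃ p q r p' q' r', dg x = some (p, q, r) ∧
    dg y = some (p', q', r') ∧ d = (p + p', q + q', r + r') := by
  rw [dg] at h
  rcases hx : dg x with _ | ⟨p, q, r⟩ <;> rcases hy : dg y with _ | ⟨p', q', r'⟩ <;> rw [hx, hy] at h <;>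
    simp only [reduceCtorEq] at h
  exact ⟨p, q, r, p', q', r', rfl, rfl, (Option.some.inj h).symm⟩

variable {R S : Type} [CommRing R] [CommRing S]

lemma ev_map (f : R →+* S) (A B : Fin 3 → R) : ∀ e, f (ev A B e) = ev (fun i => f (A i)) (fun i => f (B i)) e
  | k z => by simp [ev]
  | a i => rfl
  | b i => rfl
  | add x y => by simp [ev, ev_map f A B x, ev_map f A B y]
  | mul x y => by simp [ev, ev_map f A B x, ev_map f A B y]

lemma ev_hom (l A B : Fin 3 → R) : ∀ e p q r, dg e = some (p, q, r) →
    ev (fun i => l i * A i) (fun i => l i * B i) e = l 0 ^ p * l 1 ^ q * l 2 ^ r * ev A B e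
  | k z, p, q, r, h => by
    simp only [dg, Option.some.injEq, Prod.mk.injEq] at h
    obtain ⟨rfl, rfl, rfl⟩ := h
    simp [ev]
  | a i, p, q, r, h => by
    simp only [dg, Option.some.injEq] at h
    fin_cases i <;> (simp [vd] at h; obtain ⟨rfl, rfl, rfl⟩ := h; simp [ev])
  | b i, p, q, r, h => by
    simp only [dg, Option.some.injEq] at h
    fin_cases i <;> (simp [vd] at h; obtain ⟨rfl, rfl, rfl⟩ := h; simp [ev])
  | add x y, p, q, r, h => by
    have := dg_add h
    simp only [ev, ev_hom l A B x p q r this.1, ev_hom l A B y p q r this.2]; ring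
  | mul x y, p, q, r, h => by
    obtain ⟨p1, q1, r1, p2, q2, r2, h1, h2, h3⟩ := dg_mul h
    simp only [Prod.mk.injEq] at h3
    obtain ⟨rfl, rfl, rfl⟩ := h3
    simp only [ev, ev_hom l A B x _ _ _ h1, ev_hom l A B y _ _ _ h2, pow_add]; ring

lemma ev_cont (A B : ℝ → Fin 3 → ℝ) (hA : ∀ i, Continuous fun x => A x i) (hB : ∀ i, Continuous fun x => B x i) :
    ∀ e, Continuous fun x => ev (A x) (B x) e
  | k z => continuous_const
  | a i => hA i
  | b i => hB i
  | add x y => (ev_cont A B hA hB x).add (ev_cont A B hA hB y)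
  | mul x y => (ev_cont A B hA hB x).mul (ev_cont A B hA hB y)

open MvPolynomial in
noncomputable def g (e : Ex) : MvPolynomial (Fin 3) ℤ := ev (fun i => X i) (fun _ => 1) e

open MvPolynomial in
lemma g_deg : ∀ e p q r, dg e = some (p, q, r) →
    degreeOf 0 (g e) ≤ p ∧ degreeOf 1 (g e) ≤ q ∧ degreeOf 2 (g e) ≤ r
  | k z, p, q, r, h => by
    have : g (k z) = C z := by simp [g, ev]
    rw [this, degreeOf_C, degreeOf_C, degreeOf_C]; simp
  | a i, p, q, r, h => by
    simp only [dg, Option.some.injEq] at h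
    have : g (a i) = X i := rfl
    rw [this]
    fin_cases i <;> (simp [vd] at h; obtain ⟨rfl, rfl, rfl⟩ := h; simp [degreeOf_X])
  | b i, p, q, r, h => by
    have : g (b i) = C 1 := by simp [g, ev]
    simp [this, degreeOf_one]
  | add x y, p, q, r, h => by
    have h0 := dg_add h
    have h1 := g_deg x p q r h0.1
    have h2 := g_deg y p q r h0.2
    have : g (add x y) = g x + g y := rfl
    rw [this]
    exact ⟨(degreeOf_add_le _ _ _).trans (max_le h1.1 h2.1), (degreeOf_add_le _ _ _).trans (max_le h1.2.1 h2.2.1),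
      (degreeOf_add_le _ _ _).trans (max_le h1.2.2 h2.2.2)⟩
  | mul x y, p, q, r, h => by
    obtain ⟨p1, q1, r1, p2, q2, r2, h1, h2, h3⟩ := dg_mul h
    simp only [Prod.mk.injEq] at h3
    obtain ⟨rfl, rfl, rfl⟩ := h3
    have h1 := g_deg x _ _ _ h1
    have h2 := g_deg y _ _ _ h2
    have : g (mul x y) = g x * g y := rfl
    rw [this]
    exact ⟨(degreeOf_mul_le _ _ _).trans (add_le_add h1.1 h2.1), (degreeOf_mul_le _ _ _).trans (add_le_add h1.2.1 h2.2.1),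
      (degreeOf_mul_le _ _ _).trans (add_le_add h1.2.2 h2.2.2)⟩

open MvPolynomial in
lemma g_ab : ∀ e m, |coeff m (g e)| ≤ coeff m (g (ab e))
  | k z, m => by
    have h1 : g (k z) = C z := by simp [g, ev]
    have h2 : g (ab (k z)) = C |z| := by simp [g, ev, ab]
    rw [h1, h2, coeff_C, coeff_C]; split_ifs <;> simp
  | a i, m => by
    have : g (ab (a i)) = X i := rfl
    rw [this]
    have : g (a i) = X i := rfl
    rw [this, coeff_X]; split_ifs <;> simp
  | b i, m => by
    have h1 : g (b i) = C 1 := by simp [g, ev]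
    have h2 : g (ab (b i)) = C 1 := by simp [g, ev, ab]
    rw [h1, h2, coeff_C]; split_ifs <;> simp
  | add x y, m => by
    show |coeff m (g x + g y)| ≤ coeff m (g (ab x) + g (ab y))
    rw [coeff_add, coeff_add]
    exact (abs_add_le _ _).trans (add_le_add (g_ab x m) (g_ab y m))
  | mul x y, m => by
    show |coeff m (g x * g y)| ≤ coeff m (g (ab x) * g (ab y))
    classical
    rw [coeff_mul, coeff_mul]
    refine (Finset.abs_sum_le_sum_abs _ _).trans (Finset.sum_le_sum fun i _ => ?_)
    rw [abs_mul]
    exact mul_le_mul (g_ab x _) (g_ab y _) (abs_nonneg _) ((abs_nonneg _).trans (g_ab x _))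

open MvPolynomial in
lemma g_nb : ∀ e, eval (fun _ => (1:ℤ)) (g (ab e)) = nb e
  | k z => by
    have h2 : g (ab (k z)) = C |z| := by simp [g, ev, ab]
    rw [h2, eval_C, nb]; simp
  | a i => by
    have : g (ab (a i)) = X i := rfl
    rw [this, eval_X]; rfl
  | b i => by
    have : g (ab (b i)) = 1 := rfl
    rw [this, map_one]; rfl
  | add x y => by
    show eval _ (g (ab x) + g (ab y)) = ((nb x + nb y : ℕ) : ℤ)
    rw [map_add, g_nb, g_nb]; push_cast; rfl
  | mul x y => by
    show eval _ (g (ab x) * g (ab y)) = ((nb x * nb y : ℕ) : ℤ)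
    rw [map_mul, g_nb, g_nb]; push_cast; rfl

open MvPolynomial in
lemma coeff_le (e m) : |coeff m (g e)| ≤ nb e := by
  refine (g_ab e m).trans ?_
  rw [← g_nb, eval_eq]
  simp only [one_pow, Finset.prod_const_one, mul_one]
  have hn : ∀ d, 0 ≤ coeff d (g (ab e)) := fun d => (abs_nonneg _).trans (g_ab e d)
  by_cases hm : m ∈ (g (ab e)).support
  · exact Finset.single_le_sum (f := fun d => coeff d (g (ab e))) (fun d _ => hn d) hm
  · rw [notMem_support_iff.1 hm]
    exact Finset.sum_nonneg fun d _ => hn d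

noncomputable def mon (i j k : ℕ) : Fin 3 →₀ ℕ := Finsupp.equivFunOnFinite.symm ![i, j, k]
open MvPolynomial in
noncomputable def cf (e : Ex) (i j k : ℕ) : ℤ := coeff (mon i j k) (g e)

open MvPolynomial in
lemma ev_sum (e p q r) (h : dg e = some (p, q, r)) (z : Fin 3 → R) :
    ev z (fun _ => 1) e = ∑ k ∈ Finset.range (r+1), ∑ j ∈ Finset.range (q+1), ∑ i ∈ Finset.range (p+1),
      (cf e i j k : R) * (z 0 ^ i * z 1 ^ j * z 2 ^ k) := by
  obtain ⟨h0, h1, h2⟩ := g_deg e p q r h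
  have e1 : ev z (fun _ => 1) e = eval₂Hom (Int.castRingHom R) z (g e) := by
    rw [g, ev_map]; simp
  rw [e1]
  show eval₂ _ _ _ = _
  rw [eval₂_eq']
  rw [← Finset.sum_product' (Finset.range (r+1)) (Finset.range (q+1)) (fun k j => ∑ i ∈ Finset.range (p+1), (cf e i j k : R) * (z 0 ^ i * z 1 ^ j * z 2 ^ k))]
  rw [← Finset.sum_product' (Finset.range (r+1) ×ˢ Finset.range (q+1)) (Finset.range (p+1)) (fun kj i => (cf e i kj.2 kj.1 : R) * (z 0 ^ i * z 1 ^ kj.2 * z 2 ^ kj.1))]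
  refine Finset.sum_of_injOn (fun m => ((m 2, m 1), m 0)) ?_ ?_ ?_ ?_
  · intro m _ m' _ hmm
    simp only [Prod.mk.injEq] at hmm
    ext i; fin_cases i
    · exact hmm.2
    · exact hmm.1.2
    · exact hmm.1.1
  · intro m hm
    simp only [Finset.coe_product, Finset.coe_range, Set.mem_prod, Set.mem_Iio]
    have := fun i => monomial_le_degreeOf i hm
    have a0 := this 0; have a1 := this 1; have a2 := this 2
    refine ⟨⟨?_, ?_⟩, ?_⟩ <;> omega
  · rintro ⟨⟨k, j⟩, i⟩ _ hn
    have : cf e i j k = 0 := by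
      rw [cf, ← notMem_support_iff]
      intro hm
      exact hn ⟨mon i j k, hm, rfl⟩
    simp [this]
  · intro m hm
    have : mon (m 0) (m 1) (m 2) = m := by
      ext i; fin_cases i <;> rfl
    simp only [cf, this, Fin.prod_univ_three]
    simp

end Ex
end ExSec
end Kiss

set_option linter.unusedVariables false
namespace Kiss
section Root

lemma fld_fld (w n X i j : ℕ) (hi : i < n) : fld w (fld (w * n) X j) i = fld w X (i + n * j) := by
  apply Nat.eq_of_testBit_eq
  intro b
  rw [testBit_fld, testBit_fld, testBit_fld]
  by_cases hb : b < w
  · have : w * i + b < w * n := by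
      have := Nat.mul_le_mul_left w (Nat.succ_le_of_lt hi)
      rw [Nat.mul_succ] at this; omega
    simp only [hb, this, decide_true, Bool.true_and]
    congr 1; ring
  · simp [hb]

lemma blk (ws : ℕ) : ∀ n (f : ℕ → ℕ), (∀ i < n, f i < 2 ^ ws) →
    (∑ i ∈ Finset.range n, f i * 2 ^ (ws * i)) < 2 ^ (ws * n) ∧
    ∀ i < n, fld ws (∑ i ∈ Finset.range n, f i * 2 ^ (ws * i)) i = f i
  | 0, f, h => by simp
  | (n+1), f, h => by
    obtain ⟨h1, h2⟩ := blk ws n (fun i => f (i+1)) (fun i hi => h (i+1) (by omega))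
    have e : (∑ i ∈ Finset.range (n+1), f i * 2 ^ (ws * i)) =
        f 0 + (∑ i ∈ Finset.range n, f (i+1) * 2 ^ (ws * i)) <<< (ws * 1) := by
      rw [Finset.sum_range_succ', Nat.shiftLeft_eq, Finset.sum_mul, add_comm]
      congr 1
      · simp
      · refine Finset.sum_congr rfl fun i _ => ?_
        rw [mul_assoc, ← pow_add, mul_add]
    have h0 := h 0 (by omega)
    rw [e]
    constructor
    · rw [Nat.shiftLeft_eq, mul_one, Nat.mul_succ, pow_add]
      have := Nat.mul_le_mul_right (2 ^ ws) (Nat.succ_le_of_lt h1)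
      rw [Nat.succ_mul] at this
      omega
    · intro i hi
      rw [fld_cons ws _ _ 1 i (by simpa using h0)]
      split_ifs with hh
      · have : i = 0 := by omega
        subst this
        rw [fld, mul_zero, pow_zero, Nat.div_one, Nat.mod_eq_of_lt h0]
      · rw [h2 _ (by omega)]
        congr 1; omega

def pk (wi wo mk : ℕ) (f : ℕ → ℕ → ℕ) : ℕ → ℕ → ℕ → ℕ
  | 0, _, _ => 0
  | (n+1), idx, V => Nat.add (f idx (Nat.land V mk)) (Nat.shiftLeft (pk wi wo mk f n (Nat.add idx 1) (Nat.shiftRight V wi)) wo)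

def al (wi mk : ℕ) (f : ℕ → ℕ → Bool) : ℕ → ℕ → ℕ → Bool
  | 0, _, _ => true
  | (n+1), idx, V => and (f idx (Nat.land V mk)) (al wi mk f n (Nat.add idx 1) (Nat.shiftRight V wi))

lemma fld0 (w X : ℕ) : X &&& (2 ^ w - 1) = fld w X 0 := by
  rw [Nat.and_two_pow_sub_one_eq_mod, fld, mul_zero, pow_zero, Nat.div_one]

lemma pk_eq (wi wo : ℕ) (f : ℕ → ℕ → ℕ) : ∀ n idx V, pk wi wo (2 ^ wi - 1) f n idx V =
    ∑ i ∈ Finset.range n, f (idx + i) (fld wi V i) * 2 ^ (wo * i)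
  | 0, _, _ => by simp [pk]
  | (n+1), idx, V => by
    have e : pk wi wo (2 ^ wi - 1) f (n+1) idx V = f idx (V &&& (2 ^ wi - 1)) +
      (pk wi wo (2 ^ wi - 1) f n (idx + 1) (V >>> (wi * 1))) <<< wo := by rw [mul_one]; rfl
    have e2 : ∀ i, f (idx + 1 + i) (fld wi (V >>> (wi * 1)) i) * 2 ^ (wo * i) * 2 ^ wo =
        f (idx + (i + 1)) (fld wi V (i + 1)) * 2 ^ (wo * (i + 1)) := fun i => by
      rw [fld_shiftRight, mul_assoc, ← pow_add, ← Nat.mul_succ, show idx + 1 + i = idx + (i + 1) by omega]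
    rw [e, pk_eq wi wo f n, Finset.sum_range_succ', Nat.shiftLeft_eq, Finset.sum_mul, fld0, Finset.sum_congr rfl (fun i _ => e2 i)]
    simp [add_comm]

lemma al_eq (wi : ℕ) (f : ℕ → ℕ → Bool) : ∀ n idx V, al wi (2 ^ wi - 1) f n idx V = true →
    ∀ i < n, f (idx + i) (fld wi V i) = true
  | 0, _, _ => by simp
  | (n+1), idx, V => by
    have e : al wi (2 ^ wi - 1) f (n+1) idx V = and (f idx (V &&& (2 ^ wi - 1)))
      (al wi (2 ^ wi - 1) f n (idx + 1) (V >>> (wi * 1))) := by rw [mul_one]; rfl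
    rw [e, Bool.and_eq_true, fld0]
    rintro ⟨h1, h2⟩ i hi
    rcases i with _ | i
    · exact h1
    · have := al_eq wi f n _ _ h2 i (by omega)
      rw [fld_shiftRight] at this
      rw [show idx + (i + 1) = idx + 1 + i by omega]; exact this

def bn (d i : ℕ) : ℕ := Nat.land (Nat.shiftRight (Nat.pow (2 ^ 64 + 1) d) (Nat.mul 64 i)) (2 ^ 64 - 1)
lemma bn_eq (d i : ℕ) (hd : d < 64) (h : i ≤ d) : bn d i = d.choose i := by
  have h0 : ∀ i < d + 1, d.choose i < 2 ^ 64 := fun i _ =>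
    (Nat.choose_le_two_pow d i).trans_lt (Nat.pow_lt_pow_right (by norm_num) hd)
  have := (blk 64 (d+1) d.choose h0).2 i (by omega)
  have e : (2 ^ 64 + 1) ^ d = ∑ i ∈ Finset.range (d+1), d.choose i * 2 ^ (64 * i) := by
    rw [add_pow]; refine Finset.sum_congr rfl fun i _ => ?_
    rw [← pow_mul, one_pow, mul_one, mul_comm]; simp
  rw [← e] at this
  rw [← this, fld, ← Nat.shiftRight_eq_div_pow, ← Nat.and_two_pow_sub_one_eq_mod]
  rfl

variable (w sh M p q r : ℕ)

/-- normaliser: digit `d = c + 2^(w-1)` ↦ `(c/Bin + 2^sh M) / 2^sh` -/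
def nf (B d : ℕ) : ℕ :=
  Nat.mod (Nat.div (Nat.sub (Nat.add d (Nat.mul B (Nat.mul (2 ^ sh) M))) (2 ^ (w - 1))) (Nat.mul B (2 ^ sh))) (2 ^ 63)
def nfok (B d : ℕ) : Bool := Nat.ble (2 ^ (w - 1)) (Nat.add d (Nat.mul B (Nat.mul (2 ^ sh) M)))

def rootN (V : ℕ) : ℕ :=
  pk (w * (p+1) * (q+1)) (64 * (p+1) * (q+1)) (2 ^ (w * (p+1) * (q+1)) - 1) (fun k P =>
    pk (w * (p+1)) (64 * (p+1)) (2 ^ (w * (p+1)) - 1) (fun j Q =>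
      pk w 64 (2 ^ w - 1) (fun i d => nf w sh M (Nat.mul (bn p i) (Nat.mul (bn q j) (bn r k))) d) (p+1) 0 Q) (q+1) 0 P) (r+1) 0 V

def rootOk (V : ℕ) : Bool :=
  al (w * (p+1) * (q+1)) (2 ^ (w * (p+1) * (q+1)) - 1) (fun k P =>
    al (w * (p+1)) (2 ^ (w * (p+1)) - 1) (fun j Q =>
      al w (2 ^ w - 1) (fun i d => nfok w sh M (Nat.mul (bn p i) (Nat.mul (bn q j) (bn r k))) d) (p+1) 0 Q) (q+1) 0 P) (r+1) 0 V

lemma nf_lt (B d : ℕ) : nf w sh M B d < 2 ^ 63 := Nat.mod_lt _ (by norm_num)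

lemma nf_le (B d : ℕ) (hB : 0 < B) (h : nfok w sh M B d = true) :
    ((nf w sh M B d : ℕ) : ℝ) ≤ M + (((d : ℝ) - 2 ^ (w - 1)) / B) / 2 ^ sh := by
  have h1 : 2 ^ (w-1) ≤ d + B * (2 ^ sh * M) := Nat.le_of_ble_eq_true h
  have h2 : nf w sh M B d ≤ (d + B * (2 ^ sh * M) - 2 ^ (w-1)) / (B * 2 ^ sh) := Nat.mod_le _ _
  have h3 : ((nf w sh M B d : ℕ) : ℝ) ≤ (((d + B * (2 ^ sh * M) - 2 ^ (w-1)) / (B * 2 ^ sh) : ℕ) : ℝ) := by exact_mod_cast h2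
  refine h3.trans (Nat.cast_div_le.trans ?_)
  rw [Nat.cast_sub h1]
  push_cast
  have hB' : (0:ℝ) < B := by exact_mod_cast hB
  apply le_of_eq; field_simp; ring

/-- nested block structure -/
lemma nest (w : ℕ) (f : ℕ → ℕ → ℕ → ℕ) (hf : ∀ i j k, f i j k < 2 ^ w) :
    let V := ∑ k ∈ Finset.range (r+1), (∑ j ∈ Finset.range (q+1), (∑ i ∈ Finset.range (p+1), f i j k * 2 ^ (w * i)) *
      2 ^ (w * (p+1) * j)) * 2 ^ (w * (p+1) * (q+1) * k)
    V < 2 ^ (w * ((p+1) * (q+1) * (r+1))) ∧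
    ∀ k ≤ r, fld (w * (p+1) * (q+1)) V k = ∑ j ∈ Finset.range (q+1), (∑ i ∈ Finset.range (p+1), f i j k * 2 ^ (w * i)) *
      2 ^ (w * (p+1) * j) ∧ ∀ j ≤ q, fld (w * (p+1)) (fld (w * (p+1) * (q+1)) V k) j = ∑ i ∈ Finset.range (p+1), f i j k * 2 ^ (w * i) ∧
      ∀ i ≤ p, fld w (fld (w * (p+1)) (fld (w * (p+1) * (q+1)) V k) j) i = f i j k ∧
        fld w V (i + (p+1) * j + (p+1) * (q+1) * k) = f i j k := by
  have h1 := fun j k => blk w (p+1) (fun i => f i j k) (fun i _ => hf i j k)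
  have h2 := fun k => blk (w * (p+1)) (q+1) _ (fun j _ => (h1 j k).1)
  have h3 := blk (w * (p+1) * (q+1)) (r+1) _ (fun k _ => (h2 k).1)
  intro V
  refine ⟨by have := h3.1; rwa [show w * (p+1) * (q+1) * (r+1) = w * ((p+1) * (q+1) * (r+1)) by ring] at this, ?_⟩
  intro k hk
  have e1 := h3.2 k (by omega)
  refine ⟨e1, fun j hj => ?_⟩
  have e2 := (h2 k).2 j (by omega)
  rw [← e1] at e2
  refine ⟨e2, fun i hi => ?_⟩
  have e3 := (h1 j k).2 i (by omega)
  rw [← e2] at e3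
  refine ⟨e3, ?_⟩
  have hb : i + (p+1) * j < (p+1) * (q+1) := by
    have : (p+1) * (j+1) ≤ (p+1) * (q+1) := Nat.mul_le_mul_left _ (by omega)
    rw [Nat.mul_succ] at this
    omega
  have e4 := fld_fld w ((p+1)*(q+1)) V (i + (p+1) * j) k hb
  rw [show w * ((p+1) * (q+1)) = w * (p+1) * (q+1) by ring] at e4
  rw [← e3, fld_fld w (p+1) _ i j (by omega), e4]

lemma dvm (a b c t : ℕ) (ha : 0 < a) (hb : 0 < b) (ht : t < a * b * c) : ∃ i < a, ∃ j < b, ∃ k < c, i + a * j + a * b * k = t := by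
  have hab : 0 < a * b := Nat.mul_pos ha hb
  refine ⟨t % (a*b) % a, Nat.mod_lt _ ha, t % (a*b) / a, ?_, t / (a*b), Nat.div_lt_of_lt_mul ht, ?_⟩
  · exact Nat.div_lt_of_lt_mul (Nat.mod_lt _ hab)
  · rw [Nat.mod_add_div, Nat.mod_add_div]

lemma nest_inv (f : ℕ → ℕ → ℕ → ℕ) (hf : ∀ i j k, f i j k < 2 ^ 63) (X : ℕ)
    (h1 : X < 2 ^ (64 * ((p+1) * (q+1) * (r+1))))
    (h2 : ∀ k ≤ r, ∀ j ≤ q, ∀ i ≤ p, fld 64 X (i + (p+1) * j + (p+1) * (q+1) * k) = f i j k) : Inv X := by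
  intro t
  by_cases ht : t < (p+1) * (q+1) * (r+1)
  · obtain ⟨i, hi, j, hj, k, hk, rfl⟩ := dvm _ _ _ t (Nat.succ_pos p) (Nat.succ_pos q) ht
    rw [h2 k (by omega) j (by omega) i (by omega)]; exact hf _ _ _
  · rw [fld_of_lt 64 _ _ t h1 (by omega)]; norm_num

lemma rootN_spec (hp : p < 64) (hq : q < 64) (hr : r < 64) (d : ℕ → ℕ → ℕ → ℕ) (hd : ∀ i j k, d i j k < 2 ^ w) :
    let V := ∑ k ∈ Finset.range (r+1), (∑ j ∈ Finset.range (q+1), (∑ i ∈ Finset.range (p+1), d i j k * 2 ^ (w * i)) *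
      2 ^ (w * (p+1) * j)) * 2 ^ (w * (p+1) * (q+1) * k)
    Inv (rootN w sh M p q r V) ∧ ∀ k ≤ r, ∀ j ≤ q, ∀ i ≤ p,
      fld 64 (rootN w sh M p q r V) (i + (p+1) * j + (p+1) * (q+1) * k) =
        nf w sh M (p.choose i * (q.choose j * r.choose k)) (d i j k) ∧
      (rootOk w sh M p q r V = true → nfok w sh M (p.choose i * (q.choose j * r.choose k)) (d i j k) = true) := by
  intro V
  obtain ⟨_, hV⟩ := nest p q r w d hd
  have e : rootN w sh M p q r V = ∑ k ∈ Finset.range (r+1), (∑ j ∈ Finset.range (q+1), (∑ i ∈ Finset.range (p+1),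
      nf w sh M (p.choose i * (q.choose j * r.choose k)) (d i j k) * 2 ^ (64 * i)) *
      2 ^ (64 * (p+1) * j)) * 2 ^ (64 * (p+1) * (q+1) * k) := by
    rw [rootN, pk_eq]
    refine Finset.sum_congr rfl fun k hk => ?_
    rw [Finset.mem_range] at hk
    rw [pk_eq]
    refine congrArg (· * _) ?_
    refine Finset.sum_congr rfl fun j hj => ?_
    rw [Finset.mem_range] at hj
    rw [pk_eq]
    refine congrArg (· * _) ?_
    refine Finset.sum_congr rfl fun i hi => ?_
    rw [Finset.mem_range] at hi
    simp only [zero_add]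
    rw [(((hV k (by omega)).2 j (by omega)).2 i (by omega)).1, bn_eq _ _ hp (by omega), bn_eq _ _ hq (by omega), bn_eq _ _ hr (by omega)]
    simp only [Nat.mul_eq]
  obtain ⟨h1, h2⟩ := nest p q r 64 (fun i j k => nf w sh M (p.choose i * (q.choose j * r.choose k)) (d i j k))
    (fun i j k => (nf_lt _ _ _ _ _).trans (by norm_num))
  rw [← e] at h1 h2
  refine ⟨?_, ?_⟩
  · exact nest_inv p q r _ (fun i j k => nf_lt w sh M (p.choose i * (q.choose j * r.choose k)) (d i j k)) _ h1
      (fun k hk j hj i hi => (((h2 k hk).2 j hj).2 i hi).2)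
  · intro k hk j hj i hi
    refine ⟨(((h2 k hk).2 j hj).2 i hi).2, ?_⟩
    intro hok
    have a1 := al_eq _ _ _ _ _ hok k (by omega)
    have a2 := al_eq _ _ _ _ _ a1 j (by omega)
    have a3 := al_eq _ _ _ _ _ a2 i (by omega)
    simp only [zero_add] at a3
    rw [(((hV k (by omega)).2 j (by omega)).2 i (by omega)).1, bn_eq _ _ hp (by omega), bn_eq _ _ hq (by omega), bn_eq _ _ hr (by omega)] at a3
    simp only [Nat.mul_eq] at a3
    exact a3

lemma bez_sum : ∀ D (x : ℝ) (c : ℕ → ℝ), bez D x c = ∑ i ∈ Finset.range (D+1), D.choose i * (x ^ i * (1 - x) ^ (D - i)) * c i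
  | 0, x, c => by simp [bez]
  | (D+1), x, c => by
    rw [bez, bez_sum D, bez_sum D, Finset.sum_range_succ' _ (D+1)]
    simp only [Nat.choose_succ_succ, Nat.cast_add, add_mul, Finset.sum_add_distrib, Nat.succ_eq_add_one]
    have e1 : ∑ i ∈ Finset.range (D+1), (D.choose i : ℝ) * (x ^ (i+1) * (1-x) ^ (D + 1 - (i+1))) * c (i+1) =
        x * ∑ i ∈ Finset.range (D+1), (D.choose i : ℝ) * (x ^ i * (1-x) ^ (D - i)) * c (i+1) := by
      rw [Finset.mul_sum]
      refine Finset.sum_congr rfl fun i _ => ?_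
      rw [Nat.add_sub_add_right, pow_succ]; ring
    have e2 : ∑ i ∈ Finset.range (D+1), (D.choose (i+1) : ℝ) * (x ^ (i+1) * (1-x) ^ (D + 1 - (i+1))) * c (i+1) +
        (((D+1).choose 0 : ℕ) : ℝ) * (x ^ 0 * (1-x) ^ (D + 1 - 0)) * c 0 =
        (1 - x) * ∑ i ∈ Finset.range (D+1), (D.choose i : ℝ) * (x ^ i * (1-x) ^ (D - i)) * c i := by
      rw [Finset.sum_range_succ, Nat.choose_succ_self, Finset.sum_range_succ' _ D, mul_add, Finset.mul_sum]
      simp only [Nat.cast_zero, zero_mul, add_zero]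
      congr 1
      · refine Finset.sum_congr rfl fun i hi => ?_
        rw [Finset.mem_range] at hi
        rw [Nat.add_sub_add_right, show D - i = (D - (i+1)) + 1 by omega, pow_succ]; ring
      · simp only [Nat.choose_zero_right, Nat.sub_zero, pow_succ]; ring
    linarith
end Root
end Kiss

set_option linter.unusedVariables false
namespace Kiss
section RootS
open Ex

lemma hom_sum (e : Ex) (p q r : ℕ) (h : dg e = some (p, q, r)) (a : Fin 3 → ℝ) :
    ev a (fun i => 1 - a i) e = ∑ k ∈ Finset.range (r+1), ∑ j ∈ Finset.range (q+1), ∑ i ∈ Finset.range (p+1),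
      (cf e i j k : ℝ) * ((a 0 ^ i * (1 - a 0) ^ (p - i)) * (a 1 ^ j * (1 - a 1) ^ (q - j)) * (a 2 ^ k * (1 - a 2) ^ (r - k))) := by
  -- nonsingular case
  have key : ∀ a : Fin 3 → ℝ, (∀ i, a i ≠ 1) → ev a (fun i => 1 - a i) e = ∑ k ∈ Finset.range (r+1), ∑ j ∈ Finset.range (q+1), ∑ i ∈ Finset.range (p+1),
      (cf e i j k : ℝ) * ((a 0 ^ i * (1 - a 0) ^ (p - i)) * (a 1 ^ j * (1 - a 1) ^ (q - j)) * (a 2 ^ k * (1 - a 2) ^ (r - k))) := by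
    intro a ha
    have hn : ∀ i, 1 - a i ≠ 0 := fun i => sub_ne_zero.2 (ha i).symm
    have h1 := ev_hom (fun i => 1 - a i) (fun i => a i / (1 - a i)) (fun _ => 1) e p q r h
    have e1 : (fun i => (1 - a i) * (a i / (1 - a i))) = a := by
      funext i; field_simp [hn i]
    simp only [mul_one] at h1
    rw [e1, ev_sum e p q r h] at h1
    rw [h1, Finset.mul_sum]
    have hp : ∀ (l : Fin 3) (n i : ℕ), i ≤ n → (1 - a l) ^ n * (a l / (1 - a l)) ^ i = a l ^ i * (1 - a l) ^ (n - i) := by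
      intro l n i hi
      obtain ⟨m, rfl⟩ := Nat.exists_eq_add_of_le hi
      have := hn l
      rw [Nat.add_sub_cancel_left, div_pow, pow_add]; field_simp
    refine Finset.sum_congr rfl fun k hk => ?_
    rw [Finset.mul_sum]
    refine Finset.sum_congr rfl fun j hj => ?_
    rw [Finset.mul_sum]
    refine Finset.sum_congr rfl fun i hi => ?_
    rw [Finset.mem_range] at hi hj hk
    rw [← hp 0 p i (by omega), ← hp 1 q j (by omega), ← hp 2 r k (by omega)]; ring
  have st : ∀ (l : Fin 3) (a : Fin 3 → ℝ), (∀ x, x ≠ 1 → ev (Function.update a l x) (fun i => 1 - Function.update a l x i) e =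
      ∑ k ∈ Finset.range (r+1), ∑ j ∈ Finset.range (q+1), ∑ i ∈ Finset.range (p+1),
      (cf e i j k : ℝ) * ((Function.update a l x 0 ^ i * (1 - Function.update a l x 0) ^ (p - i)) * (Function.update a l x 1 ^ j * (1 - Function.update a l x 1) ^ (q - j)) * (Function.update a l x 2 ^ k * (1 - Function.update a l x 2) ^ (r - k)))) →
      ev a (fun i => 1 - a i) e = ∑ k ∈ Finset.range (r+1), ∑ j ∈ Finset.range (q+1), ∑ i ∈ Finset.range (p+1),
      (cf e i j k : ℝ) * ((a 0 ^ i * (1 - a 0) ^ (p - i)) * (a 1 ^ j * (1 - a 1) ^ (q - j)) * (a 2 ^ k * (1 - a 2) ^ (r - k))) := by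
    intro l a H
    have hc : ∀ i, Continuous fun x : ℝ => Function.update a l x i := by
      intro i
      by_cases hi : i = l
      · subst hi; simp only [Function.update_self]; exact continuous_id
      · simp only [Function.update_of_ne hi]; exact continuous_const
    have h1 := ev_cont (fun x => Function.update a l x) (fun x i => 1 - Function.update a l x i) hc
      (fun i => continuous_const.sub (hc i)) e
    have h2 : Continuous fun x : ℝ => ∑ k ∈ Finset.range (r+1), ∑ j ∈ Finset.range (q+1), ∑ i ∈ Finset.range (p+1),
      (cf e i j k : ℝ) * ((Function.update a l x 0 ^ i * (1 - Function.update a l x 0) ^ (p - i)) * (Function.update a l x 1 ^ j * (1 - Function.update a l x 1) ^ (q - j)) * (Function.update a l x 2 ^ k * (1 - Function.update a l x 2) ^ (r - k))) := by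
      have := hc 0; have := hc 1; have := hc 2
      fun_prop
    have h3 := Continuous.ext_on (dense_compl_singleton (1:ℝ)) h1 h2 (fun x hx => H x hx)
    have h4 := congrFun h3 (a l)
    simpa only [Function.update_eq_self] using h4
  apply st 0; intro x hx
  apply st 1; intro y hy
  apply st 2; intro z hz
  apply key
  intro i
  fin_cases i
  · simpa [Function.update_of_ne] using hx
  · simpa [Function.update_of_ne] using hy
  · simpa [Function.update_of_ne] using hz

def off (w n : ℕ) : ℕ := Nat.mul (2 ^ (w - 1)) (Nat.div (Nat.sub (Nat.pow (2 ^ w) n) 1) (Nat.sub (2 ^ w) 1))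

lemma off_eq (w n : ℕ) (hw : 0 < w) : (off w n : ℤ) = 2 ^ (w-1) * ∑ i ∈ Finset.range n, ((2:ℤ) ^ w) ^ i := by
  have h2 : 2 ≤ 2 ^ w := by
    calc 2 = 2 ^ 1 := rfl
      _ ≤ 2 ^ w := Nat.pow_le_pow_right (by norm_num) hw
  have := Nat.geomSum_eq h2 n
  have e : off w n = 2 ^ (w-1) * ∑ i ∈ Finset.range n, (2 ^ w) ^ i := by rw [this]; rfl
  rw [e]; push_cast; rfl

/-- kernel-friendly evaluation at the Kronecker point -/
def zp (w p q : ℕ) (i : Fin 3) : ℤ :=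
  bif Nat.beq i.1 0 then Int.ofNat (2 ^ w) else bif Nat.beq i.1 1 then Int.ofNat (2 ^ (w * (p+1))) else Int.ofNat (2 ^ (w * (p+1) * (q+1)))

def evZ (w p q : ℕ) : Ex → ℤ
  | k z => z
  | a i => zp w p q i
  | b _ => 1
  | .add x y => Int.add (evZ w p q x) (evZ w p q y)
  | .mul x y => Int.mul (evZ w p q x) (evZ w p q y)

lemma evZ_eq (w p q : ℕ) : ∀ e, evZ w p q e = ev (zp w p q) (fun _ => 1) e
  | k z => by simp [evZ, ev]
  | a i => rfl
  | b _ => rfl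
  | .add x y => by rw [evZ, ev, evZ_eq, evZ_eq]; rfl
  | .mul x y => by rw [evZ, ev, evZ_eq, evZ_eq]; rfl

def VV (w p q r : ℕ) (e : Ex) : ℕ := Int.toNat (Int.add (evZ w p q e) (Int.ofNat (off w ((p+1)*(q+1)*(r+1)))))

lemma geo3 (W : ℤ) (a b c : ℕ) (hW : W ≠ 1) (hab : (W^(a*b)) ≠ 1) (ha : W^a ≠ 1) : ∑ i ∈ Finset.range (a*b*c), W ^ i =
    ∑ k ∈ Finset.range c, ∑ j ∈ Finset.range b, ∑ i ∈ Finset.range a, W ^ i * (W ^ a) ^ j * (W ^ (a*b)) ^ k := by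
  have e : ∑ k ∈ Finset.range c, ∑ j ∈ Finset.range b, ∑ i ∈ Finset.range a, W ^ i * (W ^ a) ^ j * (W ^ (a*b)) ^ k =
      (∑ i ∈ Finset.range a, W ^ i) * (∑ j ∈ Finset.range b, (W ^ a) ^ j) * (∑ k ∈ Finset.range c, (W ^ (a*b)) ^ k) := by
    rw [Finset.mul_sum]
    refine Finset.sum_congr rfl fun k _ => ?_
    rw [Finset.mul_sum, Finset.sum_mul]
    refine Finset.sum_congr rfl fun j _ => ?_
    rw [Finset.sum_mul, Finset.sum_mul]
  rw [e]
  have h : W - 1 ≠ 0 := sub_ne_zero.2 hW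
  apply mul_right_cancel₀ h
  have g1 := geom_sum_mul W (a*b*c)
  have g2 := geom_sum_mul W a
  have g3 := geom_sum_mul (W^a) b
  have g4 := geom_sum_mul (W^(a*b)) c
  rw [g1]
  rw [← pow_mul] at g3 g4
  rw [← g4, ← g3, ← g2]; ring

lemma VV_eq (w p q r : ℕ) (hw : 0 < w) (e : Ex) (h : dg e = some (p, q, r)) (hn : nb e < 2 ^ (w-1)) :
    VV w p q r e = ∑ k ∈ Finset.range (r+1), (∑ j ∈ Finset.range (q+1), (∑ i ∈ Finset.range (p+1),
      (cf e i j k + 2 ^ (w-1)).toNat * 2 ^ (w * i)) *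
      2 ^ (w * (p+1) * j)) * 2 ^ (w * (p+1) * (q+1) * k) := by
  have hc : ∀ i j k, 0 ≤ cf e i j k + 2 ^ (w-1) := fun i j k => by
    have h1 := coeff_le e (mon i j k)
    have h2 : ((nb e : ℕ) : ℤ) < 2 ^ (w-1) := by exact_mod_cast hn
    have h3 := (abs_le.1 h1).1
    unfold cf; linarith
  have e1 : Int.add (evZ w p q e) (Int.ofNat (off w ((p+1)*(q+1)*(r+1)))) = ((∑ k ∈ Finset.range (r+1), (∑ j ∈ Finset.range (q+1), (∑ i ∈ Finset.range (p+1),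
      (cf e i j k + 2 ^ (w-1)).toNat * 2 ^ (w * i)) *
      2 ^ (w * (p+1) * j)) * 2 ^ (w * (p+1) * (q+1) * k) : ℕ) : ℤ) := by
    have hoff := off_eq w ((p+1)*(q+1)*(r+1)) hw
    have h1 : ∀ n, 0 < n → ((2:ℤ) ^ w) ^ n ≠ 1 := by
      intro n hn
      rw [← pow_mul]
      exact (one_lt_pow₀ (by norm_num) (by positivity)).ne'
    rw [geo3 _ _ _ _ (by simpa using h1 1 one_pos) (h1 _ (by positivity)) (h1 _ (by positivity))] at hoff
    show evZ w p q e + (off w ((p+1)*(q+1)*(r+1)) : ℤ) = _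
    rw [evZ_eq, ev_sum e p q r h, hoff, Finset.mul_sum, ← Finset.sum_add_distrib]
    push_cast
    refine Finset.sum_congr rfl fun k _ => ?_
    rw [Finset.mul_sum, ← Finset.sum_add_distrib, Finset.sum_mul]
    refine Finset.sum_congr rfl fun j _ => ?_
    rw [Finset.mul_sum, ← Finset.sum_add_distrib, Finset.sum_mul, Finset.sum_mul]
    refine Finset.sum_congr rfl fun i _ => ?_
    rw [Int.toNat_of_nonneg (hc i j k)]
    have z0 : zp w p q 0 = 2 ^ w := by simp [zp]
    have z1 : zp w p q 1 = 2 ^ (w * (p+1)) := by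
      have : zp w p q 1 = Int.ofNat (2 ^ (w * (p+1))) := rfl
      rw [this]; simp
    have z2 : zp w p q 2 = 2 ^ (w * (p+1) * (q+1)) := by
      have : zp w p q 2 = Int.ofNat (2 ^ (w * (p+1) * (q+1))) := rfl
      rw [this]; simp
    rw [z0, z1, z2]
    simp only [← pow_mul, mul_assoc]
    ring
  rw [VV, e1, Int.toNat_natCast]

lemma sum3 (a b c : ℕ) (f : ℕ → ℕ → ℕ → ℝ) : ∑ i ∈ Finset.range a, ∑ j ∈ Finset.range b, ∑ k ∈ Finset.range c, f i j k =
    ∑ k ∈ Finset.range c, ∑ j ∈ Finset.range b, ∑ i ∈ Finset.range a, f i j k := by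
  rw [Finset.sum_comm, Finset.sum_congr rfl (fun j _ => Finset.sum_comm), Finset.sum_comm]

set_option maxHeartbeats 1000000 in
theorem root_sound (w sh M p q r : ℕ) (e : Ex) (hw : 0 < w) (hp : p < 64) (hq : q < 64) (hr : r < 64)
    (h : dg e = some (p, q, r)) (hn : nb e < 2 ^ (w-1)) (hok : rootOk w sh M p q r (VV w p q r e) = true) :
    Inv (rootN w sh M p q r (VV w p q r e)) ∧ ∀ a : Fin 3 → ℝ, (∀ i, 0 ≤ a i) → (∀ i, a i ≤ 1) →
      tr ⟨p+1, q+1, r+1⟩ (rootN w sh M p q r (VV w p q r e)) (a 0) (a 1) (a 2) ≤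
        M + ev a (fun i => 1 - a i) e / 2 ^ sh := by
  have hb : ∀ i j k, |cf e i j k| < 2 ^ (w-1) := fun i j k => by
    have h1 := coeff_le e (mon i j k)
    have h2 : ((nb e : ℕ) : ℤ) < 2 ^ (w-1) := by exact_mod_cast hn
    exact lt_of_le_of_lt h1 h2
  have hww : (2:ℤ) ^ w = 2 * 2 ^ (w-1) := by
    rw [← pow_succ', Nat.sub_add_cancel hw]
  have hd : ∀ i j k, (cf e i j k + 2 ^ (w-1)).toNat < 2 ^ w := fun i j k => by
    have := abs_lt.1 (hb i j k)
    zify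
    rw [Int.toNat_of_nonneg (by linarith), hww]; linarith
  have hV := VV_eq w p q r hw e h hn
  obtain ⟨i1, i2⟩ := rootN_spec w sh M p q r hp hq hr _ hd
  rw [← hV] at i1 i2
  refine ⟨i1, fun a h0 h1 => ?_⟩
  have hnf : ∀ i ≤ p, ∀ j ≤ q, ∀ k ≤ r, ((fld 64 (rootN w sh M p q r (VV w p q r e)) (i + (p+1) * j + (p+1) * (q+1) * k) : ℕ) : ℝ) ≤
      M + ((cf e i j k : ℝ) / ((p.choose i * (q.choose j * r.choose k) : ℕ) : ℝ)) / 2 ^ sh := by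
    intro i hi j hj k hk
    obtain ⟨a1, a2⟩ := i2 k hk j hj i hi
    rw [a1]
    have hB : 0 < p.choose i * (q.choose j * r.choose k) :=
      Nat.mul_pos (Nat.choose_pos hi) (Nat.mul_pos (Nat.choose_pos hj) (Nat.choose_pos hk))
    refine (nf_le w sh M _ _ hB (a2 hok)).trans (le_of_eq ?_)
    have : (((cf e i j k + 2 ^ (w-1)).toNat : ℕ) : ℝ) = (cf e i j k : ℝ) + 2 ^ (w-1) := by
      have := abs_lt.1 (hb i j k)
      have h5 := Int.toNat_of_nonneg (a := cf e i j k + 2 ^ (w-1)) (by linarith)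
      have h6 : (((cf e i j k + 2 ^ (w-1)).toNat : ℤ) : ℝ) = ((cf e i j k + 2 ^ (w-1) : ℤ) : ℝ) := by rw [h5]
      push_cast at h6 ⊢
      exact h6
    rw [this]; ring
  have t1 : tr ⟨p+1, q+1, r+1⟩ (rootN w sh M p q r (VV w p q r e)) (a 0) (a 1) (a 2) ≤
      bez p (a 0) (fun i => bez q (a 1) (fun j => bez r (a 2) (fun k =>
        M + ((cf e i j k : ℝ) / ((p.choose i * (q.choose j * r.choose k) : ℕ) : ℝ)) / 2 ^ sh))) := by
    rw [tr]
    simp only [Nat.add_sub_cancel]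
    refine bez_mono _ _ _ _ (h0 _) (h1 _) fun i hi => bez_mono _ _ _ _ (h0 _) (h1 _) fun j hj =>
      bez_mono _ _ _ _ (h0 _) (h1 _) fun k hk => hnf i hi j hj k hk
  refine t1.trans (le_of_eq ?_)
  clear hnf t1 i1 i2 hV hok hd
  simp only [bez_add, bez_const]
  congr 1
  rw [hom_sum e p q r h a, ← sum3, Finset.sum_div]
  simp only [bez_sum]
  refine Finset.sum_congr rfl fun i hi => ?_
  rw [Finset.sum_div, Finset.mul_sum]
  refine Finset.sum_congr rfl fun j hj => ?_
  rw [Finset.sum_div, Finset.mul_sum, Finset.mul_sum]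
  refine Finset.sum_congr rfl fun k hk => ?_
  rw [Finset.mem_range] at hi hj hk
  have c0 : (p.choose i : ℝ) ≠ 0 := by exact_mod_cast (Nat.choose_pos (by omega)).ne'
  have c1 : (q.choose j : ℝ) ≠ 0 := by exact_mod_cast (Nat.choose_pos (by omega)).ne'
  have c2 : (r.choose k : ℝ) ≠ 0 := by exact_mod_cast (Nat.choose_pos (by omega)).ne'
  push_cast
  field_simp
end RootS
end Kiss

set_option linter.unusedVariables false
namespace Kiss
section Bld

def sub (σ τ : Fin 3 → Ex) : Ex → Ex
  | .k z => .k z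
  | .a i => σ i
  | .b i => τ i
  | .add x y => .add (sub σ τ x) (sub σ τ y)
  | .mul x y => .mul (sub σ τ x) (sub σ τ y)

def pw (x : Ex) : ℕ → Ex
  | 0 => .k 1
  | 1 => x
  | (n+2) => .mul (pw x (n+1)) x

def sm : List Ex → Ex
  | [] => .k 0
  | [x] => x
  | x :: y :: l => .add x (sm (y :: l))

/-- `c_k * geg n s w k` with `S = λ s`, `W = λ² w`, `c_k = λ^k ∏ (j + n - 2)` -/
def gx (n : ℕ) (S W : Ex) : ℕ → Ex
  | 0 => .k 1
  | 1 => .mul (.k (Int.ofNat (Nat.sub n 2))) S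
  | (k+2) => .add (.mul (.mul (.k (Int.ofNat (Nat.add (Nat.mul 2 k) n))) S) (gx n S W (k+1)))
      (.mul (.mul (.k (Int.negOfNat (Nat.mul (Nat.add k 1) (Nat.sub (Nat.add k n) 2)))) W) (gx n S W k))

def hx (A B : Ex) : List ℤ → Ex → Ex → Ex
  | [], acc, _ => acc
  | c :: l, acc, Bp => hx A B l (.add (.mul acc A) (.mul (.k c) Bp)) (.mul Bp B)

def qx (A B : Ex) (r : ℕ) : List ℤ → Ex
  | [] => .k 0
  | c :: l => hx A B l (.mul (.k c) (pw B r)) (pw B (Nat.add r 1))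

def UU (i : Fin 3) : Ex := .add (.a i) (.mul (.k (-2)) (.b i))
def OO (i : Fin 3) : Ex := .add (.a i) (.b i)
def w4 (i : Fin 3) : Ex := .add (.mul (.k 4) (.mul (OO i) (OO i))) (.mul (.k (-1)) (.mul (UU i) (UU i)))
/-- here `a 2 = T`, `b 2 = O_t` -/
def SS : Ex := .add (.mul (.k 2) (.mul (.a 2) (.mul (OO 0) (OO 1)))) (.mul (.k (-1)) (.mul (.mul (UU 0) (UU 1)) (.b 2)))
def WW : Ex := .mul (.mul (w4 0) (w4 1)) (.mul (.b 2) (.b 2))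

def rowsx : ℕ → List (List ℤ) → List Ex
  | _, [] => []
  | r, l :: ls => .mul (qx (.a 0) (.b 0) r l) (qx (.a 1) (.b 1) r l) :: rowsx (Nat.add r 1) ls

def blkx (d : ℕ) : ℕ → List (ℕ × List (List ℤ)) → List Ex
  | _, [] => []
  | k, (m, rows) :: bs => .mul (.mul (.k (Int.ofNat m)) (gx 18 SS WW k)) (.mul (sm (rowsx 0 rows)) (pw (.b 2) (Nat.sub d k))) ::
      blkx d (Nat.add k 1) bs

def tri (v : Ex) (w : Ex) (z : Ex) (i : Fin 3) : Ex := bif Nat.beq i.1 0 then v else bif Nat.beq i.1 1 then w else z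

def Gsub (G : Ex) (i j l : Fin 3) : Ex := sub (tri (.a i) (.a j) (UU l)) (tri (.b i) (.b j) (OO l)) G

def Fx (d : ℕ) (G : Ex) (h : List ℤ) : Ex :=
  .add (sm [.mul (qx (.a 0) (.b 0) 0 h) (pw (.mul (OO 1) (OO 2)) d), .mul (qx (.a 1) (.b 1) 0 h) (pw (.mul (OO 0) (OO 2)) d),
      .mul (qx (.a 2) (.b 2) 0 h) (pw (.mul (OO 0) (OO 1)) d)])
    (.mul (.k (-1)) (sm [Gsub G 0 1 2, Gsub G 0 2 1, Gsub G 1 2 0]))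

/-- minus 4 times the determinant -/
def Dx : Ex :=
  .add (sm [.mul (.mul (UU 0) (UU 0)) (.mul (pw (OO 1) 2) (pw (OO 2) 2)), .mul (.mul (UU 1) (UU 1)) (.mul (pw (OO 0) 2) (pw (OO 2) 2)),
    .mul (.mul (UU 2) (UU 2)) (.mul (pw (OO 0) 2) (pw (OO 1) 2))])
  (.mul (.k (-1)) (.add (.mul (.k 4) (.mul (pw (OO 0) 2) (.mul (pw (OO 1) 2) (pw (OO 2) 2)))) 
     (.mul (.mul (UU 0) (OO 0)) (.mul (.mul (UU 1) (OO 1)) (.mul (UU 2) (OO 2))))))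
end Bld
end Kiss

set_option linter.unusedVariables false
set_option linter.unusedSimpArgs false
namespace Kiss
section Real8

lemma ev_sm (A B : Fin 3 → ℝ) : ∀ l, Ex.ev A B (sm l) = (l.map (Ex.ev A B)).sum
  | [] => by simp [sm, Ex.ev]
  | [x] => by simp [sm]
  | x :: y :: l => by rw [sm, Ex.ev, ev_sm A B (y :: l)]; simp

lemma ev_pw (A B : Fin 3 → ℝ) (x : Ex) : ∀ n, Ex.ev A B (pw x n) = Ex.ev A B x ^ n
  | 0 => by simp [pw, Ex.ev]
  | 1 => by simp [pw]
  | (n+2) => by rw [pw, Ex.ev, ev_pw A B x (n+1), pow_succ _ (n+1)]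

lemma ev_sub (A B : Fin 3 → ℝ) (σ τ : Fin 3 → Ex) : ∀ e, Ex.ev A B (sub σ τ e) = Ex.ev (fun i => Ex.ev A B (σ i)) (fun i => Ex.ev A B (τ i)) e
  | .k z => rfl
  | .a i => rfl
  | .b i => rfl
  | .add x y => by rw [sub, Ex.ev, Ex.ev, ev_sub A B σ τ x, ev_sub A B σ τ y]
  | .mul x y => by rw [sub, Ex.ev, Ex.ev, ev_sub A B σ τ x, ev_sub A B σ τ y]

def cc (n : ℕ) (lam : ℝ) : ℕ → ℝ
  | 0 => 1
  | (k+1) => lam * (k + n - 2) * cc n lam k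

lemma cc_nonneg (n : ℕ) (hn : 2 ≤ n) (lam : ℝ) (h : 0 ≤ lam) : ∀ k, 0 ≤ cc n lam k
  | 0 => by simp [cc]
  | (k+1) => by
    rw [cc]
    have : (2:ℝ) ≤ n := by exact_mod_cast hn
    have h2 : (0:ℝ) ≤ k := by positivity
    exact mul_nonneg (mul_nonneg h (by linarith)) (cc_nonneg n hn lam h k)

lemma ev_gx (A B : Fin 3 → ℝ) (n : ℕ) (hn : 3 ≤ n) (S W : Ex) (lam s w : ℝ) (hS : Ex.ev A B S = lam * s) (hW : Ex.ev A B W = lam ^ 2 * w) :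
    ∀ k, Ex.ev A B (gx n S W k) = cc n lam k * geg n s w k
  | 0 => by simp [gx, Ex.ev, cc, geg]
  | 1 => by
    have : ((n - 2 : ℕ) : ℝ) = n - 2 := by rw [Nat.cast_sub (by omega)]; norm_num
    simp only [gx, Ex.ev, cc, geg, hS]
    show ((((n - 2 : ℕ) : ℤ)) : ℝ) * _ = _
    rw [Int.cast_natCast, this]; push_cast; ring
  | (k+2) => by
    have h1 : ((k + n - 2 : ℕ) : ℝ) = k + n - 2 := by rw [Nat.cast_sub (by omega)]; push_cast; ring
    have h3 : (3:ℝ) ≤ n := by exact_mod_cast hn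
    have h4 : (0:ℝ) ≤ k := by positivity
    have h2 : (k:ℝ) + n - 1 ≠ 0 := by linarith
    have e1 : ((Int.ofNat (Nat.add (Nat.mul 2 k) n) : ℤ) : ℝ) = 2 * k + n := by
      show (((2 * k + n : ℕ) : ℤ) : ℝ) = _
      push_cast; ring
    have e2 : ((Int.negOfNat (Nat.mul (Nat.add k 1) (Nat.sub (Nat.add k n) 2)) : ℤ) : ℝ) = - ((k + 1) * (k + n - 2)) := by
      rw [Int.negOfNat_eq]
      show ((-(((k + 1) * (k + n - 2) : ℕ) : ℤ) : ℤ) : ℝ) = _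
      rw [← h1]; push_cast; ring
    rw [gx]
    simp only [Ex.ev]
    rw [ev_gx A B n hn S W lam s w hS hW (k+1), ev_gx A B n hn S W lam s w hS hW k, e1, e2, hS, hW, geg,
      show cc n lam (k+2) = lam * ((k+1 : ℕ) + n - 2) * cc n lam (k+1) from rfl, show cc n lam (k+1) = lam * (k + n - 2) * cc n lam k from rfl]
    have h5 : ((k+1 : ℕ) : ℝ) + n - 2 = k + n - 1 := by push_cast; ring
    rw [h5]
    push_cast
    field_simp
    ring

/-- pure evaluation of a row -/
def qr (r : ℕ) (l : List ℤ) (x y : ℝ) : ℝ := Ex.ev (fun _ => x) (fun _ => y) (qx (.a 0) (.b 0) r l)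

lemma ev_hx (A B A' B' : Fin 3 → ℝ) (X Y X' Y' : Ex) (h1 : Ex.ev A B X = Ex.ev A' B' X') (h2 : Ex.ev A B Y = Ex.ev A' B' Y') :
    ∀ l acc acc' P P', Ex.ev A B acc = Ex.ev A' B' acc' → Ex.ev A B P = Ex.ev A' B' P' →
    Ex.ev A B (hx X Y l acc P) = Ex.ev A' B' (hx X' Y' l acc' P')
  | [], _, _, _, _, ha, _ => ha
  | c :: l, acc, acc', P, P', ha, hP => by
    rw [hx, hx]
    apply ev_hx A B A' B' X Y X' Y' h1 h2
    · simp only [Ex.ev, ha, hP, h1, h2]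
    · simp only [Ex.ev, ha, hP, h1, h2]

lemma ev_qx (A B : Fin 3 → ℝ) (X Y : Ex) (r : ℕ) : ∀ l, Ex.ev A B (qx X Y r l) = qr r l (Ex.ev A B X) (Ex.ev A B Y)
  | [] => by simp [qr, qx, Ex.ev]
  | c :: l => by
    rw [qr, qx, qx]
    apply ev_hx
    · rfl
    · rfl
    · simp only [Ex.ev, ev_pw]
    · simp only [Ex.ev, ev_pw]

noncomputable def AU (u : ℝ) : ℝ := 2 * (u + 1) / 3
noncomputable def gA (u v t : ℝ) (i : Fin 3) : ℝ := if i = 0 then AU u else if i = 1 then AU v else 2 * t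
noncomputable def gB (u v t : ℝ) (i : Fin 3) : ℝ := if i = 0 then 1 - AU u else if i = 1 then 1 - AU v else 1

lemma gA0 (u v t : ℝ) : gA u v t 0 = AU u := rfl
lemma gA1 (u v t : ℝ) : gA u v t 1 = AU v := rfl
lemma gA2 (u v t : ℝ) : gA u v t 2 = 2 * t := rfl
lemma gB0 (u v t : ℝ) : gB u v t 0 = 1 - AU u := rfl
lemma gB1 (u v t : ℝ) : gB u v t 1 = 1 - AU v := rfl
lemma gB2 (u v t : ℝ) : gB u v t 2 = 1 := rfl

lemma ev_SS (u v t : ℝ) : Ex.ev (gA u v t) (gB u v t) SS = 4 * (t - u * v) := by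
  simp only [SS, UU, OO, Ex.ev, gA0, gA1, gA2, gB0, gB1, gB2, AU]; push_cast; ring
lemma ev_WW (u v t : ℝ) : Ex.ev (gA u v t) (gB u v t) WW = 4 ^ 2 * ((1 - u ^ 2) * (1 - v ^ 2)) := by
  simp only [WW, w4, UU, OO, Ex.ev, gA0, gA1, gA2, gB0, gB1, gB2, AU]; push_cast; ring

noncomputable def rs (u v : ℝ) : ℕ → List (List ℤ) → ℝ
  | _, [] => 0
  | r, l :: ls => qr r l (AU u) (1 - AU u) * qr r l (AU v) (1 - AU v) + rs u v (r+1) ls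

lemma ev_rows (u v t : ℝ) : ∀ r ls, ((rowsx r ls).map (Ex.ev (gA u v t) (gB u v t))).sum = rs u v r ls
  | _, [] => rfl
  | r, l :: ls => by
    rw [rowsx, List.map_cons, List.sum_cons]
    show _ + ((rowsx (r+1) ls).map (Ex.ev (gA u v t) (gB u v t))).sum = _
    rw [ev_rows u v t (r+1) ls, rs, Ex.ev, ev_qx, ev_qx]; rfl

lemma rs_comm (u v : ℝ) : ∀ r ls, rs u v r ls = rs v u r ls
  | _, [] => rfl
  | r, l :: ls => by rw [rs, rs, rs_comm u v, mul_comm (qr _ _ _ _)]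

noncomputable def gs (u v t : ℝ) : ℕ → List (ℕ × List (List ℤ)) → ℝ
  | _, [] => 0
  | k, (m, rows) :: bs => (m * cc 18 4 k) * (geg 18 (t - u * v) ((1 - u ^ 2) * (1 - v ^ 2)) k * rs u v 0 rows) + gs u v t (k+1) bs

lemma ev_blk (u v t : ℝ) (d : ℕ) : ∀ k bs, ((blkx d k bs).map (Ex.ev (gA u v t) (gB u v t))).sum = gs u v t k bs
  | _, [] => rfl
  | k, (m, rows) :: bs => by
    rw [blkx, List.map_cons, List.sum_cons]
    show _ + ((blkx d (k+1) bs).map (Ex.ev (gA u v t) (gB u v t))).sum = _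
    rw [ev_blk u v t d (k+1) bs, gs]
    simp only [Ex.ev, ev_pw, ev_sm, ev_rows, gB2, one_pow, mul_one]
    rw [ev_gx _ _ 18 (by norm_num) SS WW 4 _ _ (ev_SS u v t) (ev_WW u v t)]
    have : ((Int.ofNat m : ℤ) : ℝ) = m := by simp
    rw [this]; ring

lemma gs_comm (u v t : ℝ) : ∀ k bs, gs u v t k bs = gs v u t k bs
  | _, [] => rfl
  | k, (m, rows) :: bs => by
    rw [gs, gs, gs_comm u v t (k+1), rs_comm u v, mul_comm u v, mul_comm (1 - u ^ 2)]

lemma rs_psd (x : EE) (hx : ‖x‖ = 1) (T : Finset EE) (hT : ∀ y ∈ T, ‖y‖ = 1) (k : ℕ) : ∀ r ls,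
    0 ≤ ∑ y ∈ T, ∑ z ∈ T, geg 18 (inner ℝ y z - inner ℝ x y * inner ℝ x z)
      ((1 - (inner ℝ x y) ^ 2) * (1 - (inner ℝ x z) ^ 2)) k * rs (inner ℝ x y) (inner ℝ x z) r ls
  | _, [] => by simp [rs]
  | r, l :: ls => by
    have h1 := three_point x hx T hT (fun y => qr r l (AU (inner ℝ x y)) (1 - AU (inner ℝ x y))) k
    have h2 := rs_psd x hx T hT k (r+1) ls
    simp only [rs, mul_add, Finset.sum_add_distrib]
    refine add_nonneg (h1.trans_eq ?_) h2
    refine Finset.sum_congr rfl fun y _ => Finset.sum_congr rfl fun z _ => ?_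
    ring

lemma gs_psd (x : EE) (hx : ‖x‖ = 1) (T : Finset EE) (hT : ∀ y ∈ T, ‖y‖ = 1) : ∀ k bs,
    0 ≤ ∑ y ∈ T, ∑ z ∈ T, gs (inner ℝ x y) (inner ℝ x z) (inner ℝ y z) k bs
  | _, [] => by simp [gs]
  | k, (m, rows) :: bs => by
    have h1 := rs_psd x hx T hT k 0 rows
    have h2 := gs_psd x hx T hT (k+1) bs
    simp only [gs, Finset.sum_add_distrib, ← Finset.mul_sum]
    refine add_nonneg (mul_nonneg (mul_nonneg (by positivity) (cc_nonneg 18 (by norm_num) 4 (by norm_num) k)) h1) h2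

/-- two point part -/
def Ax (D : ℕ) : ℕ → List ℕ → List Ex
  | _, [] => []
  | k, m :: l => .mul (.mul (.k (Int.ofNat m)) (gx 19 (UU 0) (.mul (.k 4) (.mul (OO 0) (OO 0))) k)) (pw (OO 0) (Nat.sub D k)) :: Ax D (Nat.add k 1) l

noncomputable def as (u : ℝ) : ℕ → List ℕ → ℝ
  | _, [] => 0
  | k, m :: l => (m * cc 19 2 k) * geg 19 u 1 k + as u (k+1) l

lemma ev_UU (A B : Fin 3 → ℝ) (i : Fin 3) (u : ℝ) (h : A i = AU u) (h' : B i = 1 - AU u) : Ex.ev A B (UU i) = 2 * u := by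
  simp only [UU, Ex.ev, h, h', AU]; push_cast; ring
lemma ev_OO (A B : Fin 3 → ℝ) (i : Fin 3) (u : ℝ) (h : A i = AU u) (h' : B i = 1 - AU u) : Ex.ev A B (OO i) = 1 := by
  simp only [OO, Ex.ev, h, h', AU]; ring

lemma ev_Ax (A B : Fin 3 → ℝ) (u : ℝ) (h : A 0 = AU u) (h' : B 0 = 1 - AU u) (D : ℕ) : ∀ k l,
    ((Ax D k l).map (Ex.ev A B)).sum = as u k l
  | _, [] => rfl
  | k, m :: l => by
    rw [Ax, List.map_cons, List.sum_cons]
    show _ + ((Ax D (k+1) l).map (Ex.ev A B)).sum = _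
    rw [ev_Ax A B u h h' D (k+1) l, as]
    have h1 := ev_UU A B 0 u h h'
    have h2 := ev_OO A B 0 u h h'
    simp only [Ex.ev, ev_pw, h2, one_pow, mul_one]
    rw [ev_gx A B 19 (by norm_num) _ _ 2 u 1 h1 (by simp only [Ex.ev, h2]; norm_num)]
    have : ((Int.ofNat m : ℤ) : ℝ) = m := by simp
    rw [this]; ring

lemma as_psd (T : Finset EE) (hT : ∀ y ∈ T, ‖y‖ = 1) : ∀ k l,
    0 ≤ ∑ y ∈ T, ∑ z ∈ T, as (inner ℝ y z) k l
  | _, [] => by simp [as]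
  | k, m :: l => by
    have h2 := as_psd T hT (k+1) l
    simp only [as, Finset.sum_add_distrib, ← Finset.mul_sum]
    refine add_nonneg (mul_nonneg (mul_nonneg (by positivity) (cc_nonneg 19 (by norm_num) 2 (by norm_num) k)) (two_point T hT k)) h2

lemma ev_Gsub (A B : Fin 3 → ℝ) (G : Ex) (i j l : Fin 3) (u v t : ℝ) (hi : A i = AU u) (hi' : B i = 1 - AU u)
    (hj : A j = AU v) (hj' : B j = 1 - AU v) (hl : A l = AU t) (hl' : B l = 1 - AU t) :
    Ex.ev A B (Gsub G i j l) = Ex.ev (gA u v t) (gB u v t) G := by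
  rw [Gsub, ev_sub]
  congr 1
  · funext m
    fin_cases m
    · exact hi
    · exact hj
    · exact ev_UU A B l t hl hl'
  · funext m
    fin_cases m
    · exact hi'
    · exact hj'
    · exact ev_OO A B l t hl hl'

noncomputable def a3 (u v t : ℝ) (i : Fin 3) : ℝ := AU (if i = 0 then u else if i = 1 then v else t)

def Gd (d : ℕ) (dat : List (ℕ × List (List ℤ))) : Ex := sm (blkx d 0 dat)
noncomputable def hr (h : List ℤ) (u : ℝ) : ℝ := qr 0 h (AU u) (1 - AU u)

lemma ev_Gd (d : ℕ) (dat) (u v t : ℝ) : Ex.ev (gA u v t) (gB u v t) (Gd d dat) = gs u v t 0 dat := by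
  rw [Gd, ev_sm, ev_blk]

lemma ev_Fx (d : ℕ) (dat h) (u v t : ℝ) : Ex.ev (a3 u v t) (fun i => 1 - a3 u v t i) (Fx d (Gd d dat) h) =
    hr h u + hr h v + hr h t - (gs u v t 0 dat + gs u t v 0 dat + gs v t u 0 dat) := by
  have o0 := ev_OO (a3 u v t) (fun i => 1 - a3 u v t i) 0 u rfl rfl
  have o1 := ev_OO (a3 u v t) (fun i => 1 - a3 u v t i) 1 v rfl rfl
  have o2 := ev_OO (a3 u v t) (fun i => 1 - a3 u v t i) 2 t rfl rfl
  simp only [Fx, Ex.ev, ev_sm, List.map_cons, List.map_nil, List.sum_cons, List.sum_nil, ev_pw, o0, o1, o2, ev_qx]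
  rw [ev_Gsub _ _ _ 0 1 2 u v t rfl rfl rfl rfl rfl rfl, ev_Gsub _ _ _ 0 2 1 u t v rfl rfl rfl rfl rfl rfl,
    ev_Gsub _ _ _ 1 2 0 v t u rfl rfl rfl rfl rfl rfl, ev_Gd, ev_Gd, ev_Gd]
  have a0 : a3 u v t 0 = AU u := rfl
  have a1 : a3 u v t 1 = AU v := rfl
  have a2 : a3 u v t 2 = AU t := rfl
  simp only [a0, a1, a2, hr]
  push_cast; ring

lemma ev_Dx (u v t : ℝ) : Ex.ev (a3 u v t) (fun i => 1 - a3 u v t i) Dx = - 4 * (1 + 2 * u * v * t - u ^ 2 - v ^ 2 - t ^ 2) := by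
  have o0 := ev_OO (a3 u v t) (fun i => 1 - a3 u v t i) 0 u rfl rfl
  have o1 := ev_OO (a3 u v t) (fun i => 1 - a3 u v t i) 1 v rfl rfl
  have o2 := ev_OO (a3 u v t) (fun i => 1 - a3 u v t i) 2 t rfl rfl
  have u0 := ev_UU (a3 u v t) (fun i => 1 - a3 u v t i) 0 u rfl rfl
  have u1 := ev_UU (a3 u v t) (fun i => 1 - a3 u v t i) 1 v rfl rfl
  have u2 := ev_UU (a3 u v t) (fun i => 1 - a3 u v t i) 2 t rfl rfl
  simp only [Dx, Ex.ev, ev_sm, List.map_cons, List.map_nil, List.sum_cons, List.sum_nil, ev_pw, o0, o1, o2, u0, u1, u2]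
  push_cast; ring

/-- pair expression: `-Sc - A - G(u,u,1) - (N-2) h`, degree `2d` -/
def Px (d D N Sc : ℕ) (G : Ex) (h : List ℤ) (al : List ℕ) : Ex :=
  .add (.mul (.k (Int.negOfNat Sc)) (pw (OO 0) (Nat.add d d)))
    (.mul (.k (-1)) (.add (.mul (sm (Ax D 0 al)) (pw (OO 0) (Nat.sub (Nat.add d d) D)))
      (.add (sub (tri (.a 0) (.a 0) (.k 2)) (tri (.b 0) (.b 0) (.k 1)) G)
        (.mul (.k (Int.ofNat (Nat.sub N 2))) (.mul (qx (.a 0) (.b 0) 0 h) (pw (OO 0) d))))))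

lemma ev_Px (d D N Sc : ℕ) (hN : 2 ≤ N) (dat h al) (u : ℝ) (A : Fin 3 → ℝ) (hA : A 0 = AU u) :
    Ex.ev A (fun i => 1 - A i) (Px d D N Sc (Gd d dat) h al) =
    - Sc - as u 0 al - gs u u 1 0 dat - ((N:ℝ) - 2) * hr h u := by
  have hB : (fun i => 1 - A i) 0 = 1 - AU u := by simp only [hA]
  have o0 := ev_OO A (fun i => 1 - A i) 0 u hA hB
  have e : Ex.ev A (fun i => 1 - A i) (sub (tri (.a 0) (.a 0) (.k 2)) (tri (.b 0) (.b 0) (.k 1)) (Gd d dat)) = gs u u 1 0 dat := by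
    rw [ev_sub, ← ev_Gd d]
    congr 1
    · funext m
      fin_cases m
      · exact hA
      · exact hA
      · show (((2:ℤ)):ℝ) = 2 * 1
        norm_num
    · funext m
      fin_cases m
      · exact hB
      · exact hB
      · show (((1:ℤ)):ℝ) = 1
        norm_num
  simp only [Px, Ex.ev, ev_pw, o0, ev_qx, e, one_pow, mul_one, hA]
  rw [ev_sm, ev_Ax A _ u hA hB D 0 al]
  have e1 : ((Int.ofNat (Nat.sub N 2) : ℤ) : ℝ) = (N:ℝ) - 2 := by
    show (((N - 2 : ℕ) : ℤ) : ℝ) = _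
    rw [Int.cast_natCast, Nat.cast_sub hN]; norm_num
  have e2 : ((Int.negOfNat Sc : ℤ) : ℝ) = - Sc := by rw [Int.negOfNat_eq]; simp
  rw [e1, e2, hr]; push_cast; ring
end Real8
end Kiss

set_option linter.unusedVariables false
namespace Kiss
section Asm

def Dy : Ex := .mul (.k (2 ^ 50)) Dx
def XD : ℕ := rootN 64 0 (2 ^ 58) 2 2 2 (VV 64 2 2 2 Dy)

lemma au_bounds {u : ℝ} (h : -1 ≤ u) (h' : u ≤ 1/2) : 0 ≤ AU u ∧ AU u ≤ 1 := by
  unfold AU; constructor <;> linarith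

/-- triple inequality for ordered arguments -/
lemma tri_ord (sh M Md X Y : ℕ) (dat h) (hX : ∀ a : Fin 3 → ℝ, (∀ i, 0 ≤ a i) → (∀ i, a i ≤ 1) →
      tr ⟨17,17,17⟩ X (a 0) (a 1) (a 2) ≤ M + Ex.ev a (fun i => 1 - a i) (Fx 16 (Gd 16 dat) h) / 2 ^ sh)
    (hY : ∀ a : Fin 3 → ℝ, (∀ i, 0 ≤ a i) → (∀ i, a i ≤ 1) →
      tr ⟨3,3,3⟩ Y (a 0) (a 1) (a 2) ≤ Md + Ex.ev a (fun i => 1 - a i) Dy / 2 ^ 0)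
    (hcl : Cl ⟨17,17,17⟩ ⟨3,3,3⟩ M Md ⟨X, Y, 0, 0, 0, 0, 0, 0⟩)
    (u v t : ℝ) (hu : -1 ≤ u) (huv : u ≤ v) (hvt : v ≤ t) (ht : t ≤ 1/2) (hdet : 0 ≤ 1 + 2 * u * v * t - u ^ 2 - v ^ 2 - t ^ 2) :
    gs u v t 0 dat + gs u t v 0 dat + gs v t u 0 dat ≤ hr h u + hr h v + hr h t := by
  have bu := au_bounds hu (by linarith)
  have bv := au_bounds (hu.trans huv) (by linarith)
  have bt := au_bounds ((hu.trans huv).trans hvt) ht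
  have b0 : ∀ i, 0 ≤ a3 u v t i := fun i => by fin_cases i; exacts [bu.1, bv.1, bt.1]
  have b1 : ∀ i, a3 u v t i ≤ 1 := fun i => by fin_cases i; exacts [bu.2, bv.2, bt.2]
  have hF := hX (a3 u v t) b0 b1
  have hD := hY (a3 u v t) b0 b1
  rw [ev_Fx] at hF
  have eD : Ex.ev (a3 u v t) (fun i => 1 - a3 u v t i) Dy ≤ 0 := by
    rw [Dy, Ex.ev, ev_Dx, Ex.ev]; push_cast
    nlinarith
  have h1 := hcl (AU u) (AU v) (AU t) bu.1 bu.2 bv.1 bv.2 bt.1 bt.2 (Or.inr (by norm_num)) (Or.inr (by norm_num)) (Or.inr (by norm_num))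
    (by simp only [AU]; push_cast; linarith) (by simp only [AU]; push_cast; linarith)
    (hD.trans (by rw [pow_zero, div_one]; linarith))
  have h2 := h1.trans hF
  have h3 : (0:ℝ) ≤ (hr h u + hr h v + hr h t - (gs u v t 0 dat + gs u t v 0 dat + gs v t u 0 dat)) / 2 ^ sh := by linarith
  have h4 : (0:ℝ) < 2 ^ sh := by positivity
  have h5 := mul_nonneg h3 h4.le
  rw [div_mul_cancel₀ _ h4.ne'] at h5
  linarith

lemma tri_all (dat h) (H : ∀ u v t : ℝ, -1 ≤ u → u ≤ v → v ≤ t → t ≤ 1/2 → 0 ≤ 1 + 2 * u * v * t - u ^ 2 - v ^ 2 - t ^ 2 →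
    gs u v t 0 dat + gs u t v 0 dat + gs v t u 0 dat ≤ hr h u + hr h v + hr h t)
    (u v t : ℝ) (hu : -1 ≤ u) (hu' : u ≤ 1/2) (hv : -1 ≤ v) (hv' : v ≤ 1/2) (ht : -1 ≤ t) (ht' : t ≤ 1/2)
    (hdet : 0 ≤ 1 + 2 * u * v * t - u ^ 2 - v ^ 2 - t ^ 2) :
    gs u v t 0 dat + gs u t v 0 dat + gs v t u 0 dat ≤ hr h u + hr h v + hr h t := by
  have c1 := gs_comm u v t 0 dat
  have c2 := gs_comm u t v 0 dat
  have c3 := gs_comm v t u 0 dat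
  rcases le_total u v with a | a <;> rcases le_total v t with b | b <;> rcases le_total u t with c | c
  · linarith [H u v t hu a b ht' hdet]
  · linarith [H u v t hu a b ht' hdet]
  · linarith [H u t v hu c b hv' (by nlinarith)]
  · linarith [H t u v ht c a hv' (by nlinarith)]
  · linarith [H v u t hv a c ht' (by nlinarith)]
  · linarith [H v t u hv b c hu' (by nlinarith)]
  · linarith [H t v u ht b a hu' (by nlinarith)]
  · linarith [H t v u ht b a hu' (by nlinarith)]

lemma pair_all (sh M d D N Sc X : ℕ) (hN : 2 ≤ N) (dat h al) (hX : ∀ a : Fin 3 → ℝ, (∀ i, 0 ≤ a i) → (∀ i, a i ≤ 1) →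
      tr ⟨33,1,1⟩ X (a 0) (a 1) (a 2) ≤ M + Ex.ev a (fun i => 1 - a i) (Px d D N Sc (Gd d dat) h al) / 2 ^ sh)
    (hcl : Cl ⟨33,1,1⟩ ⟨1,1,1⟩ M 1 ⟨X, 0, 0, 0, 0, 0, 0, 0⟩)
    (u : ℝ) (hu : -1 ≤ u) (hu' : u ≤ 1/2) :
    as u 0 al + gs u u 1 0 dat + ((N:ℝ) - 2) * hr h u ≤ - Sc := by
  have bu := au_bounds hu hu'
  have hF := hX
    (fun i => if i = 0 then AU u else 1) (fun i => by split_ifs; exacts [bu.1, zero_le_one]) (fun i => by split_ifs; exacts [bu.2, le_rfl])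
  rw [ev_Px d D N Sc hN dat h al u _ rfl] at hF
  have e : tr ⟨1,1,1⟩ 0 (AU u) 1 1 ≤ ((1:ℕ):ℝ) := by
    simp [tr, bez, fld]
  have h1 := hcl (AU u) 1 1 bu.1 bu.2 (by norm_num) le_rfl (by norm_num) le_rfl (Or.inr (by norm_num)) (Or.inr (by norm_num)) (Or.inr (by norm_num))
    (by push_cast; linarith [bu.2]) (by push_cast; linarith) e
  have h2 := h1.trans hF
  have h3 : (0:ℝ) ≤ (- Sc - as u 0 al - gs u u 1 0 dat - ((N:ℝ) - 2) * hr h u) / 2 ^ sh := by linarith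
  have h4 : (0:ℝ) < 2 ^ sh := by positivity
  have h5 := mul_nonneg h3 h4.le
  rw [div_mul_cancel₀ _ h4.ne'] at h5
  linarith

def evq (x y : ℤ) : Ex → ℤ
  | .k z => z
  | .a _ => x
  | .b _ => y
  | .add e f => Int.add (evq x y e) (evq x y f)
  | .mul e f => Int.mul (evq x y e) (evq x y f)

lemma evq_eq (x y : ℤ) : ∀ e, evq x y e = Ex.ev (fun _ => x) (fun _ => y) e
  | .k z => by simp [evq, Ex.ev]
  | .a _ => rfl
  | .b _ => rfl
  | .add e f => by rw [evq, Ex.ev, evq_eq, evq_eq]; rfl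
  | .mul e f => by rw [evq, Ex.ev, evq_eq, evq_eq]; rfl

/-- value of the two-point part at one, integer version -/
lemma as_one (D al) (K : ℤ) (hd : Ex.dg (sm (Ax D 0 al)) = some (20, 0, 0))
    (h : evq (4:ℤ) (-1) (sm (Ax D 0 al)) = K) : (3:ℝ) ^ 20 * as 1 0 al = K := by
  have h1 := Ex.ev_hom (fun _ => (3:ℝ)) (fun _ => (4/3 : ℝ)) (fun _ => (1 - 4/3 : ℝ)) _ _ _ _ hd
  rw [ev_sm (fun _ => (4/3 : ℝ)), ev_Ax (fun _ => (4/3 : ℝ)) _ 1 (by norm_num [AU]) (by norm_num [AU])] at h1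
  have h2 : Ex.ev (fun _ => (4:ℤ)) (fun _ => -1) (sm (Ax D 0 al)) = K := (evq_eq _ _ _).symm.trans h
  have h3 := Ex.ev_map (Int.castRingHom ℝ) (fun _ => (4:ℤ)) (fun _ => -1) (sm (Ax D 0 al))
  rw [h2] at h3
  simp only [pow_zero, mul_one] at h1
  rw [← h1]
  have e1 : (fun _ : Fin 3 => (3:ℝ) * (4/3)) = fun i => (Int.castRingHom ℝ) ((fun _ => (4:ℤ)) i) := by funext; norm_num
  have e2 : (fun _ : Fin 3 => (3:ℝ) * (1 - 4/3)) = fun i => (Int.castRingHom ℝ) ((fun _ => (-1:ℤ)) i) := by funext; norm_num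
  rw [e1, e2, ← h3]; simp

theorem assemble (N Sc : ℕ) (hN : 2 ≤ N) (hSc : 0 < Sc) (dat h al)
    (htri : ∀ u v t : ℝ, -1 ≤ u → u ≤ 1/2 → -1 ≤ v → v ≤ 1/2 → -1 ≤ t → t ≤ 1/2 →
      0 ≤ 1 + 2 * u * v * t - u ^ 2 - v ^ 2 - t ^ 2 →
      gs u v t 0 dat + gs u t v 0 dat + gs v t u 0 dat ≤ hr h u + hr h v + hr h t)
    (hpair : ∀ u : ℝ, -1 ≤ u → u ≤ 1/2 → as u 0 al + gs u u 1 0 dat + ((N:ℝ) - 2) * hr h u ≤ - Sc)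
    (hA1 : as 1 0 al < Sc * (N - 1)) (S : Finset EE) (hnorm : ∀ x ∈ S, ‖x‖ = 1)
    (hdist : ∀ x ∈ S, ∀ y ∈ S, x ≠ y → 1 ≤ dist x y) : S.card < N := by
  by_contra hc
  obtain ⟨T, hT, hTc⟩ := Finset.exists_subset_card_eq (not_lt.1 hc)
  have hs : (0:ℝ) < Sc := by exact_mod_cast hSc
  refine count_bound N hN T hTc (fun x hx => hnorm x (hT hx)) (fun x hx y hy => hdist x (hT hx) y (hT hy))
    (fun u => as u 0 al / Sc) (fun u => hr h u / Sc) (fun u v t => gs u v t 0 dat / Sc) ?_ ?_ ?_ ?_ ?_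
  · intro T hT
    simp only [← Finset.sum_div]
    exact div_nonneg (as_psd T hT 0 al) hs.le
  · intro x hx T hT
    simp only [← Finset.sum_div]
    exact div_nonneg (gs_psd x hx T hT 0 dat) hs.le
  · intro u v t h1 h2 h3 h4 h5 h6 h7
    have := htri u v t h1 h2 h3 h4 h5 h6 h7
    rw [← add_div, ← add_div, ← add_div, ← add_div]
    gcongr
  · intro u h1 h2
    have := hpair u h1 h2
    have e : as u 0 al / Sc + gs u u 1 0 dat / Sc + ((N:ℝ) - 2) * (hr h u / Sc) = (as u 0 al + gs u u 1 0 dat + ((N:ℝ) - 2) * hr h u) / Sc := by ring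
    show as u 0 al / Sc + gs u u 1 0 dat / Sc + ((N:ℝ) - 2) * (hr h u / Sc) ≤ -1
    rw [e, div_le_iff₀ hs]; linarith
  · show as 1 0 al / Sc < _
    rw [div_lt_iff₀ hs]; linarith
end Asm
end Kiss

namespace Kiss
section Fin
set_option maxRecDepth 100000
set_option linter.style.longLine false

/-- the three-point certificate -/
def dat : List (ℕ × List (List ℤ)) := [(12437869075365888000, [[1922610557173979, -245055932250478649, 6641419920245188456, 7650575655795182489, -1947336544498842735869, 23447765741853191902677, -126203823541956608318295, 381309874296552610083197, -718386313195081847789357, 891842035954331885860328, -746625146218056064525366, 425645324079723061476446, -167549025247564912208202, 45579850390761766219406, -7908776583351157212856, 610026759878327841158, 13178727716290511296],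
    [170313891980757646, -15302889622738277235, 454567563917913018282, -6311592132449440997456, 48012885163402973371280, -218725687206581670763707, 626093282746583366931551, -1155682696876230386073236, 1396651262255591336885619, -1110239382885672765801609, 570018537286718230875761, -178822121678206269479316, 30971222807124750945167, -2439113257802023029676, 13261299818505804177, 9512120548461530810],
    [1677897027548598093, -93581039146216162062, 1779058767809069336121, -15954545297461328773989, 77312319480126343344338, -220754898968319535600331, 391762792976002766438521, -434088606554313695136575, 279304126395327825694733, -75518242681881553183507, -21175297073372327895625, 23874134039945497861731, -7466084013937587042224, 824423448101131993901, 11265828459131052030],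
    [2061198986936291743, -66167835030894881162, 825786549085824940168, -5408583465537339193865, 21193612414604499395365, -52504616057123008205637, 83055662850797451832399, -83517877294078874845086, 52929323075899231026401, -20571242347731355253677, 4491509320523509439428, -435198595523372920937, 15731685853241193541, -2749041600423124986],
    [32383316600452590902, -1059188850701559485511, 12139144206724607744807, -67285887849640217722163, 206329880169369737568863, -375109290138050405866193, 420744703312284439345670, -296419097382249818346695, 130470806866200547080826, -34476853894897206983138, 4996540426884207170178, -357318108717133046160, 11327295011083579955],
    [107578850875843680952, -1823525785512823223230, 11813237743566081969984, -39107359056962973386158, 74222292867058452298567, -85653311166179106592328, 61694567053213706840424, -27686666870875219241215, 7458491606776866315470, -1104965609657300769931, 81018563239076951510, -2702097784845922265],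
    [135459603942722379996, -1587965277995408350351, 7248152492099637188237, -17145750541829417096515, 23679799484896191843158, -20236691078777411659234, 10945225813082382897938, -3679185804940767103842, 707444347710456644873, -62746974544990619541, 856227335613131251],
    [276524970432805838663, -2061689035916715775399, 5549767077309810735767, -7239367663174196576699, 5190615649865969699324, -2084862035070976611288, 367145206172823214925, 18351082942586391278, -5898585798853329339, -1596534086152173187],
    [160460416516680338673, -1114369899159673606151, 2913643009688182137191, -3811353157054710871011, 2842320786688214784955, -1261512055767377393823, 309811209996882689492, -30316819500993333992, -491037160240456968],
    [313603974767209866149, -1325735169801623869717, 2128851368918873465441, -1781606160496651179055, 858638803070334776062, -225202836828475548396, 22688884125134749632, 592817659729951016],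
    [101809248657459139708, -290060460180171153248, 314385638713162086370, -172736169763136768009, 50235537093769386994, -5804409127520080118, -148030532879785096],
    [53617152421462830732, -99591405316297090913, 62843576527762890634, -18608443161192472580, 2232412891955527837, 67808006672682389],
    [26073098644684811968, -32896949314085027408, 13556411060555175533, -1736120895373231708, -214314787683399868],
    [7939647323769964374, -6575158137400996218, 1414279200631569919, -177990806546508534],
    [2367761990182806019, -1111449057884832135, -22413571495143309],
    [1226376410101691101, -499011585664597595],
    [4779832184223017]]),
  (194341704302592000, [[104263335887069986, -5454718314327223877, 112871447705049002423, -1571683526018551015760, 12017499934818590101071, -52438020121335924150393, 142243165166338301913781, -252730387662162384121914, 292981102541072565311728, -211273019962602096694365, 87564705153680313815025, -19207909510674289185784, 3667283222246169123942, -1026244406197019231730, 215527203370441078513, -30771645744124561546],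
    [6774682917128157298, -291195508615731127887, 4626884334211999813732, -39661218743331168051393, 202261989877312424556825, -645620733415191605642932, 1329196701999691253903452, -1802140788724328066052177, 1621311605930187133007489, -956488702786635211875035, 357007102174236530967594, -77994507822070964106362, 8405049901179637857200, -214480742254002885713, -21061790609730981702],
    [90506075207827710447, -2108942295254967793264, 20275442395119907336054, -110621710871299371786501, 374674380122987654451435, -818078501406581016935873, 1166056374734162111936823, -1091628341542108264801612, 666679735438147824872142, -253810872192923207069835, 54551576930493512431067, -5549917077129997429467, 79259079500900349555, 25391202479751791535],
    [573472493278864017061, -9869630280360462059581, 71061574283049370728412, -283297833537782458674753, 694968091984292688158346, -1097565821511886839291275, 1125518387888446979064887, -742232351132538296915575, 308525247012948078432594, -77741258469162676353085, 10911672508992569252611, -850376773328262032697, 32173858763118225163],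
    [2649262055053098805494, -32469553021125241087200, 165699995529605956172434, -472590393732647486173115, 829239872823374785707841, -923945593006677960587586, 656399516424876436875505, -292220239441848638468505, 78690339172146460229469, -12120541809520598612708, 805653991806338007120, 19040941772669056652],
    [5358340844004976910431, -55754378895434795667515, 228720594220908768282792, -495320584779176699259656, 629575844521006545365061, -481437611063591127576947, 215403469362774089134384, -50873484696233382243281, 4173977809290134143665, 208340366860493959702, 11257663490656221624],
    [8055586369845333979099, -54857796425772994674279, 156440801962442118918796, -244222399058163660649739, 234877607418030831378732, -148267371493953369533539, 61163406555472632293750, -15765136652813848732582, 2057381473319070753238, -71420643195295928117],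
    [9578626057065234620192, -42967103724232683057685, 79651402694695837409061, -84015799244751450286077, 54685449049590762662266, -20963428135562488420782, 4501613841878932674670, -567793530287394031123, -683899463516356676],
    [6005522286827844372889, -36347669669305537041339, 72483592816159989903168, -73985127475905137449640, 44885744235845657769320, -14977366792164416991303, 2160555086361576427472, -35474601051560381651],
    [3058837641436145565934, -7418368060779307167240, 7863149694919376624501, -4864871314488716473622, 1602652572075172741853, -221806117325900168207, -5730115347939049185],
    [1987413418229025117160, -4279482432597399896465, 4371191618358051841308, -2039870682156555540572, 373576839792180958545, -31395455515932416123],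
    [160976366910548926184, -324849815341279212422, 182466160162184345801, -39333667748968618722, 2313869869351087870],
    [279510518486150061656, -185459794039862499063, 35165657704534104880, -5330628643183862754],
    [13874131842934403159, -5825079095890861994, -50349029150503514],
    [7853069248110424725, -1865810281447661778],
    [714846072865018365]]),
  (2857966239744000, [[223070137949546425, -17966828318092530425, 449408297191721440652, -5426257668354851355110, 38269844486205354933058, -168912041578480026005436, 480576221994300346332826, -897528094318200198913219, 1104355348520825144574102, -880909259646389336354159, 441181823114432280618981, -130900788709477107367671, 20512908877818633901044, -1204633724789360979012, 22118138672002845619],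
    [11967110009245118836, -543158009410150094086, 7754303665733905372405, -56708461429336641640214, 245393190878996562054194, -671750508732738591750561, 1204990201414418443594551, -1439731805312892755378486, 1144040892184410160801618, -586542998495206670022862, 181181826875912548110208, -29912591231326025794931, 2060921015867715848409, 6907610013971451642],
    [112925223440038876577, -2471979725442560842777, 20486867865797080877010, -91090466182873499648012, 238017560088407332325930, -376923665794475617305982, 363850348651566879944291, -207763166977196101299682, 66187400756219073522937, -14141861237736133628063, 4065566013830556664003, -1026228326630085038077, 47469753483776298782],
    [1199499023983556409569, -17039393681181383598806, 96697542444374881663286, -300188165310550508497834, 567453493951742828944848, -675325704218078138501935, 508563056662279628250698, -241190017844248317959779, 69803446024398166875424, -11578022176936675825534, 1050263889703125111232, -49913337588040190279],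
    [3309527309174360816083, -29396940473971187325743, 111058271685825447676958, -240196716056096446000845, 331278681098972425561350, -296837550385243445902314, 166534574894550269619429, -53492549448969193638290, 7381004442748243382418, 85234852704670085642, -39342296224393271846],
    [11252637838675796703714, -85371318678284228441572, 263372863401687203491041, -429666720992595016276619, 405268241220952245875508, -228471592580991124503428, 76077500307474543602598, -14107081842309077633961, 1464462908636671292015, -86364283974159204065],
    [12652722706105636408202, -64954096624678565414480, 129185277077972652959871, -136142611567195078660687, 90718494136668032452172, -45326273683167021363438, 16002979392285527969315, -3094299508212866365066, 204578095930473471980],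
    [4880195983535926051422, -18705041973136779627189, 23859199371366165676209, -17403267852253120446955, 7987004948139320502297, -2316583761550092258921, 514636863606915118332, 9548706243125900608],
    [7224867378459292114189, -24354044424028788064520, 34810338483059453760082, -28112188896091838196409, 12704041166466799439983, -2579058665461910668934, 121944244224436333781],
    [1358469099483950759260, -4607369147076697883194, 6801151424190902588848, -5188614964491066551360, 1269830651145466438048, -55891484022873869693],
    [1524903881709650688286, -3205323798759257076704, 2488489163255187087383, -634555014480012161768, 27304238242255033633],
    [227863905698656921082, -402825805630983263037, 106972351466046260566, -3061910958807640714],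
    [96066330401405711808, -31714139561182834745, -475102411457624281],
    [3604902240122316642, 417008777101391199],
    [770069367750703050]]),
  (39693975552000, [[590197795397913192, -23314596348612802055, 415289403453462409912, -5048711414462252321683, 35463920867965714760998, -141513763709178072462982, 345779570136444808413326, -548504791229374858211976, 573577002643007899800890, -382410640992159636711251, 148435921990749420073789, -28263708353798480451255, 1347670981104421413221, 109182390847269348065],
    [16639745562143152524, -619010826913326286758, 7325896726959931808727, -44245509995856623367387, 161339224195272396532196, -370924240665606682165941, 543903650316676961305815, -510365852625423435841564, 304451804357128686450663, -113603606933772109465397, 25492297345468829059338, -3274492630366028947203, 164616337588791188396],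
    [250977898255041567831, -4284700112549205183151, 30654862096663910215220, -123501833697749534799691, 308560667283044092975591, -488984609415308239617275, 490778051641424772455433, -310825700185804967552732, 122295216382600347076597, -28100214701972432083770, 3199871909951608460349, -194534944842554706357],
    [1614691496159391118772, -19394407460390554190036, 93205396130264469854514, -242290671829402406114881, 376315748043334238080260, -357606814397906154904536, 206880064784677410545695, -72524869229903009847468, 15267857165282643262914, -2038234234970114960886, 115272593544685664759],
    [4899672005280746724740, -42320878627989222160524, 153831949795527639619269, -305451130152395870761585, 359278570381853717704054, -257367503372483258938457, 109991538849649347533279, -25328100456598576801762, 2666416478928347177669, -105418152961269564594],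
    [11178155655298336649685, -71355778938522906923589, 178264474945274240376200, -230593807301207873732994, 170826857722550263782060, -77226293126266375027099, 22855528434239284974395, -4226440925803600639498, 309225520024647780483],
    [9474296795454727491333, -44152156919020388962740, 90407978224844696103188, -96055340939991287340749, 52605888080489689193679, -13748546423049918547782, 1363937336393304581089, -21440404021095193868],
    [15704162525209745519045, -54167007201137532257396, 67564531403482015951351, -35365170619780691151283, 4496192333252566542922, 1288179744839524197690, -234132718802037607289],
    [1741241982890086199945, -825764664466915207246, -403862114133334045164, 756686152034932158289, -486950751090544298340, 22527426809283811290],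
    [524510345069183836304, -345359929675227166603, 35250322887071575462, -24090874465885840656, -5355631429295414280],
    [4013243698226579304394, -4558775802484548049707, 1421614729831638807878, -162632357636583437363],
    [38205858225036994481, -25332336980695641358, 1198454291087539468],
    [8750052015437218396, -252956489600266381],
    [688131874316054523]]),
  (522289152000, [[627281072479532728, -40080798415340496047, 671921821430912288486, -5668019781802111996258, 25372949789687902974588, -66272323510015784804747, 112556617562264876010155, -137408711991635907734519, 123588805835096749688067, -71595361771537534118368, 21046146407626865323072, -1878328868415206587420, -88844352140420571016],
    [20003325051596920742, -633027156388200327984, 6516545614149919022286, -33644331642572540173897, 104000125413244519706019, -196353013895469650814599, 219818684459082307826946, -141012672568038948438852, 52738066264884959393063, -13751897940188882881419, 2928190885470544671468, -367353673340112106922],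
    [182900981805953785316, -3647221038504114892843, 24751508128514172124675, -81380793028078412060582, 153688829920984600027217, -181464386727976688686296, 136844795701662235423445, -64688150142608776213426, 16746709283695266598242, -1820022537097639567400, 7434917652332603268],
    [1059485688835467968104, -11907647506173633031932, 55785639679539362459787, -145419466383279896787623, 226975452629017397017452, -212655908156363051169552, 114881457996382950735490, -32472268765437138503425, 3766775462402294827116, -82272975564027260811],
    [3412948378420254637524, -24961464978422862785419, 66796756133844527581465, -84542613505674884284023, 58194316862403165303492, -27803642810183590417698, 12682504081628311446425, -4154520924278226565833, 483034507621055454548],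
    [5531155712465119564576, -27477462376127953113110, 58297840729477986018818, -65793969941427230085821, 38403159642916437908996, -10608845522682371763306, 1287929535262873651058, -4487969939582456991],
    [5170688144163523287765, -20291878520861595588379, 28121912481980423533145, -16616070498847212755803, 2276608160374992677913, 692401805669229611251, -170456598210479899683],
    [1789179736739650050001, -1754830753814633773402, 275938979372862617984, 196152171664114183089, -289029748185281877284, 19441704228768748652],
    [382173842187136904555, -490790558909575511326, 178632424050876595453, -48652027826981586954, -598014046841495886],
    [58357266445539473082, -73814552635937059686, 25516162319641651280, -3598927077544922221],
    [54402546499491076067, -10786559052738171998, 2553325581311248194],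
    [6259314247229823269, -766808100168532465],
    [231392045046474002]]),
  (6528614400, [[1053871761232338059, -36093105910871434879, 140162216919343006375, 480303282742424314607, -3872689839034766648339, 13523488710987536496740, -34203597600829076331458, 51446448957011086096037, -37681571676517123332429, 10209713437599557280595, 173674053212621396377, -320359012030330641424],
    [16876065891045976512, -619695074326634636537, 6359490613926931057545, -29729357740428523886717, 75471386023398822645579, -106760061394211741976993, 81166074125829754165983, -30396274955569650850378, 4883814634394283781597, -458258240319918693782, 128267662026951977933],
    [168377604383734191475, -2553650525549164882341, 10950830055728204134557, -23406290785460755398951, 36580584254921442742621, -44982099353876476436292, 34985048513013434686440, -12345140952162299370417, 619075202169010960265, 256777288918282960762],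
    [802269707289031644001, -6413757113075446298794, 22831831689665541688244, -45211668577077181227124, 54608652972619492517954, -39279985339959020143452, 14721513367295521749765, -2405131521822967561953, 42177386855631454389],
    [1923354950630409478873, -11786747975346301432028, 31010856022381883783523, -42199725103591691472151, 31491210898847786949911, -13103641316078527692566, 2808686617324044320118, -244505173788583941926],
    [1017097871984602566694, -5755086471812460954478, 13911533618698282152315, -14311870502217703818581, 6911286736951064373776, -1303284282987740701317, 62960171939157172672],
    [277483802795566575344, -715330358556772438724, 739037342645891044108, -299279192718289945311, 30852635366742215627, 3500356992641361489],
    [184944189270906339445, -284306037475101275989, 184553526005160124021, -42459448302413134644, 2942659507699952791],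
    [32882892212288069177, -35144421940615144382, 16910248428973069729, -2373372920443096100],
    [22555955816866741392, -11088098095827549963, 2680243423158850722],
    [1941330174113901970, -202233629664105105],
    [145535052791796307]]),
  (77721600, [[1008128627843288637, -44969020534899565566, 473458512761856943842, -2782585412415865428252, 9777810204102779683828, -16472613754006683741555, 9349432452721101242546, 4392616449506209117937, -5457701381387824238080, 843674517811934389204, 145561821841214634023],
    [19322344051970406380, -581273404245714633933, 4448270461859962010012, -15528414659114529590496, 32411927130456674380672, -43036829648914744713518, 33133137840291083545423, -12652909753716229592747, 1681037220409293560312, 52677971981352908660],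
    [21321269858545216678, -248840251059472532693, 1915892582704915308336, -8017268185576110871156, 17208739853124873423400, -17603185533926705658222, 8739847288695882248294, -1868144367190101982619, 122017087685032305689],
    [287855252165654754602, 12136574783929792282, -4650825452980723004448, 13376265903026642910544, -15010139159446415592492, 6964483219022009553696, -1239327559521677433959, 13010775999201783332],
    [122559632115777307923, -744131326262964868450, 1778741484065437606808, -1901474649935208657290, 964023865786224458372, -210233373164501348721, 13946905675782387852],
    [113572480436938511846, -414204905563921630278, 523865421237702353780, -297709419334434850652, 67809663153819341439, -4742161440995806461],
    [32527376614354288578, -47440461788834702658, 41200509927768374501, -11778211969701777070, 1443058549692478358],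
    [30540027386418369373, -43345969332380267802, 18795714870464019219, -2602936281497870866],
    [4487587003371737300, -2492875767882243089, 571607926409143826],
    [2150346364839642627, -598775604641089065],
    [98322814777226312]]),
  (883200, [[765231332142717051, -42141413214835733329, 508505175305750726621, -2338807181715513205905, 6574247547438940990505, -13345949176634507805451, 16069309938300930886717, -9776035749474773577070, 2370240636596618965738, -105872117640702605305],
    [582755790191603762, -37750418744733884122, 326079853417915587735, -639324964243387391044, -53047361617651505715, 1731511655081147156723, -1801951861438553345395, 711775394314254044986, -85652590593661124588],
    [8631551528160766487, -81323122140935551898, 130837742003875254315, 139711165126131602778, -663468916510902082680, 627805880996932517784, -239433697605697938538, 28479378435356606395],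
    [3895945247421171751, -38040786607039501501, 128640396629215703090, -199110014121262688766, 140836771402601400478, -44033697358387608224, 4399127892631433712],
    [16008757918092169181, -62454895424422987348, 108420477042296400625, -83163454741054856282, 29639346694058912253, -3634949284412705290],
    [9707029272845604386, -25151376870297457685, 20842176764608977055, -5765455527195788042, 160670825488471184],
    [3637078045718166852, -6591093311524402727, 4384669527220970934, -863313431159366275],
    [4008100776107589642, -3659822606173773918, 939145976322671002],
    [309811313360924496, -138689653271066331],
    [74500547291735680]]),
  (9600, [[155764727713584616, -7927517349546040760, 51087025166819942888, 123179200309441751197, -948212241715659434984, 1924123407091894915347, -1600387040280814560832, 551479000635092284045, -54025746290343295777],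
    [3334371272905090602, -103063573412061539226, 769332798745782999156, -2370577157924571065478, 3532427516275905027949, -2642986966566025802048, 922180686165425769404, -114893276213735562988],
    [1846703242915746833, -18055545705359752292, 62127591626509662009, -99043912981662681106, 77044314594304022962, -27020533185919139974, 3195579079536956596],
    [1800678005306896272, -9548988683554597078, 20391239409410798532, -18660006420321806795, 6837204088401531026, -664478581843474359],
    [1895781675245929872, -6149436613039491758, 7408805149439397448, -3405618100994704267, 492079518761036160],
    [986058877380562332, -2115244586271146705, 1687691568478443930, -414714000841352015],
    [676570234316295922, -1070913714394331665, 399775269938850138],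
    [330075775992276248, -177544397849666191],
    [19388442712415222]]),
  (100, [[4072222017960482, -150148880335558856, 1216172425562339180, -4285446660462439139, 7407730126647813741, -5941421035294620144, 1785529256968324561, -50844492054626765],
    [74147505010926423, -821237526861955304, 3291741027338855855, -6046686134049140194, 5339972620705977460, -2152624077563361389, 307856567297188069],
    [183594342695428863, -1392492602998391327, 3522359893103554859, -3864472875142957043, 1924816303068845515, -363151757487691425],
    [240343749738455332, -1030024583396217582, 1612021858683019704, -987278159163975194, 197491306012565017],
    [370050093183077992, -1022332864133120025, 863113174188367438, -214543326672669428],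
    [223608114180503129, -385448662326407134, 163675299316801891],
    [81309200723626940, -61077805365592928],
    [14807431608575685]]),
  (1, [[1926933136895237, -43440223624982743, 295357651140438224, -928210263675541367, 1391771085958275767, -892055786639855557, 181099469688890665],
    [45071065445710926, -404458476355309337, 1244943528880973036, -1685799722319069667, 1009697244344111867, -214674822001747911],
    [79863001763786493, -538909184334395088, 1082661062955985984, -790857501853974282, 181140055199167268],
    [92924748495634926, -312385283230075479, 296816738390391389, -76668076161101085],
    [74500147075397179, -165007901326984255, 80336426377907026],
    [40202975462856334, -36337785451615114],
    [7758037127854457]])]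
def hh : List ℤ := [160958141770767816861329247871357308192385419402068, 38259791050996297762895684575864565694645702670486192, -274730126407782377059506182580004954479404640412802107, -5269418565248194629509006297922344630503205382106891653, 118632005762467090536384799547426805731007599128028663480, -1052276547788821949992994826741782423360574633577432552984, 4966370860026276421432808967982486380818588229908648103968, -14543163834639411239176306981037532543336444942768172334379, 28238224370305190698844596026892433993352388424565699029930, -37285016096156148969221532913481738961809999715992143455227, 33764282043243154577326762552538437759364191167988825890256, -20757960792292461999403816405435961458429108227387425149585, 8440756421026573152534340637419847146991943527353456465704, -2208007093161798243314028167989346271023106799316617253984, 342854821623806983458028181179094057841969248539960384984, -24566788280935306537314481652083253348511006342289210168, -207336325365564178386636362981868104237080894315240674]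
def aa : List ℕ := [0, 40711929373398697726718738479939859657917071360000, 9766777220739193173192366291907147683401564160000, 2453596737126354805181788793242322793906831360000, 497460403067533068182992629814534622096130048000, 20253913068080674715672765847364220879527477248000, 216826774706682629321535220520715008606208000, 2320870024358108413781513987542472589312000, 72310797206075530711152069910926225408000, 29142244804304536796442946882826661120, 42909621164115376908212691435778431, 688191040706599819974003775749832, 36628805123133151649618837456678, 4300135559754061466064865520770, 8628382626382718421813235364, 90966042668951601479145836, 1767206818821595767439276, 35091745253307839252581, 486681960575326546085, 6200055247622499666, 85448467956320126]
def Sc : ℕ := 12437869075365888000 * 4 ^ 56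
def FE : Ex := Fx 16 (Gd 16 dat) hh
def PE : Ex := Px 16 20 24813 Sc (Gd 16 dat) hh aa
def MFb : ℕ := 5116304833539564378
def MPb : ℕ := 4313479597526725759
def XF : ℕ := rootN 272 145 MFb 16 16 16 (VV 272 16 16 16 FE)
def XP : ℕ := rootN 240 136 MPb 32 0 0 (VV 240 32 0 0 PE)
def sF : St := ⟨XF, XD, 0, 0, 0, 0, 0, 0⟩
def sP : St := ⟨XP, 0, 0, 0, 0, 0, 0, 0⟩

theorem F_dg : Ex.dg FE = some (16, 16, 16) := by decide +kernel
theorem F_nb : Ex.nb FE < 2 ^ (272 - 1) := by decide +kernel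
theorem F_ok : rootOk 272 145 MFb 16 16 16 (VV 272 16 16 16 FE) = true := by decide +kernel
theorem P_dg : Ex.dg PE = some (32, 0, 0) := by decide +kernel
theorem P_nb : Ex.nb PE < 2 ^ (240 - 1) := by decide +kernel
theorem P_ok : rootOk 240 136 MPb 32 0 0 (VV 240 32 0 0 PE) = true := by decide +kernel
theorem D_dg : Ex.dg Dy = some (2, 2, 2) := by decide +kernel
theorem D_nb : Ex.nb Dy < 2 ^ (64 - 1) := by decide +kernel
theorem D_ok : rootOk 64 0 (2 ^ 58) 2 2 2 (VV 64 2 2 2 Dy) = true := by decide +kernel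
theorem A_dg : Ex.dg (sm (Ax 20 0 aa)) = some (20, 0, 0) := by decide +kernel
theorem A_ev : evq (4:ℤ) (-1) (sm (Ax 20 0 aa)) = 5527946304457121971751254722095581739800818276624605609097265152000 := by decide +kernel
theorem F_root : Inv XF ∧ ∀ a : Fin 3 → ℝ, (∀ i, 0 ≤ a i) → (∀ i, a i ≤ 1) →
    tr ⟨17, 17, 17⟩ XF (a 0) (a 1) (a 2) ≤ (MFb : ℕ) + Ex.ev a (fun i => 1 - a i) FE / 2 ^ 145 :=
  root_sound 272 145 MFb 16 16 16 FE (by norm_num) (by norm_num) (by norm_num) (by norm_num) F_dg F_nb F_ok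
theorem P_root : Inv XP ∧ ∀ a : Fin 3 → ℝ, (∀ i, 0 ≤ a i) → (∀ i, a i ≤ 1) →
    tr ⟨33, 1, 1⟩ XP (a 0) (a 1) (a 2) ≤ (MPb : ℕ) + Ex.ev a (fun i => 1 - a i) PE / 2 ^ 136 :=
  root_sound 240 136 MPb 32 0 0 PE (by norm_num) (by norm_num) (by norm_num) (by norm_num) P_dg P_nb P_ok
theorem D_root : Inv XD ∧ ∀ a : Fin 3 → ℝ, (∀ i, 0 ≤ a i) → (∀ i, a i ≤ 1) →
    tr ⟨3, 3, 3⟩ XD (a 0) (a 1) (a 2) ≤ (2 ^ 58 : ℕ) + Ex.ev a (fun i => 1 - a i) Dy / 2 ^ 0 :=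
  root_sound 64 0 (2 ^ 58) 2 2 2 Dy (by norm_num) (by norm_num) (by norm_num) (by norm_num) D_dg D_nb D_ok
theorem mk_ok (X Y : ℕ) (h : Inv X) (k : Inv Y) : (⟨X, Y, 0, 0, 0, 0, 0, 0⟩ : St).ok := ⟨h, k⟩
theorem sF_ok : sF.ok := mk_ok XF XD F_root.1 D_root.1
theorem sP_ok : sP.ok := mk_ok XP 0 P_root.1 inv_zero
theorem pos17 : Cfg.pos ⟨17, 17, 17⟩ := ⟨by norm_num, by norm_num, by norm_num⟩
theorem pos3 : Cfg.pos ⟨3, 3, 3⟩ := ⟨by norm_num, by norm_num, by norm_num⟩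
theorem pos33 : Cfg.pos ⟨33, 1, 1⟩ := ⟨by norm_num, by norm_num, by norm_num⟩
theorem pos1 : Cfg.pos ⟨1, 1, 1⟩ := ⟨by norm_num, by norm_num, by norm_num⟩

lemma and1 {a b : Bool} (h : and a b = true) : a = true := (Bool.and_eq_true_iff.1 h).1
lemma and2 {a b : Bool} (h : and a b = true) : b = true := (Bool.and_eq_true_iff.1 h).2

lemma joinF (p p1 p2 : List (ℕ × Bool)) (ax : ℕ) (e1 : p1 = p ++ [(ax, false)]) (e2 : p2 = p ++ [(ax, true)])
    (h1 : Cl ⟨17, 17, 17⟩ ⟨3, 3, 3⟩ MFb (2 ^ 58) (sF.at ⟨17, 17, 17⟩ ⟨3, 3, 3⟩ p1))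
    (h2 : Cl ⟨17, 17, 17⟩ ⟨3, 3, 3⟩ MFb (2 ^ 58) (sF.at ⟨17, 17, 17⟩ ⟨3, 3, 3⟩ p2)) :
    Cl ⟨17, 17, 17⟩ ⟨3, 3, 3⟩ MFb (2 ^ 58) (sF.at ⟨17, 17, 17⟩ ⟨3, 3, 3⟩ p) := by
  subst e1 e2
  exact cl_join _ _ _ _ pos17 pos3 sF sF_ok p ax h1 h2

def dF (f code : ℕ) (p : List (ℕ × Bool)) : Bool :=
  desc ⟨17, 17, 17⟩ ⟨3, 3, 3⟩ MFb (2 ^ 58) f code p sF.X sF.Y sF.p0 sF.e0 sF.p1 sF.e1 sF.p2 sF.e2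
lemma leafF (f code : ℕ) (p : List (ℕ × Bool)) (hp : p.all (fun q => Nat.blt q.1 3) = true) (h : dF f code p = true) :
    Cl ⟨17, 17, 17⟩ ⟨3, 3, 3⟩ MFb (2 ^ 58) (sF.at ⟨17, 17, 17⟩ ⟨3, 3, 3⟩ p) :=
  desc_sound _ _ _ _ pos17 pos3 f code p sF sF_ok hp h
def dP (f code : ℕ) (p : List (ℕ × Bool)) : Bool :=
  desc ⟨33, 1, 1⟩ ⟨1, 1, 1⟩ MPb 1 f code p sP.X sP.Y sP.p0 sP.e0 sP.p1 sP.e1 sP.p2 sP.e2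
lemma leafP (f code : ℕ) (p : List (ℕ × Bool)) (hp : p.all (fun q => Nat.blt q.1 3) = true) (h : dP f code p = true) :
    Cl ⟨33, 1, 1⟩ ⟨1, 1, 1⟩ MPb 1 (sP.at ⟨33, 1, 1⟩ ⟨1, 1, 1⟩ p) :=
  desc_sound _ _ _ _ pos33 pos1 f code p sP sP_ok hp h

theorem gF0 : (and (dF 19 20707374564648092935856972726977301160275286756705135900286019447841486 [(0, false), (0, false), (0, false), (0, false)])
  (and (dF 13 2578693775858234084305062663371940732986073336011 [(0, false), (0, false), (0, false), (0, true), (1, false)])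
  (and (dF 2 0 [(0, false), (0, false), (0, false), (0, true), (1, true), (2, false)])
  (and (dF 8 2498652791082043 [(0, false), (0, false), (0, false), (0, true), (1, true), (2, true), (1, false)])
  (and (dF 2 0 [(0, false), (0, false), (0, false), (0, true), (1, true), (2, true), (1, true), (2, false)])
  (and (dF 15 71847434798169258020314552514711680239819 [(0, false), (0, false), (0, false), (0, true), (1, true), (2, true), (1, true), (2, true), (1, false), (2, false), (1, false)])
  (and (dF 2 0 [(0, false), (0, false), (0, false), (0, true), (1, true), (2, true), (1, true), (2, true), (1, false), (2, false), (1, true), (2, false)])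
  (and (dF 21 643582235518773671763914322583516010239927869443825146812560994515829006965266918250951412291183452593902768251216588201409935196186927985485802574901754782 [(0, false), (0, false), (0, false), (0, true), (1, true), (2, true), (1, true), (2, true), (1, false), (2, false), (1, true), (2, true), (0, false), (0, false)])
  (dF 18 47028151875369338981349639520195923111506247054643517941633538422006348536340543330000766304388712963838667562857334497565528770646635392363907619845803838090718408183308386472636284017635587802756462736688669276782880945688883284736999663181093657303986829752150401287593198550444010573235789843989205425997480643557301431902173739621018363291552142 [(0, false), (0, false), (0, false), (0, true), (1, true), (2, true), (1, true), (2, true), (1, false), (2, false), (1, true), (2, true), (0, false), (0, true), (1, false), (2, false), (0, false), (0, false)]))))))))) = true := by decide +kernel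
theorem gF1 : (and (dF 19 2009477808497413828718742725422805766447528064300426977210598948830266043282108557338173394785495755486336880018526825352162558889389140456433540134137378108463375790226950638139216755733640645961356070429796437129665021931418149167561853716499865116396860283260364360493655470334817068162763541760142 [(0, false), (0, false), (0, false), (0, true), (1, true), (2, true), (1, true), (2, true), (1, false), (2, false), (1, true), (2, true), (0, false), (0, true), (1, false), (2, false), (0, false), (0, true)])
  (and (dF 16 113779757340001884333226943188747019949270680212899784749434850818607508247462754930735410 [(0, false), (0, false), (0, false), (0, true), (1, true), (2, true), (1, true), (2, true), (1, false), (2, false), (1, true), (2, true), (0, false), (0, true), (1, false), (2, false), (0, true)])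
  (and (dF 15 6408642572303807924354687300693526600766450581485663388945398068006000465774861066264762199451 [(0, false), (0, false), (0, false), (0, true), (1, true), (2, true), (1, true), (2, true), (1, false), (2, false), (1, true), (2, true), (0, false), (0, true), (1, false), (2, true)])
  (and (dF 3 3 [(0, false), (0, false), (0, false), (0, true), (1, true), (2, true), (1, true), (2, true), (1, false), (2, false), (1, true), (2, true), (0, false), (0, true), (1, true)])
  (and (dF 14 260634037914391393609947737387840149 [(0, false), (0, false), (0, false), (0, true), (1, true), (2, true), (1, true), (2, true), (1, false), (2, false), (1, true), (2, true), (0, true)])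
  (and (dF 10 11497971404251372982 [(0, false), (0, false), (0, false), (0, true), (1, true), (2, true), (1, true), (2, true), (1, false), (2, true)])
  (and (dF 3 3 [(0, false), (0, false), (0, false), (0, true), (1, true), (2, true), (1, true), (2, true), (1, true)])
  (dF 16 6181821444967970225660674285437606221591896544261470144587211582598986377049493307690869550 [(0, false), (0, false), (0, true), (0, false)])))))))) = true := by decide +kernel
theorem gF2 : (and (dF 43 154347459501095698607866972727355140596803703778845996582568064497041646229297190887055793346564548014654543461064794706556762338205306551114514127585439787828654394082066827287862938398782865082878509277387343900255015586203530577964653238871654237345036001006937662710276148945870632881880183197083849331836291246868701998 [(0, false), (0, false), (0, true), (0, true)])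
  (dF 25 582701006868131960747252873276646077633189444392244990730041395541144993824461720373173176162736853152090410004058257335164815382610101190419270620430046596436334194422398283709240828205989952274503321859273071376190932791452298381794709193404790336171245574700619893352729536646739303277174752719452939488622197314506 [(0, false), (0, true)])) = true := by decide +kernel
theorem gF3 : (dF 27 917340379854296221028427638169389411086141294247622555077441759072456509855468412631547350944871650291165196763730821355053536756449753557119103727782570046940208894232180834143347082349475048039136367361843791802374285414961929685812863660281387972914 [(0, true)]) = true := by decide +kernel
theorem jF1 : Cl ⟨17, 17, 17⟩ ⟨3, 3, 3⟩ MFb (2 ^ 58) (sF.at ⟨17, 17, 17⟩ ⟨3, 3, 3⟩ [(0, false), (0, false), (0, false), (0, true), (1, true), (2, true), (1, true), (2, true), (1, false), (2, false), (1, true), (2, true), (0, false), (0, true), (1, false), (2, false), (0, false)]) :=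
  joinF [(0, false), (0, false), (0, false), (0, true), (1, true), (2, true), (1, true), (2, true), (1, false), (2, false), (1, true), (2, true), (0, false), (0, true), (1, false), (2, false), (0, false)] _ _ 0 rfl rfl (leafF _ _ [(0, false), (0, false), (0, false), (0, true), (1, true), (2, true), (1, true), (2, true), (1, false), (2, false), (1, true), (2, true), (0, false), (0, true), (1, false), (2, false), (0, false), (0, false)] rfl (and2 (and2 (and2 (and2 (and2 (and2 (and2 (and2 gF0))))))))) (leafF _ _ [(0, false), (0, false), (0, false), (0, true), (1, true), (2, true), (1, true), (2, true), (1, false), (2, false), (1, true), (2, true), (0, false), (0, true), (1, false), (2, false), (0, false), (0, true)] rfl (and1 gF1))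
theorem jF2 : Cl ⟨17, 17, 17⟩ ⟨3, 3, 3⟩ MFb (2 ^ 58) (sF.at ⟨17, 17, 17⟩ ⟨3, 3, 3⟩ [(0, false), (0, false), (0, false), (0, true), (1, true), (2, true), (1, true), (2, true), (1, false), (2, false), (1, true), (2, true), (0, false), (0, true), (1, false), (2, false)]) :=
  joinF [(0, false), (0, false), (0, false), (0, true), (1, true), (2, true), (1, true), (2, true), (1, false), (2, false), (1, true), (2, true), (0, false), (0, true), (1, false), (2, false)] _ _ 0 rfl rfl jF1 (leafF _ _ [(0, false), (0, false), (0, false), (0, true), (1, true), (2, true), (1, true), (2, true), (1, false), (2, false), (1, true), (2, true), (0, false), (0, true), (1, false), (2, false), (0, true)] rfl (and1 (and2 gF1)))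
theorem jF3 : Cl ⟨17, 17, 17⟩ ⟨3, 3, 3⟩ MFb (2 ^ 58) (sF.at ⟨17, 17, 17⟩ ⟨3, 3, 3⟩ [(0, false), (0, false), (0, false), (0, true), (1, true), (2, true), (1, true), (2, true), (1, false), (2, false), (1, true), (2, true), (0, false), (0, true), (1, false)]) :=
  joinF [(0, false), (0, false), (0, false), (0, true), (1, true), (2, true), (1, true), (2, true), (1, false), (2, false), (1, true), (2, true), (0, false), (0, true), (1, false)] _ _ 2 rfl rfl jF2 (leafF _ _ [(0, false), (0, false), (0, false), (0, true), (1, true), (2, true), (1, true), (2, true), (1, false), (2, false), (1, true), (2, true), (0, false), (0, true), (1, false), (2, true)] rfl (and1 (and2 (and2 gF1))))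
theorem jF4 : Cl ⟨17, 17, 17⟩ ⟨3, 3, 3⟩ MFb (2 ^ 58) (sF.at ⟨17, 17, 17⟩ ⟨3, 3, 3⟩ [(0, false), (0, false), (0, false), (0, true), (1, true), (2, true), (1, true), (2, true), (1, false), (2, false), (1, true), (2, true), (0, false), (0, true)]) :=
  joinF [(0, false), (0, false), (0, false), (0, true), (1, true), (2, true), (1, true), (2, true), (1, false), (2, false), (1, true), (2, true), (0, false), (0, true)] _ _ 1 rfl rfl jF3 (leafF _ _ [(0, false), (0, false), (0, false), (0, true), (1, true), (2, true), (1, true), (2, true), (1, false), (2, false), (1, true), (2, true), (0, false), (0, true), (1, true)] rfl (and1 (and2 (and2 (and2 gF1)))))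
theorem jF5 : Cl ⟨17, 17, 17⟩ ⟨3, 3, 3⟩ MFb (2 ^ 58) (sF.at ⟨17, 17, 17⟩ ⟨3, 3, 3⟩ [(0, false), (0, false), (0, false), (0, true), (1, true), (2, true), (1, true), (2, true), (1, false), (2, false), (1, true), (2, true), (0, false)]) :=
  joinF [(0, false), (0, false), (0, false), (0, true), (1, true), (2, true), (1, true), (2, true), (1, false), (2, false), (1, true), (2, true), (0, false)] _ _ 0 rfl rfl (leafF _ _ [(0, false), (0, false), (0, false), (0, true), (1, true), (2, true), (1, true), (2, true), (1, false), (2, false), (1, true), (2, true), (0, false), (0, false)] rfl (and1 (and2 (and2 (and2 (and2 (and2 (and2 (and2 gF0))))))))) jF4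
theorem jF6 : Cl ⟨17, 17, 17⟩ ⟨3, 3, 3⟩ MFb (2 ^ 58) (sF.at ⟨17, 17, 17⟩ ⟨3, 3, 3⟩ [(0, false), (0, false), (0, false), (0, true), (1, true), (2, true), (1, true), (2, true), (1, false), (2, false), (1, true), (2, true)]) :=
  joinF [(0, false), (0, false), (0, false), (0, true), (1, true), (2, true), (1, true), (2, true), (1, false), (2, false), (1, true), (2, true)] _ _ 0 rfl rfl jF5 (leafF _ _ [(0, false), (0, false), (0, false), (0, true), (1, true), (2, true), (1, true), (2, true), (1, false), (2, false), (1, true), (2, true), (0, true)] rfl (and1 (and2 (and2 (and2 (and2 gF1))))))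
theorem jF7 : Cl ⟨17, 17, 17⟩ ⟨3, 3, 3⟩ MFb (2 ^ 58) (sF.at ⟨17, 17, 17⟩ ⟨3, 3, 3⟩ [(0, false), (0, false), (0, false), (0, true), (1, true), (2, true), (1, true), (2, true), (1, false), (2, false), (1, true)]) :=
  joinF [(0, false), (0, false), (0, false), (0, true), (1, true), (2, true), (1, true), (2, true), (1, false), (2, false), (1, true)] _ _ 2 rfl rfl (leafF _ _ [(0, false), (0, false), (0, false), (0, true), (1, true), (2, true), (1, true), (2, true), (1, false), (2, false), (1, true), (2, false)] rfl (and1 (and2 (and2 (and2 (and2 (and2 (and2 gF0)))))))) jF6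
theorem jF8 : Cl ⟨17, 17, 17⟩ ⟨3, 3, 3⟩ MFb (2 ^ 58) (sF.at ⟨17, 17, 17⟩ ⟨3, 3, 3⟩ [(0, false), (0, false), (0, false), (0, true), (1, true), (2, true), (1, true), (2, true), (1, false), (2, false)]) :=
  joinF [(0, false), (0, false), (0, false), (0, true), (1, true), (2, true), (1, true), (2, true), (1, false), (2, false)] _ _ 1 rfl rfl (leafF _ _ [(0, false), (0, false), (0, false), (0, true), (1, true), (2, true), (1, true), (2, true), (1, false), (2, false), (1, false)] rfl (and1 (and2 (and2 (and2 (and2 (and2 gF0))))))) jF7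
theorem jF9 : Cl ⟨17, 17, 17⟩ ⟨3, 3, 3⟩ MFb (2 ^ 58) (sF.at ⟨17, 17, 17⟩ ⟨3, 3, 3⟩ [(0, false), (0, false), (0, false), (0, true), (1, true), (2, true), (1, true), (2, true), (1, false)]) :=
  joinF [(0, false), (0, false), (0, false), (0, true), (1, true), (2, true), (1, true), (2, true), (1, false)] _ _ 2 rfl rfl jF8 (leafF _ _ [(0, false), (0, false), (0, false), (0, true), (1, true), (2, true), (1, true), (2, true), (1, false), (2, true)] rfl (and1 (and2 (and2 (and2 (and2 (and2 gF1)))))))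
theorem jF10 : Cl ⟨17, 17, 17⟩ ⟨3, 3, 3⟩ MFb (2 ^ 58) (sF.at ⟨17, 17, 17⟩ ⟨3, 3, 3⟩ [(0, false), (0, false), (0, false), (0, true), (1, true), (2, true), (1, true), (2, true)]) :=
  joinF [(0, false), (0, false), (0, false), (0, true), (1, true), (2, true), (1, true), (2, true)] _ _ 1 rfl rfl jF9 (leafF _ _ [(0, false), (0, false), (0, false), (0, true), (1, true), (2, true), (1, true), (2, true), (1, true)] rfl (and1 (and2 (and2 (and2 (and2 (and2 (and2 gF1))))))))
theorem jF11 : Cl ⟨17, 17, 17⟩ ⟨3, 3, 3⟩ MFb (2 ^ 58) (sF.at ⟨17, 17, 17⟩ ⟨3, 3, 3⟩ [(0, false), (0, false), (0, false), (0, true), (1, true), (2, true), (1, true)]) :=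
  joinF [(0, false), (0, false), (0, false), (0, true), (1, true), (2, true), (1, true)] _ _ 2 rfl rfl (leafF _ _ [(0, false), (0, false), (0, false), (0, true), (1, true), (2, true), (1, true), (2, false)] rfl (and1 (and2 (and2 (and2 (and2 gF0)))))) jF10
theorem jF12 : Cl ⟨17, 17, 17⟩ ⟨3, 3, 3⟩ MFb (2 ^ 58) (sF.at ⟨17, 17, 17⟩ ⟨3, 3, 3⟩ [(0, false), (0, false), (0, false), (0, true), (1, true), (2, true)]) :=
  joinF [(0, false), (0, false), (0, false), (0, true), (1, true), (2, true)] _ _ 1 rfl rfl (leafF _ _ [(0, false), (0, false), (0, false), (0, true), (1, true), (2, true), (1, false)] rfl (and1 (and2 (and2 (and2 gF0))))) jF11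
theorem jF13 : Cl ⟨17, 17, 17⟩ ⟨3, 3, 3⟩ MFb (2 ^ 58) (sF.at ⟨17, 17, 17⟩ ⟨3, 3, 3⟩ [(0, false), (0, false), (0, false), (0, true), (1, true)]) :=
  joinF [(0, false), (0, false), (0, false), (0, true), (1, true)] _ _ 2 rfl rfl (leafF _ _ [(0, false), (0, false), (0, false), (0, true), (1, true), (2, false)] rfl (and1 (and2 (and2 gF0)))) jF12
theorem jF14 : Cl ⟨17, 17, 17⟩ ⟨3, 3, 3⟩ MFb (2 ^ 58) (sF.at ⟨17, 17, 17⟩ ⟨3, 3, 3⟩ [(0, false), (0, false), (0, false), (0, true)]) :=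
  joinF [(0, false), (0, false), (0, false), (0, true)] _ _ 1 rfl rfl (leafF _ _ [(0, false), (0, false), (0, false), (0, true), (1, false)] rfl (and1 (and2 gF0))) jF13
theorem jF15 : Cl ⟨17, 17, 17⟩ ⟨3, 3, 3⟩ MFb (2 ^ 58) (sF.at ⟨17, 17, 17⟩ ⟨3, 3, 3⟩ [(0, false), (0, false), (0, false)]) :=
  joinF [(0, false), (0, false), (0, false)] _ _ 0 rfl rfl (leafF _ _ [(0, false), (0, false), (0, false), (0, false)] rfl (and1 gF0)) jF14
theorem jF16 : Cl ⟨17, 17, 17⟩ ⟨3, 3, 3⟩ MFb (2 ^ 58) (sF.at ⟨17, 17, 17⟩ ⟨3, 3, 3⟩ [(0, false), (0, false), (0, true)]) :=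
  joinF [(0, false), (0, false), (0, true)] _ _ 0 rfl rfl (leafF _ _ [(0, false), (0, false), (0, true), (0, false)] rfl (and2 (and2 (and2 (and2 (and2 (and2 (and2 gF1)))))))) (leafF _ _ [(0, false), (0, false), (0, true), (0, true)] rfl (and1 gF2))
theorem jF17 : Cl ⟨17, 17, 17⟩ ⟨3, 3, 3⟩ MFb (2 ^ 58) (sF.at ⟨17, 17, 17⟩ ⟨3, 3, 3⟩ [(0, false), (0, false)]) :=
  joinF [(0, false), (0, false)] _ _ 0 rfl rfl jF15 jF16
theorem jF18 : Cl ⟨17, 17, 17⟩ ⟨3, 3, 3⟩ MFb (2 ^ 58) (sF.at ⟨17, 17, 17⟩ ⟨3, 3, 3⟩ [(0, false)]) :=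
  joinF [(0, false)] _ _ 0 rfl rfl jF17 (leafF _ _ [(0, false), (0, true)] rfl (and2 gF2))
theorem jF19 : Cl ⟨17, 17, 17⟩ ⟨3, 3, 3⟩ MFb (2 ^ 58) (sF.at ⟨17, 17, 17⟩ ⟨3, 3, 3⟩ []) :=
  joinF [] _ _ 0 rfl rfl jF18 (leafF _ _ [(0, true)] rfl gF3)
theorem dP1 : dP 8 21761098069 [] = true := by decide +kernel
theorem clF : Cl ⟨17, 17, 17⟩ ⟨3, 3, 3⟩ MFb (2 ^ 58) sF := jF19
theorem clP : Cl ⟨33, 1, 1⟩ ⟨1, 1, 1⟩ MPb 1 sP := leafP _ _ [] rfl dP1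

theorem A_one : as 1 0 aa < Sc * (((24813 : ℕ) : ℝ) - 1) := by
  have h := as_one 20 aa _ A_dg A_ev
  have e : ((Sc : ℕ) : ℝ) = 12437869075365888000 * 4 ^ 56 := by unfold Sc; norm_num
  rw [e]
  push_cast at h ⊢
  norm_num at h ⊢
  linarith

theorem final (S : Finset EE) (hnorm : ∀ x ∈ S, ‖x‖ = 1)
    (hdist : ∀ x ∈ S, ∀ y ∈ S, x ≠ y → 1 ≤ dist x y) : S.card < 24813 := by
  refine assemble 24813 Sc (by norm_num) (by unfold Sc; norm_num) dat hh aa ?_ ?_ A_one S hnorm hdist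
  · exact tri_all dat hh (tri_ord 145 MFb (2 ^ 58) XF XD dat hh F_root.2 D_root.2 clF)
  · exact pair_all 136 MPb 16 20 24813 Sc XP (by norm_num) dat hh aa P_root.2 clP
end Fin
end Kiss


theorem kissing_number_dim19_le_24812
    (S : Finset (EuclideanSpace ℝ (Fin 19)))
    (hnorm : ∀ x ∈ S, ‖x‖ = 1)
    (hdist : ∀ x ∈ S, ∀ y ∈ S, x ≠ y → 1 ≤ dist x y) :
    S.card ≤ 24812 := by
  have h := Kiss.final S hnorm hdist
  omega
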